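/- arXiv:math/0307161 — 3 statements merged into one kernel-verified Lean document; each statement's English description precedes it below -/
import Mathlib

section
/- Let K be an algebraically closed field of characteristic p > 0 and let R be a two-dimensional normal standard-graded K-domain. Let f_1,f_2,f_3 be homogeneous R_+-primary elements of degrees d_1,d_2,d_3. Suppose there exists a primary homogeneous relation of total degree k ≤ (d_1+d_2+d_3)/2, i.e., homogeneous elements r_1,r_2,r_3 ∈ R, not all zero, with deg r_i = k − d_i, r_1f_1 + r_2f_2 + r_3f_3 = 0, and the radical of (r_1,r_2,r_3) equal to R_+. Then the tight closure and the plus closure of (f_1,f_2,f_3) coincide: (f_1,f_2,f_3)^* = (f_1,f_2,f_3)^+. -/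
/-!
The inclusion `I^+ ⊆ I^*` holds in any domain: a functional `S → Frac R` with `1 ↦ 1` has a common
denominator on a module-finite extension `S`, and this denominator is a tight closure multiplier
(`plusClosure_subset_tightClosure`).

For the other inclusion, only homogeneous elements `h` and homogeneous multipliers `c` matter
(`mem_of_tight`). Linear Noether normalization (`exists_parameters`) makes `R` integral over `K[x, y]`
with `x`, `y` of degree one, and everything takes place in an algebraic closure `Ω` of `Frac R`: the
charts of the absolute integral closure of `ℙ¹` are the integral closures in `Ω` of `K[y/x]` and `K[x/y]`,
and sheaf cohomology of `𝒪(n)` is computed by hand from these two charts (`twist`, `overlap`). Three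
facts are needed.

* `H⁰(𝒪(n)) = 0` for `n < 0`, and sections of `𝒪(n)` are integral over `K[x, y]`
  (`twist_inter_eq_zero`, `twist_inter_isIntegral`), by looking at the degrees of the coefficients of
  minimal polynomials.
* `H¹(𝒪(n)) = 0` for `n ≥ 0` (`overlap_split`): classes in the finite-dimensional `H¹(𝒪)` at a finite
  level satisfy an additive `p`-polynomial equation, which can be solved in `Ω`.
* For `n < 0`, a class in `H¹(𝒪(n))` which is killed by `c` times all high Frobenius powers is zero
  (`almost_split`); this rests on the fact that almost integral elements are integral
  (`isIntegral_of_almost`).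

A primary relation `r` of total degree `k` presents the syzygy bundle of `f₁, f₂, f₃` as an extension of
`𝒪(m + k - D)` by `𝒪(m - k)`, where `D = d₁ + d₂ + d₃`. In `exists_glued` the obstruction to writing `h`, of
degree `m`, as a combination of the `fᵢ` is killed first in the quotient and then in the subbundle. The
inequality `2 k ≤ D` ensures that whenever the subbundle has negative degree so does the quotient, and
this allows the tight closure condition to descend to the subbundle. The resulting coefficients are
integral over `R`, so `h` lies in `I S` for a module-finite extension `S`.
-/

/-- The Frobenius power `I^[q]` of an ideal. -/
def bracketPow {R : Type} [CommRing R] (I : Ideal R) (q : ℕ) : Ideal R :=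
  Ideal.span ((fun a => a ^ q) '' (I : Set R))

/-- The tight closure of an ideal `I` in characteristic `p`. -/
def tightClosure {R : Type} [CommRing R] (p : ℕ) (I : Ideal R) : Set R :=
  {f | ∃ c : R, c ≠ 0 ∧ ∃ e₀ : ℕ, ∀ e ≥ e₀, c * f ^ p ^ e ∈ bracketPow I (p ^ e)}

/-- The plus closure of an ideal `I`: all `f` contained in `IS` for some module-finite
extension of integral domains `R ⊆ S`. -/
def plusClosure (R : Type) [CommRing R] (I : Ideal R) : Set R :=
  {f | ∃ (S : Type) (_ : CommRing S) (_ : IsDomain S) (φ : R →+* S),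
    Function.Injective φ ∧ φ.Finite ∧ φ f ∈ I.map φ}

/-! ### Almost integral elements -/

section
open Polynomial

/-- In a Noetherian module some term of any sequence is a combination of the earlier ones: the
spans of the initial segments form an ascending chain. -/
lemma exists_mem_span_lower {D M : Type*} [CommRing D] [AddCommGroup M] [Module D M]
    [IsNoetherian D M] (w : ℕ → M) :
    ∃ (s : ℕ) (c : Fin s → D), w s = ∑ i : Fin s, c i • w i := by
  let N : ℕ →o Submodule D M :=
    ⟨fun s => Submodule.span D (Set.range fun i : Fin s => w i), by
      intro s t hst
      apply Submodule.span_mono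
      rintro _ ⟨i, rfl⟩
      exact ⟨⟨i, i.2.trans_le hst⟩, rfl⟩⟩
  obtain ⟨s, hs⟩ := monotone_stabilizes_iff_noetherian.mpr ‹_› N
  refine ⟨s, ?_⟩
  have h1 : w s ∈ N (s + 1) := Submodule.subset_span ⟨⟨s, s.lt_succ_self⟩, rfl⟩
  rw [← hs (s + 1) s.le_succ] at h1
  obtain ⟨c, hc⟩ := (Submodule.mem_span_range_iff_exists_fun D).1 h1
  exact ⟨c, hc.symm⟩

/-- The monic additive `p`-polynomial `X^(p^s) - ∑ cᵢ X^(p^i)`. -/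
lemma exists_additive_poly {D : Type*} [CommRing D] [Nontrivial D] (p : ℕ) [Fact p.Prime] (s : ℕ)
    (c : Fin s → D) : ∃ G : D[X], G.Monic ∧ G.natDegree ≠ 0 ∧
      ∀ {S : Type} [CommRing S] [Algebra D S] (z : S),
        aeval z G = z ^ p ^ s - ∑ i : Fin s, c i • z ^ p ^ (i : ℕ) := by
  have hp := (Fact.out : p.Prime)
  have hdeg : (∑ i : Fin s, C (c i) * X ^ p ^ (i : ℕ)).degree < ((p ^ s : ℕ) : WithBot ℕ) := by
    refine (Polynomial.degree_sum_le _ _).trans_lt ?_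
    rw [Finset.sup_lt_iff (by exact WithBot.bot_lt_coe _)]
    intro i _
    refine (degree_C_mul_X_pow_le _ _).trans_lt ?_
    exact_mod_cast Nat.pow_lt_pow_right hp.one_lt i.2
  have hdeg' : (X ^ p ^ s - ∑ i : Fin s, C (c i) * X ^ p ^ (i : ℕ)).degree =
      ((p ^ s : ℕ) : WithBot ℕ) := by
    rw [degree_sub_eq_left_of_degree_lt, degree_X_pow]
    rwa [degree_X_pow]
  refine ⟨X ^ p ^ s - ∑ i : Fin s, C (c i) * X ^ p ^ (i : ℕ), ?_, ?_, ?_⟩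
  · rw [sub_eq_add_neg]
    exact (monic_X_pow (p ^ s)).add_of_left (by rwa [degree_neg, degree_X_pow])
  · rw [natDegree_eq_of_degree_eq_some hdeg']
    exact (pow_pos hp.pos _).ne'
  · intro S _ _ z
    simp [Algebra.smul_def]

/-- Over a Noetherian normal domain `D` of characteristic `p`, an element `w` of an algebraically
closed extension field is integral as soon as all `c * w ^ p ^ i` are integral for one fixed integral
`c ≠ 0`. The elements with this property (with `c` in `D`) form a ring containing all conjugates of
`w`, hence the coefficients of its minimal polynomial over `F = Frac D`; for `z` in `F` the sequence
`c * z ^ p ^ i` lies in `D`, and Noetherianity of `D` gives a monic additive `p`-polynomial over `D`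
vanishing at `z`. -/
lemma isIntegral_of_almost {D F Ω : Type} [CommRing D] [IsDomain D] [IsNoetherianRing D]
    [IsIntegrallyClosed D] [Field F] [Algebra D F] [IsFractionRing D F] [Field Ω] [IsAlgClosed Ω]
    [Algebra D Ω] [Algebra F Ω] [IsScalarTower D F Ω] (p : ℕ) [Fact p.Prime] [CharP Ω p]
    (c w : Ω) (hc0 : c ≠ 0) (hc : IsIntegral D c) (hw : ∀ i : ℕ, IsIntegral D (c * w ^ p ^ i)) :
    IsIntegral D w := by
  have hinj : Function.Injective (algebraMap D Ω) := by
    rw [IsScalarTower.algebraMap_eq D F Ω]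
    exact (algebraMap F Ω).injective.comp (IsFractionRing.injective D F)
  have : FaithfulSMul D Ω := (faithfulSMul_iff_algebraMap_injective D Ω).2 hinj
  have : CharP D p := (RingHom.charP_iff _ hinj p).2 inferInstance
  have : CharP F p := (RingHom.charP_iff (algebraMap F Ω) (algebraMap F Ω).injective p).2 inferInstance
  -- The ring of elements almost integral with a multiplier in `D`.
  let A : Subring Ω :=
    { carrier := {z | ∃ d : D, d ≠ 0 ∧ ∀ i : ℕ, IsIntegral D (algebraMap D Ω d * z ^ p ^ i)}
      mul_mem' := by
        rintro a b ⟨d, hd, h⟩ ⟨e, he, h'⟩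
        refine ⟨d * e, mul_ne_zero hd he, fun i => ?_⟩
        have := (h i).mul (h' i)
        rw [map_mul, mul_pow]
        rwa [mul_mul_mul_comm]
      one_mem' := ⟨1, one_ne_zero, fun i => by simpa using isIntegral_one⟩
      add_mem' := by
        rintro a b ⟨d, hd, h⟩ ⟨e, he, h'⟩
        refine ⟨d * e, mul_ne_zero hd he, fun i => ?_⟩
        have := ((isIntegral_algebraMap (x := e)).mul (h i)).add
          ((isIntegral_algebraMap (x := d)).mul (h' i))
        have h2 : algebraMap D Ω (d * e) * (a + b) ^ p ^ i =
            algebraMap D Ω e * (algebraMap D Ω d * a ^ p ^ i) +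
              algebraMap D Ω d * (algebraMap D Ω e * b ^ p ^ i) := by
          rw [map_mul, add_pow_char_pow]; ring
        rwa [h2]
      zero_mem' := ⟨1, one_ne_zero, fun i => by
        rw [zero_pow (pow_pos (Fact.out : p.Prime).pos _).ne']; simpa using isIntegral_zero⟩
      neg_mem' := by
        rintro a ⟨d, hd, h⟩
        refine ⟨d, hd, fun i => ?_⟩
        rw [neg_eq_neg_one_mul, mul_pow, mul_left_comm]
        exact ((isIntegral_one (R := D) (B := Ω)).neg.pow (p ^ i)).mul (h i) }
  -- The multiplier `c` is replaced by its norm up to sign, the constant term of `minpoly D c`.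
  obtain ⟨d, hd, hdw⟩ : w ∈ A := by
    let μ := minpoly D c
    have hμ0 : μ.coeff 0 ≠ 0 := by
      intro h
      have h1 := minpoly.coeff_zero_ne_zero (hc.tower_top (A := F)) hc0
      rw [minpoly.isIntegrallyClosed_eq_field_fractions' F hc, coeff_map] at h1
      exact h1 (by rw [h, map_zero])
    refine ⟨μ.coeff 0, hμ0, fun i => ?_⟩
    have h1 : aeval c μ = 0 := minpoly.aeval D c
    have h2 : aeval c μ = c * aeval c μ.divX + algebraMap D Ω (μ.coeff 0) := by
      have : ∀ ν : D[X], aeval c ν = c * aeval c ν.divX + algebraMap D Ω (ν.coeff 0) := by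
        intro ν
        conv_lhs => rw [← ν.X_mul_divX_add, map_add, map_mul, aeval_X, aeval_C]
      exact this μ
    have h3 : algebraMap D Ω (μ.coeff 0) = c * - aeval c μ.divX := by
      linear_combination h1 - h2
    rw [h3]
    have h4 : IsIntegral D (aeval c μ.divX) := by
      exact adjoin_le_integralClosure hc (aeval_mem_adjoin_singleton D c)
    rw [mul_right_comm]
    exact (hw i).mul h4.neg
  have hdΩ : algebraMap D Ω d ≠ 0 := by
    rwa [Ne, map_eq_zero_iff _ hinj]
  have halg : IsIntegral F w := by
    have h1 : IsIntegral F (algebraMap D Ω d * w) := by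
      have := (hdw 0).tower_top (A := F)
      simpa using this
    have h2 : w = algebraMap F Ω (algebraMap D F d)⁻¹ * (algebraMap D Ω d * w) := by
      rw [map_inv₀, ← IsScalarTower.algebraMap_apply, ← mul_assoc, inv_mul_cancel₀ hdΩ, one_mul]
    rw [h2]
    exact isIntegral_algebraMap.mul h1
  set μ := minpoly F w with hμ
  have hμm : μ.Monic := minpoly.monic halg
  have hroots : ∀ z ∈ (μ.map (algebraMap F Ω)).roots, z ∈ A := by
    intro z hz
    refine ⟨d, hd, fun i => ?_⟩
    obtain ⟨G, hG, hG0⟩ := hdw i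
    refine ⟨G, hG, ?_⟩
    have h1 : μ ∣ (G.map (algebraMap D F)).comp (C (algebraMap D F d) * X ^ p ^ i) := by
      apply minpoly.dvd
      rw [aeval_comp, aeval_map_algebraMap]
      simpa [← IsScalarTower.algebraMap_apply, aeval_def] using hG0
    obtain ⟨H, hH⟩ := h1
    have h2 := congrArg (aeval z) hH
    rw [aeval_comp, aeval_map_algebraMap, map_mul (aeval z) μ] at h2
    have h3 : aeval z μ = 0 := by
      have := (mem_roots'.1 hz).2
      simpa [IsRoot, eval_map, aeval_def] using this
    rw [h3, zero_mul] at h2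
    simpa [← IsScalarTower.algebraMap_apply, aeval_def] using h2
  have hcoeff : ∀ n, algebraMap F Ω (μ.coeff n) ∈ A := by
    intro n
    have h1 : μ.map (algebraMap F Ω) ∈ lifts A.subtype := by
      rw [(IsAlgClosed.splits (μ.map (algebraMap F Ω))).eq_prod_roots_of_monic (hμm.map _)]
      apply Subsemiring.multiset_prod_mem
      intro q hq
      obtain ⟨z, hz, rfl⟩ := Multiset.mem_map.1 hq
      rw [lifts_iff_liftsRing]
      exact sub_mem ((lifts_iff_liftsRing _ _).1 (X_mem_lifts _))
        ((lifts_iff_liftsRing _ _).1 (C_mem_lifts A.subtype ⟨z, hroots z hz⟩))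
    obtain ⟨a, ha⟩ := (lifts_iff_coeff_lifts _).1 h1 n
    rw [coeff_map] at ha
    rw [← ha]
    exact a.2
  have hfin : ∀ z : F, algebraMap F Ω z ∈ A → IsIntegral D z := by
    rintro z ⟨d, hd, h⟩
    have hdF : algebraMap D F d ≠ 0 := by
      rwa [Ne, map_eq_zero_iff _ (IsFractionRing.injective D F)]
    have h1 : ∀ i : ℕ, ∃ a : D, algebraMap D F a = algebraMap D F d * z ^ p ^ i := by
      intro i
      apply IsIntegrallyClosed.isIntegral_iff.1
      rw [← isIntegral_algebraMap_iff (algebraMap F Ω).injective (R := D)]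
      simpa [← IsScalarTower.algebraMap_apply] using h i
    choose a ha using h1
    obtain ⟨s, e, hse⟩ := exists_mem_span_lower (D := D) a
    obtain ⟨G, hG, hG0, hGz⟩ := exists_additive_poly p s e
    refine ⟨G, hG, ?_⟩
    rw [← aeval_def, hGz]
    apply mul_left_cancel₀ hdF
    rw [mul_sub, ← ha, hse, mul_zero, sub_eq_zero, map_sum, Finset.mul_sum]
    refine Finset.sum_congr rfl fun i _ => ?_
    rw [smul_eq_mul, map_mul, ha, Algebra.smul_def]
    ring
  refine IsIntegral.of_aeval_monic_of_isIntegral_coeff (hμm.map (algebraMap F Ω)) ?_ ?_ ?_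
  · rw [natDegree_map]
    exact (minpoly.natDegree_pos halg).ne'
  · simp [hμ, isIntegral_zero]
  · intro n
    rw [coeff_map]
    exact (hfin _ (hcoeff n)).algebraMap

end

/-! ### The two affine charts of the projective line -/

section
open Polynomial
open scoped IntermediateField.algebraAdjoinAdjoin

/-- The integral closure of `K[v]` in `Ω`. With `Ω` algebraically closed this is the ring of functions
on the normalization, in `Ω`, of the affine chart of `ℙ¹` with coordinate `v`; the other chart is
`chartRing K v⁻¹`. -/
def chartRing (K : Type) {Ω : Type} [Field K] [Field Ω] [Algebra K Ω] (v : Ω) : Subalgebra K Ω :=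
  (integralClosure (Algebra.adjoin K {v}) Ω).restrictScalars K

section chart

variable {K Ω : Type} [Field K] [Field Ω] [Algebra K Ω] {v : Ω}

lemma mem_chartRing {z : Ω} : z ∈ chartRing K v ↔ IsIntegral (Algebra.adjoin K {v}) z := Iff.rfl

lemma aeval_mem_chartRing (P : K[X]) : aeval v P ∈ chartRing K v :=
  mem_chartRing.2 (isIntegral_algebraMap
    (x := (⟨aeval v P, aeval_mem_adjoin_singleton K v⟩ : Algebra.adjoin K {v})))

lemma self_mem_chartRing : v ∈ chartRing K v := by
  simpa using aeval_mem_chartRing (v := v) (X : K[X])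

lemma mem_chartRing_of_pow {z : Ω} {n : ℕ} (hn : 0 < n) (h : z ^ n ∈ chartRing K v) :
    z ∈ chartRing K v :=
  IsIntegral.of_pow hn h

lemma mem_chartRing_of_monic {z : Ω} {G : Polynomial Ω} (hG : G.Monic) (hd : G.natDegree ≠ 0)
    (hz : G.eval z ∈ chartRing K v) (hc : ∀ i, G.coeff i ∈ chartRing K v) : z ∈ chartRing K v :=
  IsIntegral.of_aeval_monic_of_isIntegral_coeff hG hd hz hc

lemma isIntegrallyClosed_adjoin (hv : Transcendental K v) :
    IsIntegrallyClosed (Algebra.adjoin K {v}) :=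
  .of_equiv (Polynomial.algEquivOfTranscendental K v hv).toRingEquiv

lemma isNoetherianRing_adjoin : IsNoetherianRing (Algebra.adjoin K {v}) :=
  have : Algebra.FiniteType K (Algebra.adjoin K {v}) :=
    (Subalgebra.fg_iff_finiteType _).1 ⟨{v}, by simp⟩
  Algebra.FiniteType.isNoetherianRing K _

lemma mem_chartRing_of_almost [IsAlgClosed Ω] (hv : Transcendental K v) (p : ℕ) [Fact p.Prime]
    [CharP Ω p] {c w : Ω} (hc0 : c ≠ 0) (hc : c ∈ chartRing K v)
    (hw : ∀ i : ℕ, c * w ^ p ^ i ∈ chartRing K v) : w ∈ chartRing K v := by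
  have := isIntegrallyClosed_adjoin hv
  have := isNoetherianRing_adjoin (K := K) (v := v)
  exact isIntegral_of_almost (D := Algebra.adjoin K {v}) (F := IntermediateField.adjoin K {v}) p
    c w hc0 hc hw

lemma exists_aeval_of_mem (hv : Transcendental K v) {z : Ω}
    (hz : z ∈ IntermediateField.adjoin K {v}) (hz' : z ∈ chartRing K v) :
    ∃ P : K[X], aeval v P = z := by
  have := isIntegrallyClosed_adjoin hv
  have h1 : IsIntegral (Algebra.adjoin K {v}) (⟨z, hz⟩ : IntermediateField.adjoin K {v}) := by
    rw [← isIntegral_algebraMap_iff (B := Ω) (algebraMap (IntermediateField.adjoin K {v}) Ω).injective]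
    exact hz'
  obtain ⟨a, ha⟩ := IsIntegrallyClosed.isIntegral_iff.1 h1
  have h2 : (a : Ω) = z := congrArg Subtype.val ha
  obtain ⟨P, hP⟩ := (Algebra.adjoin_singleton_eq_range_aeval K v).le a.2
  exact ⟨P, hP.trans h2⟩

lemma inv_pow_mul_aeval_mem (hv0 : v ≠ 0) {P : K[X]} {e : ℕ} (h : P.natDegree ≤ e) :
    (v⁻¹) ^ e * aeval v P ∈ chartRing K v⁻¹ := by
  rw [aeval_eq_sum_range, Finset.mul_sum]
  refine sum_mem fun i hi => ?_
  have hi' : i ≤ e := by have := Finset.mem_range.1 hi; omega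
  have : (v⁻¹) ^ e * P.coeff i • v ^ i = P.coeff i • (v⁻¹) ^ (e - i) := by
    rw [mul_smul_comm, ← Nat.sub_add_cancel hi', pow_add, mul_assoc, ← mul_pow,
      inv_mul_cancel₀ hv0, Nat.add_sub_cancel, one_pow, mul_one]
  rw [this]
  exact Subalgebra.smul_mem _ (pow_mem self_mem_chartRing _) _

/-- An element integral over `K[v]` has a pole of bounded order on the chart at infinity. -/
lemma exists_inv_pow_mul_mem (hv0 : v ≠ 0) {z : Ω} (hz : z ∈ chartRing K v) :
    ∃ d : ℕ, ∀ e ≥ d, (v⁻¹) ^ e * z ∈ chartRing K v⁻¹ := by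
  obtain ⟨G, hG, hG0⟩ := hz
  have h1 : ∀ a : Algebra.adjoin K {v}, ∃ P : K[X], aeval v P = (a : Ω) := fun a =>
    (Algebra.adjoin_singleton_eq_range_aeval K v).le a.2
  choose P hP using fun i => h1 (G.coeff i)
  refine ⟨∑ i ∈ Finset.range (G.natDegree + 1), (P i).natDegree, fun e he => ?_⟩
  set H := (G.map (algebraMap (Algebra.adjoin K {v}) Ω)).scaleRoots (v⁻¹ ^ e) with hH
  have hGm := hG.map (algebraMap (Algebra.adjoin K {v}) Ω)
  have hd : G.natDegree ≠ 0 := by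
    intro h
    rw [hG.natDegree_eq_zero.1 h] at hG0
    simp at hG0
  refine mem_chartRing_of_monic (G := H) ((monic_scaleRoots_iff _).2 hGm) ?_ ?_ ?_
  · rwa [natDegree_scaleRoots, hG.natDegree_map]
  · have : eval₂ (RingHom.id Ω) ((RingHom.id Ω) (v⁻¹ ^ e) * z) H = 0 :=
      scaleRoots_eval₂_eq_zero _ (by rwa [eval₂_map])
    rw [RingHom.id_apply, ← eval₂_id (p := H)] at *
    rw [this]
    exact zero_mem _
  · intro i
    rw [coeff_scaleRoots, coeff_map, hG.natDegree_map]
    rcases lt_trichotomy i G.natDegree with hi | hi | hi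
    · change ((G.coeff i : Algebra.adjoin K {v}) : Ω) * _ ∈ _
      rw [← hP, ← pow_mul, mul_comm]
      refine inv_pow_mul_aeval_mem hv0 ?_
      calc (P i).natDegree ≤ _ := Finset.single_le_sum (f := fun i => (P i).natDegree)
            (fun _ _ => Nat.zero_le _) (Finset.mem_range.2 (by omega : i < G.natDegree + 1))
        _ ≤ e := he
        _ ≤ e * (G.natDegree - i) := Nat.le_mul_of_pos_right _ (by omega)
    · subst hi
      simp [hG.coeff_natDegree, one_mem]
    · rw [coeff_eq_zero_of_natDegree_lt hi]
      simp [zero_mem]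

/-- A nonzero polynomial `P(v)` of the form `v ^ e * Q(v⁻¹)` has degree at most `e`. -/
lemma natDegree_le_of_aeval (hv : Transcendental K v) {P Q : K[X]} {e : ℤ} (hP : P ≠ 0)
    (h : aeval v P = v ^ e * aeval v⁻¹ Q) : (P.natDegree : ℤ) ≤ e := by
  have hv0 : v ≠ 0 := fun h => hv (h ▸ isAlgebraic_zero)
  have hinj := transcendental_iff_injective.1 hv
  have : Invertible v⁻¹ := invertibleOfNonzero (inv_ne_zero hv0)
  have h1 := eval₂_reverse_mul_pow (algebraMap K Ω) v⁻¹ Q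
  rw [invOf_eq_inv, inv_inv] at h1
  simp only [← aeval_def] at h1
  rw [← h1] at h
  have hvq : v⁻¹ ^ Q.natDegree * v ^ Q.natDegree = 1 := by
    rw [← mul_pow, inv_mul_cancel₀ hv0, one_pow]
  have h2 : v ^ Q.natDegree * aeval v P = v ^ e * aeval v Q.reverse := by
    rw [h]; linear_combination (v ^ e * aeval v Q.reverse) * hvq
  have hrev := reverse_natDegree_le Q
  rcases le_or_gt 0 e with he | he
  · lift e to ℕ using he
    rw [zpow_natCast] at h2
    have h3 : X ^ Q.natDegree * P = X ^ e * Q.reverse := hinj (by simpa using h2)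
    have h4 := congrArg natDegree h3
    have hr0 : Q.reverse ≠ 0 := by
      rintro h0
      rw [h0, mul_zero] at h3
      exact mul_ne_zero (pow_ne_zero _ X_ne_zero) hP h3
    rw [natDegree_mul (pow_ne_zero _ X_ne_zero) hP, natDegree_mul (pow_ne_zero _ X_ne_zero) hr0,
      natDegree_X_pow, natDegree_X_pow] at h4
    omega
  · exfalso
    obtain ⟨n, rfl⟩ : ∃ n : ℕ, e = -(n + 1 : ℕ) := ⟨(-e - 1).toNat, by omega⟩
    have h3 : X ^ (Q.natDegree + (n + 1)) * P = Q.reverse := by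
      apply hinj
      rw [map_mul, map_pow, aeval_X, pow_add, mul_right_comm, h2, zpow_neg, zpow_natCast,
        mul_right_comm, inv_mul_cancel₀ (pow_ne_zero _ hv0), one_mul]
    have h4 := congrArg natDegree h3
    rw [natDegree_mul (pow_ne_zero _ X_ne_zero) hP, natDegree_X_pow] at h4
    omega

end chart

end

/-! ### Global sections of twists -/

section
open Polynomial
open scoped IntermediateField.algebraAdjoinAdjoin

section glue

variable {K Ω : Type} [Field K] [Field Ω] [Algebra K Ω] {v : Ω}

/-- For a field `L` containing `v`, the coefficients of the minimal polynomial over `L` of an element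
integral over `K[v]` are again integral over `K[v]`. -/
lemma coeff_minpoly_mem (L : IntermediateField K Ω) (hv : v ∈ L) {z : Ω}
    (hz : z ∈ chartRing K v) (i : ℕ) : (((minpoly L z).coeff i : L) : Ω) ∈ chartRing K v := by
  obtain ⟨G, hG, hG0⟩ := hz
  have hle : Algebra.adjoin K {v} ≤ L.toSubalgebra :=
    Algebra.adjoin_le (by simpa using hv)
  let ι : Algebra.adjoin K {v} →ₐ[K] L := Subalgebra.inclusion hle
  have hι : (algebraMap L Ω).comp (ι : Algebra.adjoin K {v} →+* L) =
      algebraMap (Algebra.adjoin K {v}) Ω := rfl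
  have h1 : aeval z (G.map (ι : Algebra.adjoin K {v} →+* L)) = 0 := by
    rw [aeval_def, eval₂_map, hι, hG0]
  have hzL : IsIntegral L z := ⟨_, hG.map _, h1⟩
  have h2 := Polynomial.map_dvd (algebraMap L Ω) (minpoly.dvd L z h1)
  rw [map_map, hι] at h2
  have h3 := isIntegral_coeff_of_dvd G _ hG ((minpoly.monic hzL).map _) h2 i
  rwa [coeff_map] at h3

lemma isIntegral_intermediateField (L : IntermediateField K Ω) (hv : v ∈ L) {z : Ω}
    (hz : z ∈ chartRing K v) : IsIntegral L z := by
  obtain ⟨G, hG, hG0⟩ := hz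
  have hle : Algebra.adjoin K {v} ≤ L.toSubalgebra :=
    Algebra.adjoin_le (by simpa using hv)
  let ι : Algebra.adjoin K {v} →ₐ[K] L := Subalgebra.inclusion hle
  have hι : (algebraMap L Ω).comp (ι : Algebra.adjoin K {v} →+* L) =
      algebraMap (Algebra.adjoin K {v}) Ω := rfl
  refine ⟨G.map (ι : Algebra.adjoin K {v} →+* L), hG.map _, ?_⟩
  rw [eval₂_map, hι, hG0]

/-- If `z` is a section of `𝒪(j)`, that is, `z` is integral on the chart `v` and `v ^ (-j) * z` on the
chart `v⁻¹`, then the `i`-th coefficient of its minimal polynomial over `K(v)` is a polynomial in `v`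
of degree at most `j * (deg - i)`: it is a section of `𝒪(j * (deg - i))` on `ℙ¹`. -/
lemma exists_coeff_minpoly (hv : Transcendental K v) {z : Ω} {j : ℤ} (hz : z ∈ chartRing K v)
    (hz' : v ^ (-j) * z ∈ chartRing K v⁻¹) (i : ℕ) :
    ∃ P : K[X], aeval v P = (((minpoly (IntermediateField.adjoin K {v}) z).coeff i :
        IntermediateField.adjoin K {v}) : Ω) ∧ (P ≠ 0 → (P.natDegree : ℤ) ≤
        j * ((minpoly (IntermediateField.adjoin K {v}) z).natDegree - i : ℕ)) := by
  have hv0 : v ≠ 0 := fun h => hv (h ▸ isAlgebraic_zero)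
  have hvi : Transcendental K v⁻¹ := fun h => hv (by simpa using h.inv)
  set L := IntermediateField.adjoin K {v} with hL
  have hvL : v ∈ L := IntermediateField.mem_adjoin_simple_self K v
  have hvL' : v⁻¹ ∈ L := inv_mem hvL
  obtain ⟨P, hP⟩ := exists_aeval_of_mem hv (SetLike.coe_mem _) (coeff_minpoly_mem L hvL hz i)
  refine ⟨P, hP, fun hP0 => ?_⟩
  have hle : L ≤ IntermediateField.adjoin K {v⁻¹} := by
    rw [hL, IntermediateField.adjoin_simple_le_iff]
    simpa using inv_mem (IntermediateField.mem_adjoin_simple_self K v⁻¹)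
  let s : L := ⟨v, hvL⟩ ^ (-j)
  have hs : (s : Ω) = v ^ (-j) := rfl
  have hs0 : s ≠ 0 := fun h => zpow_ne_zero (-j) hv0 (by rw [← hs, h]; rfl)
  have hsm : minpoly L (s • z) = (minpoly L z).scaleRoots s :=
    IsIntegrallyClosed.minpoly_smul hs0 (isIntegral_intermediateField L hvL hz)
  have hsz : s • z ∈ chartRing K v⁻¹ := hz'
  obtain ⟨Q, hQ⟩ := exists_aeval_of_mem hvi (hle (SetLike.coe_mem _))
    (coeff_minpoly_mem L hvL' hsz i)
  refine natDegree_le_of_aeval (Q := Q) hv hP0 ?_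
  rw [hQ, hsm, coeff_scaleRoots, hP]
  push_cast
  rw [hs, ← zpow_natCast, ← zpow_mul, mul_left_comm, ← zpow_add₀ hv0]
  have : j * ((minpoly L z).natDegree - i : ℕ) + -j * ((minpoly L z).natDegree - i : ℕ) = 0 := by
    ring
  rw [this, zpow_zero, mul_one]

/-- `𝒪(j)` has no nonzero sections for `j < 0`. -/
lemma eq_zero_of_neg (hv : Transcendental K v) {z : Ω} {j : ℤ} (hj : j < 0)
    (hz : z ∈ chartRing K v) (hz' : v ^ (-j) * z ∈ chartRing K v⁻¹) : z = 0 := by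
  have hvL : v ∈ IntermediateField.adjoin K {v} := IntermediateField.mem_adjoin_simple_self K v
  have hfin_int := isIntegral_intermediateField _ hvL hz
  set m := minpoly (IntermediateField.adjoin K {v}) z with hm
  have hmon : m.Monic := minpoly.monic hfin_int
  have h1 : ∀ i < m.natDegree, m.coeff i = 0 := by
    intro i hi
    obtain ⟨P, hP, hP'⟩ := exists_coeff_minpoly hv hz hz' i
    by_cases h : P = 0
    · rw [h, map_zero] at hP
      exact Subtype.ext hP.symm
    · have h2 := hP' h
      have h3 : (0 : ℤ) < ((m.natDegree - i : ℕ) : ℤ) := by omega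
      nlinarith
  have h2 : m = X ^ m.natDegree := by
    ext1 i
    rw [coeff_X_pow]
    split_ifs with h
    · rw [h]; exact hmon
    · rcases lt_or_gt_of_ne h with h | h
      · exact h1 i h
      · exact coeff_eq_zero_of_natDegree_lt h
  have h3 := minpoly.aeval (IntermediateField.adjoin K {v}) z
  rw [← hm, h2, map_pow, aeval_X] at h3
  exact eq_zero_of_pow_eq_zero h3

/-- Sections of `𝒪(j)`, homogenized by `x ^ j`, are integral over `K[x, y]`. -/
lemma isIntegral_adjoin_pair {x y : Ω} (hx : x ≠ 0) (hv : Transcendental K (y / x)) {z : Ω} {j : ℕ}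
    (hz : z ∈ chartRing K (y / x)) (hz' : (y / x) ^ (-(j : ℤ)) * z ∈ chartRing K (y / x)⁻¹) :
    IsIntegral (Algebra.adjoin K {x, y}) (x ^ j * z) := by
  set v := y / x with hvd
  have hvL : v ∈ IntermediateField.adjoin K {v} := IntermediateField.mem_adjoin_simple_self K v
  have hfin_int := isIntegral_intermediateField _ hvL hz
  set m := minpoly (IntermediateField.adjoin K {v}) z with hm
  have hmon : m.Monic := minpoly.monic hfin_int
  set H := (m.map (algebraMap _ Ω)).scaleRoots (x ^ j) with hH
  have hmm := hmon.map (algebraMap _ Ω)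
  have hxm : x ∈ Algebra.adjoin K {x, y} := Algebra.subset_adjoin (by simp)
  have hym : y ∈ Algebra.adjoin K {x, y} := Algebra.subset_adjoin (by simp)
  have key : ∀ (P : K[X]) (e : ℕ), P.natDegree ≤ e → aeval v P * x ^ e ∈ Algebra.adjoin K {x, y} := by
    intro P e h
    rw [aeval_eq_sum_range, Finset.sum_mul]
    refine sum_mem fun i hi => ?_
    have hi' : i ≤ e := by have := Finset.mem_range.1 hi; omega
    have : P.coeff i • v ^ i * x ^ e = P.coeff i • (y ^ i * x ^ (e - i)) := by
      rw [smul_mul_assoc, hvd, div_pow, ← Nat.sub_add_cancel hi', pow_add, Nat.add_sub_cancel]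
      congr 1
      field_simp
    rw [this]
    exact Subalgebra.smul_mem _ (mul_mem (pow_mem hym _) (pow_mem hxm _)) _
  refine IsIntegral.of_aeval_monic_of_isIntegral_coeff (p := H) ((monic_scaleRoots_iff _).2 hmm) ?_ ?_ ?_
  · rw [natDegree_scaleRoots, hmon.natDegree_map]
    exact (minpoly.natDegree_pos hfin_int).ne'
  · have : eval₂ (RingHom.id Ω) ((RingHom.id Ω) (x ^ j) * z) H = 0 :=
      scaleRoots_eval₂_eq_zero _ (by rw [eval₂_map]; exact minpoly.aeval _ z)
    rw [RingHom.id_apply] at this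
    rw [← eval₂_id, this]
    exact isIntegral_zero
  · intro i
    rw [coeff_scaleRoots, coeff_map, hmon.natDegree_map]
    rcases lt_or_ge m.natDegree i with hi | hi
    · rw [coeff_eq_zero_of_natDegree_lt hi]
      simpa using isIntegral_zero
    · obtain ⟨P, hP, hP'⟩ := exists_coeff_minpoly hv hz hz' i
      have h1 : algebraMap (IntermediateField.adjoin K {v}) Ω (m.coeff i) = aeval v P := hP.symm
      rw [h1, ← pow_mul]
      refine isIntegral_algebraMap (x := (⟨_, key P _ ?_⟩ : Algebra.adjoin K {x, y}))
      by_cases h : P = 0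
      · simp [h]
      · exact_mod_cast hP' h

end glue

end

/-! ### Vanishing of the first cohomology of the structure sheaf -/

section
open Polynomial

section split

variable {K Ω : Type} [Field K] [Field Ω] [Algebra K Ω] {v : Ω}

/-- Finiteness of `H¹(𝒪)` computed by the two charts: modulo sums of functions on the charts, the
elements `v ^ i * z ^ n` span a finite-dimensional space. Indeed `K[v][z]` is generated by finitely
many `s` over `K[v]`, and `v ^ i * s` is regular on one of the charts for all but finitely many `i`. -/
lemma exists_finite_mod_charts (hv0 : v ≠ 0) {z : Ω} (hz : z ∈ chartRing K v) :
    ∃ E : Submodule K (Ω ⧸ (Subalgebra.toSubmodule (chartRing K v) ⊔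
        Subalgebra.toSubmodule (chartRing K v⁻¹))), FiniteDimensional K E ∧
      ∀ (i : ℤ) (n : ℕ), Submodule.Quotient.mk (v ^ i * z ^ n) ∈ E := by
  classical
  set W := Subalgebra.toSubmodule (chartRing K v) ⊔ Subalgebra.toSubmodule (chartRing K v⁻¹) with hW
  obtain ⟨S, hS⟩ := IsIntegral.fg_adjoin_singleton hz
  have hSmem : ∀ s ∈ S, s ∈ chartRing K v := by
    intro s hs
    have h1 : s ∈ Subalgebra.toSubmodule (Algebra.adjoin (Algebra.adjoin K {v}) {z}) := by
      rw [← hS]; exact Submodule.subset_span hs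
    have h2 : Algebra.adjoin (Algebra.adjoin K {v}) {z} ≤ integralClosure (Algebra.adjoin K {v}) Ω :=
      Algebra.adjoin_le (Set.singleton_subset_iff.2 hz)
    exact h2 h1
  choose! d hd using fun s (hs : s ∈ S) => exists_inv_pow_mul_mem hv0 (hSmem s hs)
  set D := S.sup d with hD
  let T : Finset (Ω ⧸ W) := (Finset.range D ×ˢ S).image fun a => W.mkQ (v⁻¹ ^ a.1 * a.2)
  refine ⟨Submodule.span K T, FiniteDimensional.span_finset K T, ?_⟩
  have hgen : ∀ s ∈ S, ∀ i : ℤ, W.mkQ (v ^ i * s) ∈ Submodule.span K (T : Set (Ω ⧸ W)) := by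
    intro s hs i
    rcases le_or_gt 0 i with hi | hi
    · lift i to ℕ using hi
      have h1 : v ^ (i : ℤ) * s ∈ W := by
        rw [zpow_natCast]
        exact Submodule.mem_sup_left ((chartRing K v).mul_mem (pow_mem self_mem_chartRing _) (hSmem s hs))
      rw [Submodule.mkQ_apply, (Submodule.Quotient.mk_eq_zero W).2 h1]
      exact zero_mem _
    · obtain ⟨n, rfl⟩ : ∃ n : ℕ, i = -n := ⟨(-i).toNat, by omega⟩
      have h2 : v ^ (-(n : ℤ)) = v⁻¹ ^ n := by rw [zpow_neg, zpow_natCast, inv_pow]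
      rw [h2]
      rcases lt_or_ge n D with hn | hn
      · refine Submodule.subset_span ?_
        exact Finset.mem_coe.2 (Finset.mem_image.2 ⟨(n, s), by simp [hn, hs], rfl⟩)
      · have h1 : v⁻¹ ^ n * s ∈ W :=
          Submodule.mem_sup_right (hd s hs n ((Finset.le_sup hs).trans hn))
        rw [Submodule.mkQ_apply, (Submodule.Quotient.mk_eq_zero W).2 h1]
        exact zero_mem _
  have hall : ∀ w ∈ Submodule.span (Algebra.adjoin K {v}) (S : Set Ω),
      ∀ i : ℤ, W.mkQ (v ^ i * w) ∈ Submodule.span K (T : Set (Ω ⧸ W)) := by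
    intro w hw
    induction hw using Submodule.span_induction with
    | mem s hs => exact hgen s hs
    | zero => intro i; simp
    | add a b _ _ ha hb => intro i; rw [mul_add, map_add]; exact add_mem (ha i) (hb i)
    | smul a w _ hw =>
      intro i
      obtain ⟨P, hP⟩ := (Algebra.adjoin_singleton_eq_range_aeval K v).le a.2
      have hP' : (a : Ω) = aeval v P := hP.symm
      rw [Subalgebra.smul_def, hP', aeval_eq_sum_range, smul_eq_mul, Finset.sum_mul, Finset.mul_sum,
        map_sum]
      refine sum_mem fun j _ => ?_
      have : v ^ i * (P.coeff j • v ^ j * w) = P.coeff j • (v ^ (i + j) * w) := by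
        rw [zpow_add₀ hv0, zpow_natCast, smul_mul_assoc, mul_smul_comm, mul_assoc]
      rw [this, map_smul]
      exact Submodule.smul_mem _ _ (hw _)
  intro i n
  refine hall _ ?_ i
  rw [hS]
  exact pow_mem (Algebra.subset_adjoin (Set.mem_singleton z)) n

/-- Vanishing of `H¹(𝒪)` on the absolute integral closure. By finiteness, the Frobenius powers of the
class of `ψ` satisfy an additive relation, so `G(ψ) = α₀ + β₀` for a monic additive `p`-polynomial `G`
over `K` and functions `α₀`, `β₀` on the charts; a root `α` of `G(X) = α₀` and `β = ψ - α` are then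
integral on their charts. -/
lemma exists_split [IsAlgClosed Ω] (p : ℕ) [Fact p.Prime] [CharP Ω p] (hv0 : v ≠ 0) {ψ : Ω} {c : ℕ}
    (h : v ^ c * ψ ∈ chartRing K v) :
    ∃ α ∈ chartRing K v, ∃ β ∈ chartRing K v⁻¹, ψ = α + β := by
  have hfin := exists_finite_mod_charts hv0 h
  set W := Subalgebra.toSubmodule (chartRing K v) ⊔ Subalgebra.toSubmodule (chartRing K v⁻¹) with hW
  obtain ⟨E, hE, hmem⟩ := hfin
  have hψ : ∀ n : ℕ, Submodule.Quotient.mk (p := W) (ψ ^ n) ∈ E := by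
    intro n
    have := hmem (-(c * n : ℕ)) n
    rwa [zpow_neg, zpow_natCast, mul_pow, ← pow_mul, inv_mul_cancel_left₀ (pow_ne_zero _ hv0)]
      at this
  obtain ⟨s, a, ha⟩ := exists_mem_span_lower (D := K) (M := E)
    (fun n => ⟨W.mkQ (ψ ^ p ^ n), hψ (p ^ n)⟩)
  have ha' := congrArg Subtype.val ha
  simp only [Submodule.coe_sum, Submodule.coe_smul, ← map_smul, ← map_sum] at ha'
  rw [← sub_eq_zero, ← map_sub, Submodule.mkQ_apply, Submodule.Quotient.mk_eq_zero] at ha'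
  obtain ⟨α₀, hα₀, β₀, hβ₀, hsum⟩ := Submodule.mem_sup.1 ha'
  obtain ⟨G, hG, hd, hev⟩ := exists_additive_poly (D := K) p s a
  have hGm := hG.map (algebraMap K Ω)
  have hdm : (G.map (algebraMap K Ω)).natDegree ≠ 0 := by rwa [hG.natDegree_map]
  have hpos : 0 < (G.map (algebraMap K Ω)).degree := natDegree_pos_iff_degree_pos.1 (by omega)
  obtain ⟨α, hα⟩ := IsAlgClosed.exists_root (G.map (algebraMap K Ω) - C α₀)
    (by rw [degree_sub_C hpos]; exact hpos.ne')
  have hα' : aeval α G = α₀ := by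
    rw [IsRoot.def, eval_sub, eval_C, sub_eq_zero, eval_map] at hα
    exact hα
  have hβ' : aeval (ψ - α) G = β₀ := by
    have : aeval (ψ - α) G = aeval ψ G - aeval α G := by
      simp only [hev, sub_pow_char_pow, smul_sub, Finset.sum_sub_distrib]
      ring
    rw [this, hα', hev, ← hsum, add_sub_cancel_left]
  refine ⟨α, ?_, ψ - α, ?_, by ring⟩
  · refine mem_chartRing_of_monic hGm hdm ?_ fun i => ?_
    · rw [eval_map, ← aeval_def, hα']; exact hα₀
    · rw [coeff_map]; exact Subalgebra.algebraMap_mem _ _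
  · refine mem_chartRing_of_monic hGm hdm ?_ fun i => ?_
    · rw [eval_map, ← aeval_def, hβ']; exact hβ₀
    · rw [coeff_map]; exact Subalgebra.algebraMap_mem _ _

end split

end

/-! ### Twisted sections and their first cohomology -/

section
open Polynomial

/-- Sections of `𝒪(n)` over the chart `x ≠ 0`: the `z` for which `z / x ^ n` is integral over
`K[y / x]`. The sections over the chart `y ≠ 0` are `twist K y x n`. -/
def twist (K : Type) {Ω : Type} [Field K] [Field Ω] [Algebra K Ω] (x y : Ω) (n : ℤ) :
    Submodule K Ω :=
  (Subalgebra.toSubmodule (chartRing K (y / x))).comap (LinearMap.mulRight K (x ^ (-n)))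

/-- Sections of `𝒪(n)` over the overlap `x y ≠ 0`: the `z` for which `z / x ^ n` becomes integral over
`K[y / x]` after multiplication by a power of `y / x`. -/
def overlap (K : Type) {Ω : Type} [Field K] [Field Ω] [Algebra K Ω] (x y : Ω) (n : ℤ) :
    Submodule K Ω where
  carrier := {z | ∃ c : ℕ, (y / x) ^ c * (z * x ^ (-n)) ∈ chartRing K (y / x)}
  zero_mem' := ⟨0, by simp [zero_mem]⟩
  add_mem' := by
    rintro a b ⟨c, hc⟩ ⟨d, hd⟩
    refine ⟨c + d, ?_⟩
    have : (y / x) ^ (c + d) * ((a + b) * x ^ (-n)) =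
        (y / x) ^ d * ((y / x) ^ c * (a * x ^ (-n))) +
        (y / x) ^ c * ((y / x) ^ d * (b * x ^ (-n))) := by ring
    rw [this]
    exact add_mem (mul_mem (pow_mem self_mem_chartRing _) hc)
      (mul_mem (pow_mem self_mem_chartRing _) hd)
  smul_mem' := by
    rintro a z ⟨c, hc⟩
    refine ⟨c, ?_⟩
    rw [smul_mul_assoc, mul_smul_comm]
    exact Subalgebra.smul_mem _ hc a

section twist

variable {K Ω : Type} [Field K] [Field Ω] [Algebra K Ω] {x y : Ω}

lemma mem_twist {n : ℤ} {z : Ω} : z ∈ twist K x y n ↔ z * x ^ (-n) ∈ chartRing K (y / x) := Iff.rfl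

lemma twist_mul_mem (hx : x ≠ 0) {m n : ℤ} {z w : Ω} (hz : z ∈ twist K x y m)
    (hw : w ∈ twist K x y n) : z * w ∈ twist K x y (m + n) := by
  rw [mem_twist] at *
  have : z * w * x ^ (-(m + n)) = (z * x ^ (-m)) * (w * x ^ (-n)) := by
    rw [neg_add, zpow_add₀ hx]; ring
  rw [this]
  exact mul_mem hz hw

lemma twist_pow_mem {n : ℤ} {z : Ω} (hz : z ∈ twist K x y n) (q : ℕ) :
    z ^ q ∈ twist K x y (q * n) := by
  rw [mem_twist] at *
  have : z ^ q * x ^ (-(q * n)) = (z * x ^ (-n)) ^ q := by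
    rw [mul_pow, ← zpow_natCast (x ^ (-n)), ← zpow_mul]
    congr 2; ring
  rw [this]
  exact pow_mem hz q

lemma mem_twist_of_pow {n : ℤ} {z : Ω} {q : ℕ} (hq : 0 < q)
    (hz : z ^ q ∈ twist K x y (q * n)) : z ∈ twist K x y n := by
  rw [mem_twist] at *
  have : z ^ q * x ^ (-(q * n)) = (z * x ^ (-n)) ^ q := by
    rw [mul_pow, ← zpow_natCast (x ^ (-n)), ← zpow_mul]
    congr 2; ring
  rw [this] at hz
  exact mem_chartRing_of_pow hq hz

lemma overlap_mul_mem (hx : x ≠ 0) {m n : ℤ} {z w : Ω} (hz : z ∈ overlap K x y m)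
    (hw : w ∈ overlap K x y n) : z * w ∈ overlap K x y (m + n) := by
  obtain ⟨c, hc⟩ := hz
  obtain ⟨d, hd⟩ := hw
  refine ⟨c + d, ?_⟩
  have : (y / x) ^ (c + d) * (z * w * x ^ (-(m + n))) =
      ((y / x) ^ c * (z * x ^ (-m))) * ((y / x) ^ d * (w * x ^ (-n))) := by
    rw [neg_add, zpow_add₀ hx]; ring
  rw [this]
  exact mul_mem hc hd

lemma twist_le_overlap {n : ℤ} : twist K x y n ≤ overlap K x y n := fun z hz => ⟨0, by
  rwa [pow_zero, one_mul]⟩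

lemma twist_le_overlap' (hx : x ≠ 0) (hy : y ≠ 0) {n : ℤ} :
    twist K y x n ≤ overlap K x y n := fun z hz => by
  rw [mem_twist] at hz
  obtain ⟨d, hd⟩ := exists_inv_pow_mul_mem (div_ne_zero hx hy) hz
  rw [inv_div] at hd
  refine ⟨d + n.natAbs, ?_⟩
  have h1 : (0 : ℤ) ≤ (d + n.natAbs : ℕ) + n := by omega
  obtain ⟨e, he⟩ := Int.eq_ofNat_of_zero_le h1
  have h2 := hd e (by omega)
  have : (y / x) ^ (d + n.natAbs) * (z * x ^ (-n)) = (y / x) ^ e * (z * y ^ (-n)) := by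
    rw [← zpow_natCast, ← zpow_natCast (y / x) e, ← he, zpow_add₀ (div_ne_zero hy hx),
      div_zpow _ _ n, zpow_neg, zpow_neg]
    field_simp
  rw [this]
  exact h2

/-- `H¹(𝒪(n)) = 0` for `n ≥ 0` on the absolute integral closure. -/
lemma overlap_split [IsAlgClosed Ω] (p : ℕ) [Fact p.Prime] [CharP Ω p] (hx : x ≠ 0) (hy : y ≠ 0)
    {n : ℤ} (hn : 0 ≤ n) {z : Ω} (hz : z ∈ overlap K x y n) :
    ∃ α ∈ twist K x y n, ∃ β ∈ twist K y x n, z = α - β := by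
  obtain ⟨c, hc⟩ := hz
  obtain ⟨α, hα, β, hβ, h⟩ := exists_split p (div_ne_zero hy hx) hc
  rw [inv_div] at hβ
  lift n to ℕ using hn
  have h1 : x ^ (n : ℤ) * x ^ (-(n : ℤ)) = 1 := by
    rw [← zpow_add₀ hx]; simp
  refine ⟨x ^ (n : ℤ) * α, ?_, - (x ^ (n : ℤ) * β), ?_, ?_⟩
  · rw [mem_twist]
    have : x ^ (n : ℤ) * α * x ^ (-(n : ℤ)) = α := by linear_combination α * h1
    rwa [this]
  · refine neg_mem ?_
    rw [mem_twist]
    have : x ^ (n : ℤ) * β * y ^ (-(n : ℤ)) = (x / y) ^ n * β := by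
      rw [zpow_neg, zpow_natCast, zpow_natCast, div_pow]; field_simp
    rw [this]
    exact mul_mem (pow_mem self_mem_chartRing _) hβ
  · linear_combination x ^ (n : ℤ) * h - z * h1

/-- `H⁰(𝒪(n)) = 0` for `n < 0`. -/
lemma twist_inter_eq_zero (hx : x ≠ 0) (hv : Transcendental K (y / x)) {n : ℤ}
    (hn : n < 0) {z : Ω} (h1 : z ∈ twist K x y n) (h2 : z ∈ twist K y x n) : z = 0 := by
  rw [mem_twist] at h1 h2
  have h3 : (y / x) ^ (-n) * (z * x ^ (-n)) ∈ chartRing K (y / x)⁻¹ := by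
    rw [inv_div]
    convert h2 using 1
    rw [div_zpow, div_mul_eq_mul_div, div_eq_iff (zpow_ne_zero _ hx)]
    ring
  have := eq_zero_of_neg hv hn h1 h3
  exact (mul_eq_zero.1 this).resolve_right (zpow_ne_zero _ hx)

/-- Global sections of `𝒪(n)` are integral over `K[x, y]`. -/
lemma twist_inter_isIntegral (hx : x ≠ 0) (hv : Transcendental K (y / x)) {n : ℤ}
    {z : Ω} (h1 : z ∈ twist K x y n) (h2 : z ∈ twist K y x n) :
    IsIntegral (Algebra.adjoin K {x, y}) z := by
  rcases lt_or_ge n 0 with hn | hn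
  · rw [twist_inter_eq_zero hx hv hn h1 h2]
    exact isIntegral_zero
  · lift n to ℕ using hn
    rw [mem_twist] at h1 h2
    have h3 : (y / x) ^ (-(n : ℤ)) * (z * x ^ (-(n : ℤ))) ∈ chartRing K (y / x)⁻¹ := by
      rw [inv_div]
      convert h2 using 1
      rw [div_zpow, div_mul_eq_mul_div, div_eq_iff (zpow_ne_zero _ hx)]
      ring
    have h4 := isIntegral_adjoin_pair hx hv h1 h3
    convert h4 using 1
    rw [zpow_neg, zpow_natCast]
    field_simp

lemma mem_twist_of_almost [IsAlgClosed Ω] (p : ℕ) [Fact p.Prime] [CharP Ω p] (hx : x ≠ 0)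
    (hv : Transcendental K (y / x)) {t n : ℤ} {c w : Ω} (hc0 : c ≠ 0) (hc : c ∈ twist K x y t)
    (hw : ∀ i : ℕ, c * w ^ p ^ i ∈ twist K x y (t + (p ^ i : ℕ) * n)) : w ∈ twist K x y n := by
  refine mem_chartRing_of_almost hv p (c := c * x ^ (-t)) (mul_ne_zero hc0 (zpow_ne_zero _ hx)) hc ?_
  intro i
  have h1 := mem_twist.1 (hw i)
  convert h1 using 1
  rw [LinearMap.mulRight_apply, mul_pow, neg_add, zpow_add₀ hx, ← zpow_natCast (x ^ (-n)),
    ← zpow_mul, mul_comm (-n), ← neg_mul_eq_mul_neg]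
  ring

/-- A class `φ` in `H¹(𝒪(n))` with `n < 0` is zero if `c * φ ^ q` is zero in `H¹(𝒪(t + q n))` for
one `c ≠ 0` and all large `q = p ^ e`. For large `q` the degree `t + q n` is negative, so the splitting
`c * φ ^ q = α_q - β_q` is unique and hence compatible with Frobenius: `α_q = c * (α / c) ^ (q / q₁)`
with `α = α_{q₁}`, `q₁` fixed. Thus `α / c` is almost integral, so integral, and its `q₁`-th root gives
the required section. -/
lemma almost_split [IsAlgClosed Ω] (p : ℕ) [Fact p.Prime] [CharP Ω p] (hx : x ≠ 0) (hy : y ≠ 0)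
    (hv : Transcendental K (y / x)) {t n : ℤ} (hn : n < 0) {c φ : Ω} (hc0 : c ≠ 0)
    (hcx : c ∈ twist K x y t) (hcy : c ∈ twist K y x t) (e₀ : ℕ)
    (h : ∀ e ≥ e₀, ∃ α ∈ twist K x y (t + (p ^ e : ℕ) * n), ∃ β ∈ twist K y x (t + (p ^ e : ℕ) * n),
      c * φ ^ p ^ e = α - β) :
    ∃ α ∈ twist K x y n, ∃ β ∈ twist K y x n, φ = α - β := by
  have hp := (Fact.out : p.Prime)
  have hv' : Transcendental K (x / y) := fun h => hv (by simpa using h.inv)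
  choose! α hα β hβ hφ using h
  -- From `e₁` on the degrees `t + p ^ e * n` are negative, as `t < p ^ e` and `n ≤ -1`.
  set e₁ := max e₀ t.toNat with he₁
  have hneg : ∀ e ≥ e₁, t + (p ^ e : ℕ) * n < 0 := by
    intro e he
    have h1 : e < p ^ e := e.lt_pow_self hp.one_lt
    have h2 : t < (p ^ e : ℕ) := by omega
    nlinarith
  have hstep : ∀ e ≥ e₁, α e ^ p = c ^ (p - 1) * α (e + 1) ∧ β e ^ p = c ^ (p - 1) * β (e + 1) := by
    intro e he
    have he0 : e ≥ e₀ := le_trans (le_max_left _ _) he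
    have hcp : c ^ p = c ^ (p - 1) * c := (pow_sub_one_mul hp.ne_zero c).symm
    have h1 : α e ^ p - c ^ (p - 1) * α (e + 1) = β e ^ p - c ^ (p - 1) * β (e + 1) := by
      have h2 : (α e - β e) ^ p = c ^ (p - 1) * (α (e + 1) - β (e + 1)) := by
        rw [← hφ e he0, ← hφ (e + 1) (by omega), mul_pow, ← pow_mul, ← pow_succ, hcp, mul_assoc]
      rw [sub_pow_char] at h2
      linear_combination h2
    have hdeg : ((p - 1 : ℕ) : ℤ) * t + (t + (p ^ (e + 1) : ℕ) * n) = p * (t + (p ^ e : ℕ) * n) := by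
      rw [Nat.cast_sub hp.one_le, pow_succ]; push_cast; ring
    have hmx : α e ^ p - c ^ (p - 1) * α (e + 1) ∈ twist K x y (p * (t + (p ^ e : ℕ) * n)) := by
      refine sub_mem (twist_pow_mem (hα e he0) p) ?_
      rw [← hdeg]
      exact twist_mul_mem hx (twist_pow_mem hcx _) (hα _ (by omega))
    have hmy : β e ^ p - c ^ (p - 1) * β (e + 1) ∈ twist K y x (p * (t + (p ^ e : ℕ) * n)) := by
      refine sub_mem (twist_pow_mem (hβ e he0) p) ?_
      rw [← hdeg]
      exact twist_mul_mem hy (twist_pow_mem hcy _) (hβ _ (by omega))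
    have h0 := twist_inter_eq_zero hx hv
      (mul_neg_of_pos_of_neg (by exact_mod_cast hp.pos) (hneg e he)) hmx (h1 ▸ hmy)
    exact ⟨sub_eq_zero.1 h0, sub_eq_zero.1 (h1 ▸ h0)⟩
  have hiter : ∀ (γ : ℕ → Ω), (∀ e ≥ e₁, γ e ^ p = c ^ (p - 1) * γ (e + 1)) →
      ∀ i, c * (γ e₁ / c) ^ p ^ i = γ (e₁ + i) := by
    intro γ hγ i
    induction i with
    | zero => simp [mul_div_cancel₀, hc0]
    | succ i ih =>
      have h1 := hγ (e₁ + i) (by omega)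
      rw [← ih, mul_pow, ← pow_sub_one_mul hp.ne_zero c, mul_assoc, ← pow_mul, ← pow_succ] at h1
      exact mul_left_cancel₀ (pow_ne_zero _ hc0) h1
  have hroot := fun z : Ω => IsAlgClosed.exists_pow_nat_eq z (pow_pos hp.pos e₁)
  have hdeg : ∀ i : ℕ, t + (p ^ i : ℕ) * ((p ^ e₁ : ℕ) * n) = t + (p ^ (e₁ + i) : ℕ) * n := by
    intro i; push_cast; ring
  have hax : α e₁ / c ∈ twist K x y ((p ^ e₁ : ℕ) * n) := by
    refine mem_twist_of_almost p hx hv hc0 hcx fun i => ?_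
    rw [hiter α (fun e he => (hstep e he).1), hdeg]
    exact hα _ (by omega)
  have hby : β e₁ / c ∈ twist K y x ((p ^ e₁ : ℕ) * n) := by
    refine mem_twist_of_almost p hy hv' hc0 hcy fun i => ?_
    rw [hiter β (fun e he => (hstep e he).2), hdeg]
    exact hβ _ (by omega)
  obtain ⟨a, ha⟩ := hroot (α e₁ / c)
  obtain ⟨b, hb⟩ := hroot (β e₁ / c)
  rw [← ha] at hax
  rw [← hb] at hby
  refine ⟨a, mem_twist_of_pow (pow_pos hp.pos _) hax, b,
    mem_twist_of_pow (pow_pos hp.pos _) hby, ?_⟩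
  rw [← sub_eq_zero]
  refine eq_zero_of_pow_eq_zero (n := p ^ e₁) ?_
  have h2 := hφ e₁ (le_max_left _ _)
  rw [sub_pow_char_pow, sub_pow_char_pow, ha, hb, ← sub_div, ← h2]
  field_simp
  ring

end twist

end

/-! ### Gluing local lifts along the syzygy bundle -/

section
open Polynomial Matrix

section vec
variable {Ω : Type} [Field Ω]

/-- The cross product with `r` sends syzygies of `f` to multiples of `f`: both are orthogonal to the
span of `A` and `r`. The multiple is read off by a vector `g` with `g ⬝ᵥ f = 1`. -/
lemma cross_eq_smul {A f g r : Fin 3 → Ω} (hfr : f ⬝ᵥ r = 0) (hgf : g ⬝ᵥ f = 1) (hAf : A ⬝ᵥ f = 0) :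
    A ⨯₃ r = ((A ⨯₃ r) ⬝ᵥ g) • f := by
  have h : f ⨯₃ (A ⨯₃ r) = 0 := by
    rw [cross_cross_eq_smul_sub_smul', hfr, hAf]; simp
  have h2 : g ⨯₃ (f ⨯₃ (A ⨯₃ r)) = 0 := by rw [h]; simp
  rw [cross_cross_eq_smul_sub_smul', dotProduct_comm f g, hgf, one_smul, sub_eq_zero] at h2
  rw [dotProduct_comm]
  exact h2.symm

/-- The kernel of the cross product with `r` consists of the multiples of `r`. -/
lemma eq_smul_of_cross {A r u : Fin 3 → Ω} (hu : u ⬝ᵥ r = 1) (h : A ⨯₃ r = 0) :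
    A = (A ⬝ᵥ u) • r := by
  have h2 : u ⨯₃ (A ⨯₃ r) = 0 := by rw [h]; simp
  rw [cross_cross_eq_smul_sub_smul', hu, one_smul, sub_eq_zero] at h2
  exact h2

lemma cross_pow (p : ℕ) [Fact p.Prime] [CharP Ω p] (e : ℕ) (a b : Fin 3 → Ω) :
    (a ⨯₃ b) ^ p ^ e = (a ^ p ^ e) ⨯₃ (b ^ p ^ e) := by
  ext i
  fin_cases i <;> simp [cross_apply, sub_pow_char_pow, mul_pow]

lemma dot_pow (p : ℕ) [Fact p.Prime] [CharP Ω p] (e : ℕ) (a b : Fin 3 → Ω) :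
    (a ⬝ᵥ b) ^ p ^ e = (a ^ p ^ e) ⬝ᵥ (b ^ p ^ e) := by
  simp [dotProduct, sum_pow_char_pow, mul_pow]

variable {K : Type} [Field K] [Algebra K Ω] {H : ℤ → Submodule K Ω}

lemma dot_mem
    (hH : ∀ {m n : ℤ} {z w : Ω}, z ∈ H m → w ∈ H n → z * w ∈ H (m + n))
    {a b : Fin 3 → Ω} {s t : ℤ} (d : Fin 3 → ℤ) {n : ℤ} (hn : s + t = n)
    (ha : ∀ i, a i ∈ H (s + d i)) (hb : ∀ i, b i ∈ H (t - d i)) : a ⬝ᵥ b ∈ H n := by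
  refine sum_mem fun i _ => ?_
  have := hH (ha i) (hb i)
  rwa [show s + d i + (t - d i) = n by omega] at this

lemma cross_mem
    (hH : ∀ {m n : ℤ} {z w : Ω}, z ∈ H m → w ∈ H n → z * w ∈ H (m + n))
    {a b : Fin 3 → Ω} {s t : ℤ} (d : Fin 3 → ℤ)
    (ha : ∀ i, a i ∈ H (s - d i)) (hb : ∀ i, b i ∈ H (t - d i)) (i : Fin 3) :
    (a ⨯₃ b) i ∈ H (s + t - (d 0 + d 1 + d 2) + d i) := by
  have h : ∀ j l, a j * b l ∈ H (s + t - (d j + d l)) := fun j l => by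
    have := hH (ha j) (hb l)
    rwa [show s - d j + (t - d l) = s + t - (d j + d l) by ring] at this
  have h' : ∀ j l n, s + t - (d j + d l) = n → a j * b l ∈ H n := fun j l n hn => hn ▸ h j l
  fin_cases i
  · simpa [cross_apply] using sub_mem (h' 1 2 (s + t - (d 0 + d 1 + d 2) + d 0) (by ring))
      (h' 2 1 _ (by ring))
  · simpa [cross_apply] using sub_mem (h' 2 0 (s + t - (d 0 + d 1 + d 2) + d 1) (by ring))
      (h' 0 2 _ (by ring))
  · simpa [cross_apply] using sub_mem (h' 0 1 (s + t - (d 0 + d 1 + d 2) + d 2) (by ring))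
      (h' 1 0 _ (by ring))

lemma cross_mem_add
    (hH : ∀ {m n : ℤ} {z w : Ω}, z ∈ H m → w ∈ H n → z * w ∈ H (m + n))
    {a b : Fin 3 → Ω} {s t : ℤ} (d : Fin 3 → ℤ)
    (ha : ∀ i, a i ∈ H (s + d i)) (hb : ∀ i, b i ∈ H (t + d i)) (i : Fin 3) :
    (a ⨯₃ b) i ∈ H (s + t + (d 0 + d 1 + d 2) - d i) := by
  have h1 : ∀ i, a i ∈ H (s - (-d) i) := fun i => by
    rw [Pi.neg_apply, sub_neg_eq_add]; exact ha i
  have h2 : ∀ i, b i ∈ H (t - (-d) i) := fun i => by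
    rw [Pi.neg_apply, sub_neg_eq_add]; exact hb i
  have h3 := cross_mem hH (-d) h1 h2 i
  simp only [Pi.neg_apply] at h3
  rwa [show s + t - (-d 0 + -d 1 + -d 2) + -d i = s + t + (d 0 + d 1 + d 2) - d i by ring] at h3

end vec

section main
variable {K Ω : Type} [Field K] [Field Ω] [Algebra K Ω] {x y : Ω}

lemma frob_sub_mem (hx : x ≠ 0) {a ε : Fin 3 → Ω} {d : Fin 3 → ℤ} {t m : ℤ} {c : Ω} {q : ℕ}
    (ha : ∀ i, a i ∈ twist K x y (m - d i)) (hc : c ∈ twist K x y t)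
    (hε : ∀ i, ε i ∈ twist K x y (t + q * m - q * d i)) (i : Fin 3) :
    (c • a ^ q - ε) i ∈ twist K x y (t + q * m - q * d i) := by
  refine sub_mem ?_ (hε i)
  have := twist_mul_mem hx hc (twist_pow_mem (ha i) q)
  rwa [show t + q * (m - d i) = t + q * m - q * d i by ring] at this

lemma vec_pow_mem {a : Fin 3 → Ω} {d : Fin 3 → ℤ} {m : ℤ} (q : ℕ)
    (ha : ∀ i, a i ∈ twist K x y (m - d i)) (i : Fin 3) :
    (a ^ q) i ∈ twist K x y (q * m - q * d i) := by
  have := twist_pow_mem (ha i) q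
  rwa [mul_sub] at this

/-- Degree of the image in the quotient line bundle of a Frobenius-twisted syzygy. -/
lemma cross_dot_mem (hx : x ≠ 0) {a ε r g : Fin 3 → Ω} {d : Fin 3 → ℤ} {t m k : ℤ} {c : Ω} {q : ℕ}
    (ha : ∀ i, a i ∈ twist K x y (m - d i)) (hc : c ∈ twist K x y t)
    (hε : ∀ i, ε i ∈ twist K x y (t + q * m - q * d i))
    (hr : ∀ i, r i ∈ twist K x y (k - d i)) (hg : ∀ i, g i ∈ twist K x y (0 - d i)) :
    ((c • a ^ q - ε) ⨯₃ (r ^ q)) ⬝ᵥ g ^ q ∈ twist K x y (t + q * (m + k - (d 0 + d 1 + d 2))) := by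
  have h1 := cross_mem (H := twist K x y) (twist_mul_mem hx) (fun i => q * d i)
    (frob_sub_mem hx ha hc hε) (vec_pow_mem q hr)
  have h2 := vec_pow_mem q hg
  exact dot_mem (H := twist K x y) (twist_mul_mem hx) (fun i => q * d i) (by ring) h1 h2

/-- Degree of the coefficient of a Frobenius-twisted syzygy along `r ^ q`. -/
lemma dot_frob_mem (hx : x ≠ 0) {a ε u : Fin 3 → Ω} {d : Fin 3 → ℤ} {t m k : ℤ} {c : Ω} {q : ℕ}
    (ha : ∀ i, a i ∈ twist K x y (m - d i)) (hc : c ∈ twist K x y t)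
    (hε : ∀ i, ε i ∈ twist K x y (t + q * m - q * d i))
    (hu : ∀ i, u i ∈ twist K x y (-k + d i)) :
    (c • a ^ q - ε) ⬝ᵥ u ^ q ∈ twist K x y (t + q * (m - k)) := by
  have h1 := frob_sub_mem hx ha hc hε
  have h2 : ∀ i, (u ^ q) i ∈ twist K x y (q * (-k) + q * d i) := fun i => by
    rw [← mul_add]; exact twist_pow_mem (hu i) q
  rw [dotProduct_comm]
  exact dot_mem (H := twist K x y) (twist_mul_mem hx) (fun i => q * d i) (by ring) h2 h1

set_option maxHeartbeats 2000000 in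
/-- Let `h` be a form of degree `m` with `c * h ^ q ∈ (f₁^q, f₂^q, f₃^q)` for one `c ≠ 0` and all
large `q = p ^ e`. Then `h = ∑ aᵢ fᵢ` with `aᵢ` global sections of `𝒪(m - dᵢ)` on the absolute integral
closure.

The vectors `g, g'` and `u, u'` express that the `fᵢ`, respectively the `rᵢ`, generate the unit ideal on
each chart. With `D = d₁ + d₂ + d₃`, the relation `r` gives an exact sequence of bundles
`0 → 𝒪(m - k) → Syz(m) → 𝒪(m + k - D) → 0`, with first map `ψ ↦ ψ r` and second map
`A ↦ φ` where `A ⨯₃ r = φ f`. The obstruction to lifting `h` is a class in `H¹(Syz(m))`, and it is killed in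
two steps, through its image `φ` in `H¹(𝒪(m + k - D))` and then a class `ψ` in `H¹(𝒪(m - k))`. In
nonnegative degree `H¹` vanishes; in negative degree `almost_split` applies. The hypothesis
`2 * k ≤ D` enters for `ψ`: if `m < k`, then also `m + k < D`, so that the quotient bundle has no sections
after a high Frobenius pull-back and the splitting of `c * (a' - b') ^ q` comes from `𝒪(m - k)`. -/
theorem exists_glued [IsAlgClosed Ω] (p : ℕ) [Fact p.Prime] [CharP Ω p] (hx : x ≠ 0) (hy : y ≠ 0)
    (hv : Transcendental K (y / x)) (d : Fin 3 → ℤ) (k m t : ℤ)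
    (hk : 2 * k ≤ d 0 + d 1 + d 2) {f r : Fin 3 → Ω}
    (hfx : ∀ i, f i ∈ twist K x y (d i)) (hfy : ∀ i, f i ∈ twist K y x (d i))
    (hrx : ∀ i, r i ∈ twist K x y (k - d i)) (hry : ∀ i, r i ∈ twist K y x (k - d i))
    (hfr : f ⬝ᵥ r = 0)
    {g g' u u' : Fin 3 → Ω}
    (hg : ∀ i, g i ∈ twist K x y (0 - d i)) (hg' : ∀ i, g' i ∈ twist K y x (0 - d i))
    (hgf : g ⬝ᵥ f = 1) (hgf' : g' ⬝ᵥ f = 1)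
    (hu : ∀ i, u i ∈ twist K x y (-k + d i)) (hu' : ∀ i, u' i ∈ twist K y x (-k + d i))
    (hur : u ⬝ᵥ r = 1) (hur' : u' ⬝ᵥ r = 1)
    {h c : Ω} (hhx : h ∈ twist K x y m) (hhy : h ∈ twist K y x m) (hc0 : c ≠ 0)
    (hcx : c ∈ twist K x y t) (hcy : c ∈ twist K y x t) (e₀ : ℕ)
    (htight : ∀ e ≥ e₀, ∃ ε : Fin 3 → Ω,
      (∀ i, ε i ∈ twist K x y (t + (p ^ e : ℕ) * m - (p ^ e : ℕ) * d i)) ∧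
      (∀ i, ε i ∈ twist K y x (t + (p ^ e : ℕ) * m - (p ^ e : ℕ) * d i)) ∧
      c * h ^ p ^ e = ε ⬝ᵥ f ^ p ^ e) :
    ∃ a : Fin 3 → Ω, (∀ i, a i ∈ twist K x y (m - d i)) ∧ (∀ i, a i ∈ twist K y x (m - d i)) ∧
      a ⬝ᵥ f = h := by
  have hp := (Fact.out : p.Prime)
  set D := d 0 + d 1 + d 2 with hD
  choose! ε hεx hεy hε using htight
  have Xm : ∀ {m n : ℤ} {z w : Ω}, z ∈ twist K x y m → w ∈ twist K x y n →
    z * w ∈ twist K x y (m + n) := twist_mul_mem hx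
  have Ym : ∀ {m n : ℤ} {z w : Ω}, z ∈ twist K y x m → w ∈ twist K y x n →
    z * w ∈ twist K y x (m + n) := twist_mul_mem hy
  have Om : ∀ {m n : ℤ} {z w : Ω}, z ∈ overlap K x y m → w ∈ overlap K x y n →
    z * w ∈ overlap K x y (m + n) := overlap_mul_mem hx
  have hox : ∀ {n z}, z ∈ twist K x y n → z ∈ overlap K x y n := fun h => twist_le_overlap h
  have hoy : ∀ {n z}, z ∈ twist K y x n → z ∈ overlap K x y n := fun h => twist_le_overlap' hx hy h
  have hfrq : ∀ e : ℕ, (f ^ p ^ e) ⬝ᵥ (r ^ p ^ e) = 0 := fun e => by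
    rw [← dot_pow, hfr, zero_pow (pow_pos hp.pos _).ne']
  have hdotq : ∀ {a b : Fin 3 → Ω} (e : ℕ), a ⬝ᵥ b = 1 → (a ^ p ^ e) ⬝ᵥ (b ^ p ^ e) = 1 :=
    fun e h => by rw [← dot_pow, h, one_pow]
  have hsubq : ∀ (a b : Fin 3 → Ω) (e : ℕ), (a - b) ^ p ^ e = a ^ p ^ e - b ^ p ^ e :=
    fun a b e => by ext i; simp [sub_pow_char_pow]
  have hAf : ∀ {a : Fin 3 → Ω} (e : ℕ), e ≥ e₀ → a ⬝ᵥ f = h →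
      (c • a ^ p ^ e - ε e) ⬝ᵥ f ^ p ^ e = 0 := by
    intro a e he ha
    rw [sub_dotProduct, smul_dotProduct, ← dot_pow, ha, smul_eq_mul, hε e he, sub_self]
  have hcrossx : ∀ {a : Fin 3 → Ω} (e : ℕ), e ≥ e₀ → (∀ i, a i ∈ twist K x y (m - d i)) →
      ((c • a ^ p ^ e - ε e) ⨯₃ (r ^ p ^ e)) ⬝ᵥ g ^ p ^ e ∈
        twist K x y (t + (p ^ e : ℕ) * (m + k - D)) := by
    intro a e he ha
    exact cross_dot_mem hx ha hcx (hεx e he) hrx hg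
  have hcrossy : ∀ {a : Fin 3 → Ω} (e : ℕ), e ≥ e₀ → (∀ i, a i ∈ twist K y x (m - d i)) →
      ((c • a ^ p ^ e - ε e) ⨯₃ (r ^ p ^ e)) ⬝ᵥ g' ^ p ^ e ∈
        twist K y x (t + (p ^ e : ℕ) * (m + k - D)) := by
    intro a e he ha
    exact cross_dot_mem hy ha hcy (hεy e he) hry hg'
  set a : Fin 3 → Ω := h • g with ha
  set b : Fin 3 → Ω := h • g' with hb
  -- The vectors `a` and `b` lift `h` to the two charts; their difference is a syzygy on the overlap.
  have hax : ∀ i, a i ∈ twist K x y (m - d i) := fun i => by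
    have := Xm hhx (hg i)
    rwa [show m + (0 - d i) = m - d i by ring] at this
  have hby : ∀ i, b i ∈ twist K y x (m - d i) := fun i => by
    have := Ym hhy (hg' i)
    rwa [show m + (0 - d i) = m - d i by ring] at this
  have haf : a ⬝ᵥ f = h := by rw [ha, smul_dotProduct, hgf, smul_eq_mul, mul_one]
  have hbf : b ⬝ᵥ f = h := by rw [hb, smul_dotProduct, hgf', smul_eq_mul, mul_one]
  have habo : ∀ i, (a - b) i ∈ overlap K x y (m - d i) := fun i =>
    sub_mem (hox (hax i)) (hoy (hby i))
  clear_value a b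
  -- The image of the syzygy `a - b` in the quotient bundle `𝒪(m + k - D)`.
  set φ := ((a - b) ⨯₃ r) ⬝ᵥ g with hφ
  have hφ' : (a - b) ⨯₃ r = φ • f := cross_eq_smul hfr hgf (by rw [sub_dotProduct, haf, hbf, sub_self])
  obtain ⟨α, hα, β, hβ, hαβ⟩ : ∃ α ∈ twist K x y (m + k - D), ∃ β ∈ twist K y x (m + k - D),
      φ = α - β := by
    rcases lt_or_ge (m + k - D) 0 with hneg | hnn
    · refine almost_split p hx hy hv hneg hc0 hcx hcy e₀ fun e he => ?_
      refine ⟨_, hcrossx e he hax, _, hcrossy e he hby, ?_⟩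
      have h1 := cross_eq_smul (hfrq e) (hdotq e hgf) (hAf e he haf)
      have h2 := cross_eq_smul (hfrq e) (hdotq e hgf') (hAf e he hbf)
      have h3 : c • ((a - b) ⨯₃ r) ^ p ^ e = (c • a ^ p ^ e - ε e) ⨯₃ (r ^ p ^ e) -
          (c • b ^ p ^ e - ε e) ⨯₃ (r ^ p ^ e) := by
        rw [cross_pow, hsubq]
        simp [smul_sub]
      have h4 := congrArg (fun w => w ⬝ᵥ g ^ p ^ e) h3
      simp only [smul_dotProduct, sub_dotProduct] at h4
      rw [← dot_pow, ← hφ, smul_eq_mul] at h4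
      rw [h4]
      congr 1
      conv_lhs => rw [h2]
      rw [smul_dotProduct, dotProduct_comm (f ^ p ^ e), hdotq e hgf, smul_eq_mul, mul_one]
    · exact overlap_split p hx hy hnn (dot_mem (H := overlap K x y) Om d (by ring)
        (cross_mem (H := overlap K x y) Om d habo fun i => hox (hrx i)) fun i => hox (hg i))
  -- On the charts, `u ⨯₃ f` and `u' ⨯₃ f` are syzygies mapping to the generator of the quotient;
  -- subtracting multiples of them makes the image of `a' - b'` vanish.
  set s := u ⨯₃ f with hs
  set s' := u' ⨯₃ f with hs'
  have hsf : s ⬝ᵥ f = 0 := by rw [hs, dotProduct_comm]; exact dot_cross_self u f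
  have hsf' : s' ⬝ᵥ f = 0 := by rw [hs', dotProduct_comm]; exact dot_cross_self u' f
  have hsr : s ⨯₃ r = f := by
    rw [hs, cross_cross_eq_smul_sub_smul, hur, hfr]; simp
  have hsr' : s' ⨯₃ r = f := by
    rw [hs', cross_cross_eq_smul_sub_smul, hur', hfr]; simp
  have hsx : ∀ i, s i ∈ twist K x y (D - k - d i) := fun i => by
    have := cross_mem_add (H := twist K x y) Xm d hu (t := 0)
      (fun i => by rw [zero_add]; exact hfx i) i
    rwa [show -k + 0 + (d 0 + d 1 + d 2) - d i = D - k - d i by rw [hD]; ring] at this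
  have hsy : ∀ i, s' i ∈ twist K y x (D - k - d i) := fun i => by
    have := cross_mem_add (H := twist K y x) Ym d hu' (t := 0)
      (fun i => by rw [zero_add]; exact hfy i) i
    rwa [show -k + 0 + (d 0 + d 1 + d 2) - d i = D - k - d i by rw [hD]; ring] at this
  clear_value s s' φ
  set a' := a - α • s with ha'
  set b' := b - β • s' with hb'
  have hax' : ∀ i, a' i ∈ twist K x y (m - d i) := fun i => by
    have := Xm hα (hsx i)
    rw [show m + k - D + (D - k - d i) = m - d i by ring] at this
    exact sub_mem (hax i) this
  have hby' : ∀ i, b' i ∈ twist K y x (m - d i) := fun i => by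
    have := Ym hβ (hsy i)
    rw [show m + k - D + (D - k - d i) = m - d i by ring] at this
    exact sub_mem (hby i) this
  have haf' : a' ⬝ᵥ f = h := by rw [ha', sub_dotProduct, haf, smul_dotProduct, hsf]; simp
  have hbf' : b' ⬝ᵥ f = h := by rw [hb', sub_dotProduct, hbf, smul_dotProduct, hsf']; simp
  have hcr : (a' - b') ⨯₃ r = 0 := by
    have : a' - b' = (a - b) - (α • s - β • s') := by rw [ha', hb']; abel
    rw [this]
    simp only [map_sub, map_smul, LinearMap.sub_apply, LinearMap.smul_apply] at hφ' ⊢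
    rw [hφ', hsr, hsr', hαβ, sub_smul, sub_self]
  clear_value a' b'
  set ψ := (a' - b') ⬝ᵥ u with hψ
  -- Now `a' - b'` comes from the subbundle `𝒪(m - k)`, with coefficient `ψ`.
  have hψ' : a' - b' = ψ • r := eq_smul_of_cross hur hcr
  obtain ⟨γ, hγ, δ, hδ, hγδ⟩ : ∃ γ ∈ twist K x y (m - k), ∃ δ ∈ twist K y x (m - k),
      ψ = γ - δ := by
    rcases lt_or_ge (m - k) 0 with hneg | hnn
    · refine almost_split p hx hy hv hneg hc0 hcx hcy (max e₀ t.toNat) fun e he => ?_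
      have he0 : e ≥ e₀ := le_trans (le_max_left _ _) he
      have hneg' : t + (p ^ e : ℕ) * (m + k - D) < 0 := by
        have h1 : e < p ^ e := e.lt_pow_self hp.one_lt
        have h2 : t < (p ^ e : ℕ) := by omega
        have h3 : m + k - D ≤ -1 := by omega
        nlinarith
      have h1 := cross_eq_smul (hfrq e) (hdotq e hgf) (hAf e he0 haf')
      have h2 := cross_eq_smul (hfrq e) (hdotq e hgf') (hAf e he0 hbf')
      have h3 : (c • a' ^ p ^ e - ε e) ⨯₃ (r ^ p ^ e) - (c • b' ^ p ^ e - ε e) ⨯₃ (r ^ p ^ e) = 0 := by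
        have : c • ((a' - b') ⨯₃ r) ^ p ^ e = (c • a' ^ p ^ e - ε e) ⨯₃ (r ^ p ^ e) -
          (c • b' ^ p ^ e - ε e) ⨯₃ (r ^ p ^ e) := by
          rw [cross_pow, hsubq]
          simp [smul_sub]
        rw [← this, hcr, zero_pow (pow_pos hp.pos _).ne', smul_zero]
      rw [sub_eq_zero] at h3
      have h4 : ((c • a' ^ p ^ e - ε e) ⨯₃ (r ^ p ^ e)) ⬝ᵥ g ^ p ^ e =
          ((c • b' ^ p ^ e - ε e) ⨯₃ (r ^ p ^ e)) ⬝ᵥ g' ^ p ^ e := by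
        rw [h3]
        conv_lhs => rw [h2]
        rw [smul_dotProduct, dotProduct_comm (f ^ p ^ e), hdotq e hgf, smul_eq_mul, mul_one]
      -- The images of the two twisted local syzygies agree, so they form a global section of
      -- negative degree.
      have h5 := twist_inter_eq_zero hx hv hneg' (hcrossx e he0 hax') (h4 ▸ hcrossy e he0 hby')
      rw [h5, zero_smul] at h1
      rw [← h4, h5, zero_smul] at h2
      have h6 := eq_smul_of_cross (hdotq e hur) h1
      have h7 := eq_smul_of_cross (hdotq e hur') h2
      refine ⟨_, dot_frob_mem hx hax' hcx (hεx e he0) hu,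
        _, dot_frob_mem hy hby' hcy (hεy e he0) hu', ?_⟩
      have h8 : c • (a' - b') ^ p ^ e = (c • a' ^ p ^ e - ε e) - (c • b' ^ p ^ e - ε e) := by
        rw [hsubq, smul_sub]; abel
      have h9 := congrArg (fun w => w ⬝ᵥ u ^ p ^ e) h8
      simp only [smul_dotProduct] at h9
      rw [← dot_pow, ← hψ, smul_eq_mul, sub_dotProduct] at h9
      rw [h9]
      congr 1
      conv_lhs => rw [h7]
      rw [smul_dotProduct, dotProduct_comm (r ^ p ^ e), hdotq e hur, smul_eq_mul, mul_one]
    · refine overlap_split p hx hy hnn ?_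
      rw [hψ, dotProduct_comm]
      exact dot_mem (H := overlap K x y) Om d (by ring) (fun i => hox (hu i)) fun i => sub_mem (hox (hax' i)) (hoy (hby' i))
  refine ⟨a' - γ • r, fun i => ?_, fun i => ?_, ?_⟩
  · have := Xm hγ (hrx i)
    rw [show m - k + (k - d i) = m - d i by ring] at this
    exact sub_mem (hax' i) this
  · have h1 : a' - γ • r = b' - δ • r := by
      have : a' = b' + ψ • r := by rw [← hψ']; abel
      rw [this, hγδ, sub_smul]; abel
    rw [h1]
    have := Ym hδ (hry i)
    rw [show m - k + (k - d i) = m - d i by ring] at this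
    exact sub_mem (hby' i) this
  · rw [sub_dotProduct, smul_dotProduct, haf', dotProduct_comm, hfr, smul_zero, sub_zero]

end main

end

/-! ### Homogeneous components as a generating polynomial -/

section
open Polynomial

section graded
variable {K R : Type} [Field K] [CommRing R] [Algebra K R] (A : ℕ → Submodule K R) [GradedAlgebra A]

/-- The algebra homomorphism from the external direct sum of the `A i` to `R[X]` sending `a` of degree
`i` to `a X^i`. -/
noncomputable def gradedPolyAux : DirectSum ℕ (fun i => A i) →ₐ[K] R[X] :=
  DirectSum.toAlgebra K (fun i => A i)
    (fun i => ((monomial i : R →ₗ[R] R[X]).restrictScalars K).comp (A i).subtype)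
    (by change monomial 0 (1 : R) = 1; simp)
    (by
      intro i j a b
      change monomial (i + j) ((a : R) * (b : R)) = monomial i (a : R) * monomial j (b : R)
      rw [monomial_mul_monomial])

lemma gradedPolyAux_of (i : ℕ) (a : A i) :
    gradedPolyAux A (DirectSum.of (fun i => A i) i a) = monomial i (a : R) := by
  rw [gradedPolyAux, DirectSum.toAlgebra_apply]
  exact DirectSum.toAddMonoid_of
    (fun i => (((monomial i : R →ₗ[R] R[X]).restrictScalars K).comp (A i).subtype).toAddMonoidHom) i a

/-- The homomorphism `R → R[X]` sending `a` to the generating polynomial `∑ aₙ X^n` of its homogeneous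
components. -/
noncomputable def gradedPoly : R →ₐ[K] R[X] :=
  (gradedPolyAux A).comp (DirectSum.decomposeAlgEquiv A).toAlgHom

variable {A}

lemma gradedPoly_of_mem {n : ℕ} {a : R} (ha : a ∈ A n) : gradedPoly A a = monomial n a := by
  have h : (DirectSum.decomposeAlgEquiv A).toAlgHom a = DirectSum.of (fun i => A i) n ⟨a, ha⟩ :=
    DirectSum.decompose_of_mem A ha
  rw [gradedPoly, AlgHom.comp_apply, h, gradedPolyAux_of]

lemma coeff_gradedPoly (a : R) (n : ℕ) :
    (gradedPoly A a).coeff n = DirectSum.decompose A a n := by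
  classical
  conv_lhs => rw [← DirectSum.sum_support_decompose A a]
  rw [map_sum, finsetSum_coeff]
  simp_rw [gradedPoly_of_mem (SetLike.coe_mem _), coeff_monomial]
  simp
  intro h; simp [h]

lemma coeff_gradedPoly_mem (a : R) (n : ℕ) : (gradedPoly A a).coeff n ∈ A n := by
  rw [coeff_gradedPoly]; exact SetLike.coe_mem _

lemma gradedPoly_injective : Function.Injective (gradedPoly A) := by
  intro a b h
  apply (DirectSum.decompose A).injective
  ext n
  rw [← coeff_gradedPoly, h, coeff_gradedPoly]

/-- A homogeneous element of an ideal generated by homogeneous `f i` is a combination of the `f i` with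
homogeneous coefficients of the expected degrees. -/
lemma exists_homogeneous_rep {ι : Type} [Fintype ι] {f : ι → R} {d : ι → ℕ} (hf : ∀ i, f i ∈ A (d i)) {n : ℕ}
    {z : R} (hz : z ∈ A n) (h : z ∈ Ideal.span (Set.range f)) :
    ∃ g : ι → R, (∀ i, d i ≤ n → g i ∈ A (n - d i)) ∧ (∀ i, n < d i → g i = 0) ∧
      z = ∑ i, g i * f i := by
  obtain ⟨b, hb⟩ := (Ideal.mem_span_range_iff_exists_fun).1 h
  refine ⟨fun i => if d i ≤ n then DirectSum.decompose A (b i) (n - d i) else 0, ?_, ?_, ?_⟩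
  · intro i hi; simp [hi]
  · intro i hi; simp [hi]
  · have h1 : z = DirectSum.decompose A z n := by
      rw [DirectSum.decompose_of_mem_same A hz]
    conv_lhs => rw [h1, ← hb, DirectSum.decompose_sum, DFinsupp.finsetSum_apply, AddSubmonoidClass.coe_finsetSum]
    refine Finset.sum_congr rfl fun i _ => ?_
    dsimp only
    split_ifs with hi
    · exact DirectSum.coe_decompose_mul_of_right_mem_of_le A (hf i) hi
    · rw [zero_mul]
      exact DirectSum.coe_decompose_mul_of_right_mem_of_not_le A (hf i) hi

end graded

end

/-! ### Homogeneous elements as twisted sections -/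

section
open Polynomial

section
variable {K R Ω : Type} [Field K] [CommRing R] [Algebra K R] {A : ℕ → Submodule K R} [GradedAlgebra A]
  [Field Ω] [Algebra K Ω] [Algebra R Ω] [IsScalarTower K R Ω]

lemma transcendental_div {X Y : Ω} (hX : X ≠ 0) (h : AlgebraicIndependent K ![X, Y]) :
    Transcendental K (Y / X) := by
  rintro ⟨P, hP0, hP⟩
  apply hP0
  let Q : MvPolynomial (Fin 2) K := ∑ i ∈ Finset.range (P.natDegree + 1),
    MvPolynomial.C (P.coeff i) * MvPolynomial.X 1 ^ i * MvPolynomial.X 0 ^ (P.natDegree - i)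
  have hQ : MvPolynomial.aeval ![X, Y] Q = 0 := by
    have h1 : MvPolynomial.aeval ![X, Y] Q = X ^ P.natDegree * aeval (Y / X) P := by
      rw [aeval_eq_sum_range, Finset.mul_sum, map_sum]
      refine Finset.sum_congr rfl fun i hi => ?_
      have hi' : i ≤ P.natDegree := by have := Finset.mem_range.1 hi; omega
      simp only [map_mul, map_pow, MvPolynomial.aeval_X, MvPolynomial.aeval_C, Algebra.smul_def]
      simp only [Matrix.cons_val_zero, Matrix.cons_val_one]
      rw [← Nat.sub_add_cancel hi', pow_add, Nat.add_sub_cancel, div_pow]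
      field_simp
    rw [h1, hP, mul_zero]
  have hQ0 : Q = 0 := (algebraicIndependent_iff_injective_aeval.1 h) (by rw [hQ, map_zero])
  have h2 := congrArg (MvPolynomial.aeval ![(1 : K[X]), Polynomial.X]) hQ0
  rw [map_zero, map_sum] at h2
  rw [P.as_sum_range_C_mul_X_pow, ← h2]
  refine Finset.sum_congr rfl fun i _ => ?_
  simp

/-- Homogeneous elements of degree `n` are sections of `𝒪(n)` when `R` is integral over `K[x, y]` with
`x`, `y` of degree one. -/
lemma mem_twist_of_mem {x y : R} (hx : x ∈ A 1) (hy : y ∈ A 1)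
    (hfin_int : (MvPolynomial.aeval ![x, y] : MvPolynomial (Fin 2) K →ₐ[K] R).toRingHom.IsIntegral)
    (hX : algebraMap R Ω x ≠ 0) {n : ℕ} {a : R} (ha : a ∈ A n) :
    algebraMap R Ω a ∈ twist K (algebraMap R Ω x) (algebraMap R Ω y) n := by
  set X₀ := algebraMap R Ω x
  set Y₀ := algebraMap R Ω y
  set V := Y₀ / X₀
  let D := Algebra.adjoin K {V}
  let Θ : R →ₐ[K] Polynomial Ω :=
    ((Polynomial.aeval (C X₀⁻¹ * X : Polynomial Ω) : R[X] →ₐ[R] Polynomial Ω).restrictScalars K).comp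
      (gradedPoly A)
  have hΘ : ∀ {n : ℕ} {a : R}, a ∈ A n → Θ a = C (algebraMap R Ω a * X₀ ^ (-(n : ℤ))) * X ^ n := by
    intro n a ha
    change Polynomial.aeval (C X₀⁻¹ * X : Polynomial Ω) (gradedPoly A a) = _
    rw [gradedPoly_of_mem ha, aeval_monomial, mul_pow, Polynomial.algebraMap_apply, zpow_neg,
      zpow_natCast, C_mul, ← C_pow, inv_pow, mul_assoc]
  let v : D := ⟨V, Algebra.self_mem_adjoin_singleton K V⟩
  let σ : MvPolynomial (Fin 2) K →ₐ[K] D[X] := MvPolynomial.aeval ![X, C v * X]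
  have hcomp : (Θ : R →+* Polynomial Ω).comp
      (MvPolynomial.aeval ![x, y] : MvPolynomial (Fin 2) K →ₐ[K] R).toRingHom =
      (mapRingHom (algebraMap D Ω)).comp (σ : MvPolynomial (Fin 2) K →+* D[X]) := by
    refine MvPolynomial.ringHom_ext ?_ ?_
    · intro c
      simp [σ]
    · intro i
      fin_cases i
      · simp only [RingHom.comp_apply]
        simp [σ, hΘ hx]
        rw [← C_mul, mul_inv_cancel₀ hX, C_1]
      · simp only [RingHom.comp_apply]
        simp [σ, hΘ hy]
        rw [← C_mul, ← div_eq_mul_inv]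
  obtain ⟨P, hP, hP0⟩ := hfin_int a
  let _ := Polynomial.algebra D Ω
  have h1 : IsIntegral D[X] (Θ a) := by
    refine ⟨P.map (σ : MvPolynomial (Fin 2) K →+* D[X]), hP.map _, ?_⟩
    have h2 := congrArg (Θ : R →+* Polynomial Ω) hP0
    rw [hom_eval₂, hcomp, map_zero] at h2
    rw [eval₂_map]
    exact h2
  have h3 := (Polynomial.isIntegral_iff_isIntegral_coeff.1 h1) n
  rw [hΘ ha, coeff_C_mul_X_pow, if_pos rfl] at h3
  exact h3

lemma isIntegral_of_adjoin_pair {x y : R} {z : Ω}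
    (h : IsIntegral (Algebra.adjoin K {algebraMap R Ω x, algebraMap R Ω y}) z) : IsIntegral R z := by
  obtain ⟨G, hG, hG0⟩ := h
  have hle : Algebra.adjoin K {algebraMap R Ω x, algebraMap R Ω y} ≤
      (integralClosure R Ω).restrictScalars K := by
    refine Algebra.adjoin_le ?_
    rintro w (rfl | rfl)
    · exact isIntegral_algebraMap
    · exact isIntegral_algebraMap
  refine IsIntegral.of_aeval_monic_of_isIntegral_coeff (hG.map (algebraMap _ Ω)) ?_ ?_ ?_
  · intro h
    rw [hG.natDegree_map] at h
    rw [hG.natDegree_eq_zero.1 h] at hG0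
    simp at hG0
  · rw [eval_map, hG0]
    exact isIntegral_zero
  · intro i
    rw [coeff_map]
    exact hle (SetLike.coe_mem _)

end

end

/-! ### Linear Noether normalization -/

section
open Polynomial

lemma coeff_prod_of_natDegree_le_aux {ι B : Type*} [CommRing B] (s : Finset ι) (F : ι → B[X])
    (n : ι → ℕ) (h : ∀ i, (F i).natDegree ≤ n i) :
    (∏ i ∈ s, F i).natDegree ≤ ∑ i ∈ s, n i ∧
      (∏ i ∈ s, F i).coeff (∑ i ∈ s, n i) = ∏ i ∈ s, (F i).coeff (n i) := by
  classical
  induction s using Finset.induction with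
  | empty => simp
  | insert a s ha ih =>
    rw [Finset.prod_insert ha, Finset.sum_insert ha, Finset.prod_insert ha]
    exact ⟨natDegree_mul_le_of_le (h a) ih.1, by
      rw [coeff_mul_add_eq_of_natDegree_le (h a) ih.1, ih.2]⟩

/-- Substituting `qᵢ + μᵢ X` in a form `H` of degree `d` gives a polynomial of degree at most `d` in `X`
whose coefficient at `X^d` is `H(μ)`. -/
lemma coeff_aeval_linear {ι K B : Type*} [Finite ι] [Field K] [CommRing B] [Algebra K B]
    {H : MvPolynomial ι K} {d : ℕ} (hH : H.IsHomogeneous d) (q : ι → B) (μ : ι → K) :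
    (MvPolynomial.aeval (fun i => C (q i) + C (algebraMap K B (μ i)) * X) H : B[X]).natDegree ≤ d ∧
    (MvPolynomial.aeval (fun i => C (q i) + C (algebraMap K B (μ i)) * X) H : B[X]).coeff d =
      algebraMap K B (MvPolynomial.eval μ H) := by
  cases nonempty_fintype ι
  have key : ∀ m ∈ H.support,
      (∏ i, (C (q i) + C (algebraMap K B (μ i)) * X) ^ m i : B[X]).natDegree ≤ d ∧
      (∏ i, (C (q i) + C (algebraMap K B (μ i)) * X) ^ m i : B[X]).coeff d =
        algebraMap K B (∏ i, μ i ^ m i) := by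
    intro m hm
    have hlin : ∀ i, (C (q i) + C (algebraMap K B (μ i)) * X : B[X]).natDegree ≤ 1 := by
      intro i
      rw [add_comm]
      exact natDegree_linear_le
    have hd : ∑ i, m i = d := by
      have := hH (MvPolynomial.mem_support_iff.1 hm)
      rw [← this, Finsupp.weight_apply, Finsupp.sum_fintype] <;> simp
    have := coeff_prod_of_natDegree_le_aux Finset.univ
      (fun i => (C (q i) + C (algebraMap K B (μ i)) * X : B[X]) ^ m i) (fun i => m i)
      (fun i => by simpa using natDegree_pow_le_of_le (m i) (hlin i))
    rw [hd] at this
    refine ⟨this.1, this.2.trans ?_⟩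
    rw [map_prod]
    refine Finset.prod_congr rfl fun i _ => ?_
    have h2 := coeff_pow_of_natDegree_le (m := m i) (hlin i)
    rw [mul_one] at h2
    rw [h2]
    simp
  rw [MvPolynomial.aeval_def, MvPolynomial.eval₂_eq']
  constructor
  · refine natDegree_sum_le_of_forall_le _ _ fun m hm => ?_
    rw [← Algebra.smul_def]
    exact (natDegree_smul_le _ _).trans (key m hm).1
  · rw [finsetSum_coeff, MvPolynomial.eval_eq', map_sum]
    refine Finset.sum_congr rfl fun m hm => ?_
    rw [← Algebra.smul_def, coeff_smul, (key m hm).2, Algebra.smul_def, map_mul]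

/-- An injective integral extension preserves the Krull dimension: going up and incomparability. -/
lemma ringKrullDim_eq_of_isIntegral {B R : Type*} [CommRing B] [CommRing R] [Algebra B R]
    [Algebra.IsIntegral B R] (hinj : Function.Injective (algebraMap B R)) :
    ringKrullDim B = ringKrullDim R := by
  apply le_antisymm
  · unfold ringKrullDim Order.krullDim
    refine iSup_le fun l => ?_
    obtain ⟨Q, -, hQ, hQl⟩ := Ideal.exists_ideal_over_prime_of_isIntegral
      (S := R) (RelSeries.head l).asIdeal ⊥ (by
        rw [← RingHom.ker_eq_comap_bot, (RingHom.injective_iff_ker_eq_bot _).1 hinj]; exact bot_le)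
    have : Q.LiesOver (RelSeries.head l).asIdeal := ⟨hQl.symm⟩
    obtain ⟨L, hL, -⟩ := Ideal.exists_ltSeries_of_hasGoingUp l Q
    rw [← hL]
    exact le_iSup (fun L : LTSeries (PrimeSpectrum R) => ((L.length : ℕ) : WithBot ℕ∞)) L
  · refine Order.krullDim_le_of_strictMono (PrimeSpectrum.comap (algebraMap B R)) ?_
    intro P Q hPQ
    exact Ideal.IsIntegral.comap_lt_comap hPQ

section
variable {K R : Type} [Field K] [CommRing R] [Algebra K R] {A : ℕ → Submodule K R} [GradedAlgebra A]

lemma isIntegral_of_forall_isIntegralElem {S σ : Type*} [CommRing S] (φ : S →+* R) (κ : K →+* S)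
    (hκ : φ.comp κ = algebraMap K R) {g : σ → R}
    (hg : (MvPolynomial.aeval g : MvPolynomial σ K →ₐ[K] R).toRingHom.IsIntegral)
    (h : ∀ i, φ.IsIntegralElem (g i)) : φ.IsIntegral := by
  let _ := φ.toAlgebra
  have hmem : ∀ G : MvPolynomial σ K, IsIntegral S (MvPolynomial.aeval g G) := by
    intro G
    induction G using MvPolynomial.induction_on with
    | C c =>
      rw [MvPolynomial.aeval_C, ← hκ]
      exact isIntegral_algebraMap (R := S) (x := κ c)
    | add P Q hP hQ => rw [map_add]; exact hP.add hQ
    | mul_X P i hP => rw [map_mul, MvPolynomial.aeval_X]; exact hP.mul (h i)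
  intro a
  obtain ⟨P, hP, hP0⟩ := hg a
  change IsIntegral S a
  rcases subsingleton_or_nontrivial R with hR | hR
  · rw [Subsingleton.elim a 0]; exact isIntegral_zero
  refine IsIntegral.of_aeval_monic_of_isIntegral_coeff
    (hP.map (MvPolynomial.aeval g : MvPolynomial σ K →ₐ[K] R).toRingHom) ?_ ?_ ?_
  · intro h
    rw [hP.natDegree_map] at h
    rw [hP.natDegree_eq_zero.1 h] at hP0
    simp at hP0
  · rw [eval_map, hP0]
    exact isIntegral_zero
  · intro i
    rw [coeff_map]
    exact hmem _

lemma aeval_mem_of_isHomogeneous {σ : Type*} {g : σ → R} (hg : ∀ i, g i ∈ A 1) {d : ℕ}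
    {H : MvPolynomial σ K} (hH : H.IsHomogeneous d) : MvPolynomial.aeval g H ∈ A d := by
  rw [MvPolynomial.aeval_def, MvPolynomial.eval₂_eq]
  refine Submodule.sum_mem _ fun m hm => ?_
  rw [← Algebra.smul_def]
  refine Submodule.smul_mem _ _ ?_
  have hd := hH (MvPolynomial.mem_support_iff.1 hm)
  have hw : Finsupp.weight 1 m = ∑ i ∈ m.support, m i := by
    simp [Finsupp.weight_apply, Finsupp.sum]
  rw [← hd, hw]
  refine SetLike.prod_mem_graded A (fun i => m i) (fun i => g i ^ m i) fun i _ => ?_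
  simpa using SetLike.pow_mem_graded (m i) (hg i)

lemma aeval_homogeneousComponent_eq_zero {σ : Type*} {g : σ → R} (hg : ∀ i, g i ∈ A 1)
    {G : MvPolynomial σ K} (hG : MvPolynomial.aeval g G = 0) (d : ℕ) :
    MvPolynomial.aeval g (MvPolynomial.homogeneousComponent d G) = 0 := by
  have hmem : ∀ n, MvPolynomial.aeval g (MvPolynomial.homogeneousComponent n G) ∈ A n := fun n =>
    aeval_mem_of_isHomogeneous hg (MvPolynomial.homogeneousComponent_isHomogeneous n G)
  by_cases hd : d ∈ Finset.range (G.totalDegree + 1)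
  · have h1 := hG
    rw [← MvPolynomial.sum_homogeneousComponent G, map_sum] at h1
    have h2 := congrArg (fun z => ((DirectSum.decompose A z d : A d) : R)) h1
    simp only [DirectSum.decompose_sum, DirectSum.decompose_zero] at h2
    rw [DFinsupp.finsetSum_apply, AddSubmonoidClass.coe_finsetSum,
      Finset.sum_eq_single_of_mem d hd] at h2
    · rwa [DirectSum.decompose_of_mem_same A (hmem d)] at h2
    · intro b _ hb
      exact DirectSum.decompose_of_mem_ne A (hmem b) hb
  · rw [MvPolynomial.homogeneousComponent_eq_zero, map_zero]
    simpa using hd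

/-- The reduction step of linear Noether normalization. A dependence between the `g i` can be taken to be
a form `H`; with `H(μ) ≠ 0` and `μ j ≠ 0`, the element `T = g j / μ j` is integral over the algebra
generated by the `g i - μ i T`, `i ≠ j`. -/
lemma exists_fewer_generators [Infinite K] [Nontrivial R] {N : ℕ} {g : Fin N → R} (hg : ∀ i, g i ∈ A 1)
    (hfin_int : (MvPolynomial.aeval g : MvPolynomial (Fin N) K →ₐ[K] R).toRingHom.IsIntegral)
    (hdep : ¬ AlgebraicIndependent K g) :
    ∃ N' < N, ∃ g' : Fin N' → R, (∀ i, g' i ∈ A 1) ∧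
      (MvPolynomial.aeval g' : MvPolynomial (Fin N') K →ₐ[K] R).toRingHom.IsIntegral := by
  rw [algebraicIndependent_iff] at hdep
  push Not at hdep
  obtain ⟨G, hG, hG0⟩ := hdep
  obtain ⟨d, hd⟩ : ∃ d, MvPolynomial.homogeneousComponent d G ≠ 0 := by
    by_contra! h
    apply hG0
    rw [← MvPolynomial.sum_homogeneousComponent G]
    exact Finset.sum_eq_zero fun i _ => h i
  set H := MvPolynomial.homogeneousComponent d G
  have hHd : H.IsHomogeneous d := MvPolynomial.homogeneousComponent_isHomogeneous d G
  have hH0 : MvPolynomial.aeval g H = 0 := aeval_homogeneousComponent_eq_zero hg hG d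
  obtain ⟨μ, hμ⟩ : ∃ μ, MvPolynomial.eval μ H ≠ 0 := by
    by_contra! h
    exact hd (MvPolynomial.funext fun x => by rw [h, map_zero])
  obtain ⟨j, hj⟩ : ∃ j, μ j ≠ 0 := by
    by_contra! h
    rcases Nat.eq_zero_or_pos d with rfl | hdpos
    · have h1 : H = MvPolynomial.C (G.coeff 0) := MvPolynomial.homogeneousComponent_zero G
      rw [h1, MvPolynomial.aeval_C] at hH0
      rw [h1, MvPolynomial.eval_C] at hμ
      exact hμ ((map_eq_zero_iff _ (algebraMap K R).injective).1 hH0)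
    · apply hμ
      rw [MvPolynomial.eval_eq]
      refine Finset.sum_eq_zero fun m hm => ?_
      have hmd := hHd (MvPolynomial.mem_support_iff.1 hm)
      have hw : Finsupp.weight 1 m = ∑ i ∈ m.support, m i := by
        simp [Finsupp.weight_apply, Finsupp.sum]
      rw [hw] at hmd
      obtain ⟨i, hi⟩ : m.support.Nonempty := by
        rw [Finset.nonempty_iff_ne_empty]
        intro h0
        rw [h0] at hmd
        simp at hmd
        omega
      rw [Finset.prod_eq_zero hi, mul_zero]
      rw [h i, zero_pow (Finsupp.mem_support_iff.1 hi)]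
  obtain ⟨N, rfl⟩ : ∃ M, N = M + 1 := ⟨N - 1, by have := j.pos; omega⟩
  let g' : Fin N → R := fun i => g (j.succAbove i) - (μ (j.succAbove i) / μ j) • g j
  refine ⟨N, Nat.lt_succ_self N, g', fun i => Submodule.sub_mem _ (hg _)
    (Submodule.smul_mem _ _ (hg _)), ?_⟩
  let B := MvPolynomial (Fin N) K
  let φ : B →ₐ[K] R := MvPolynomial.aeval g'
  let q : Fin (N + 1) → B := Fin.insertNth j 0 MvPolynomial.X
  let T : R := (μ j)⁻¹ • g j
  have hq : ∀ i, φ (q i) + μ i • T = g i := by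
    intro i
    rcases Fin.eq_self_or_eq_succAbove j i with rfl | ⟨i, rfl⟩
    · simp [q, T, smul_smul, hj]
    · have h1 : φ (q (j.succAbove i)) = g' i := by
        simp only [q, Fin.insertNth_apply_succAbove]
        exact MvPolynomial.aeval_X _ _
      rw [h1]
      simp [g', T, smul_smul, div_eq_mul_inv]
  let P : B[X] := MvPolynomial.aeval
    (fun i => C (q i) + C (algebraMap K B (μ i)) * X) H
  have hP := coeff_aeval_linear hHd q μ
  have hPT : eval₂ φ.toRingHom T P = 0 := by
    have : eval₂ φ.toRingHom T P = MvPolynomial.aeval g H := by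
      have h1 : (eval₂RingHom φ.toRingHom T).comp (MvPolynomial.aeval
        (fun i => C (q i) + C (algebraMap K B (μ i)) * X) : MvPolynomial (Fin (N + 1)) K →ₐ[K] B[X]).toRingHom
          = (MvPolynomial.aeval g : MvPolynomial (Fin (N + 1)) K →ₐ[K] R).toRingHom := by
        refine MvPolynomial.ringHom_ext ?_ ?_
        · intro c
          simp [Polynomial.algebraMap_apply]
        · intro i
          simp only [RingHom.comp_apply]
          simp [← hq i, Algebra.smul_def]
      exact congrArg (fun F => F H) h1
    rw [this, hH0]
  have hT : φ.toRingHom.IsIntegralElem T := by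
    refine ⟨C (algebraMap K B (MvPolynomial.eval μ H)⁻¹) * P, ?_, ?_⟩
    · refine monic_of_natDegree_le_of_coeff_eq_one d ((natDegree_C_mul_le _ _).trans hP.1) ?_
      rw [coeff_C_mul, hP.2, ← map_mul, inv_mul_cancel₀ hμ, map_one]
    · rw [eval₂_mul, hPT, mul_zero]
  refine isIntegral_of_forall_isIntegralElem φ.toRingHom (algebraMap K B) ?_ hfin_int ?_
  · ext c; simp
  · intro i
    let _ := φ.toRingHom.toAlgebra
    change IsIntegral B (g i)
    rw [← hq i, Algebra.smul_def]
    refine (isIntegral_algebraMap (R := B) (x := q i)).add (IsIntegral.mul ?_ hT)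
    have : algebraMap K R (μ i) = algebraMap B R (algebraMap K B (μ i)) := by
      change _ = φ _
      simp
    rw [this]
    exact isIntegral_algebraMap

/-- Linear Noether normalization: `R` is integral over a polynomial ring in two elements of degree one. -/
lemma exists_parameters [IsAlgClosed K] [IsDomain R]
    (hstd : ∃ s : Finset R, (s : Set R) ⊆ A 1 ∧ Algebra.adjoin K (s : Set R) = ⊤)
    (hdim : ringKrullDim R = 2) :
    ∃ x ∈ A 1, ∃ y ∈ A 1, AlgebraicIndependent K ![x, y] ∧
      (MvPolynomial.aeval ![x, y] : MvPolynomial (Fin 2) K →ₐ[K] R).toRingHom.IsIntegral := by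
  classical
  have hex : ∃ N, ∃ g : Fin N → R, (∀ i, g i ∈ A 1) ∧
      (MvPolynomial.aeval g : MvPolynomial (Fin N) K →ₐ[K] R).toRingHom.IsIntegral := by
    obtain ⟨s, hs, hs'⟩ := hstd
    refine ⟨s.card, fun i => s.equivFin.symm i, fun i => hs (s.equivFin.symm i).2, ?_⟩
    refine RingHom.isIntegral_of_surjective _ ?_
    rw [AlgHom.toRingHom_eq_coe, AlgHom.coe_toRingHom, ← AlgHom.range_eq_top, ← Algebra.adjoin_range_eq_range_aeval, ← hs']
    congr 1
    ext z
    constructor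
    · rintro ⟨i, rfl⟩; exact (s.equivFin.symm i).2
    · intro hz; exact ⟨s.equivFin ⟨z, hz⟩, by simp⟩
  obtain ⟨g, hg, hfin_int⟩ := Nat.find_spec hex
  have hind : AlgebraicIndependent K g := by
    by_contra h
    obtain ⟨N', hN', g', hg'⟩ := exists_fewer_generators hg hfin_int h
    exact Nat.find_min hex hN' ⟨g', hg'⟩
  generalize Nat.find hex = N at *
  have hN : N = 2 := by
    let _ := (MvPolynomial.aeval g : MvPolynomial (Fin N) K →ₐ[K] R).toRingHom.toAlgebra
    have : Algebra.IsIntegral (MvPolynomial (Fin N) K) R := ⟨hfin_int⟩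
    have h1 := ringKrullDim_eq_of_isIntegral (B := MvPolynomial (Fin N) K) (R := R)
      (algebraicIndependent_iff_injective_aeval.1 hind)
    rw [hdim, MvPolynomial.ringKrullDim_of_isNoetherianRing, ringKrullDim_eq_zero_of_field] at h1
    simp at h1
    exact_mod_cast h1
  subst hN
  have hgg : g = ![g 0, g 1] := by ext i; fin_cases i <;> rfl
  rw [hgg] at hind hfin_int
  exact ⟨g 0, hg 0, g 1, hg 1, hind, hfin_int⟩
end

end

/-! ### Bracket powers, and plus closure inside tight closure -/

section
open Polynomial

section
variable {R : Type} [CommRing R]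

lemma bracketPow_span (p : ℕ) [Fact p.Prime] [CharP R p] {ι : Type} [Fintype ι] (f : ι → R) (e : ℕ) :
    bracketPow (Ideal.span (Set.range f)) (p ^ e) =
      Ideal.span (Set.range fun i => f i ^ p ^ e) := by
  apply le_antisymm
  · refine Ideal.span_le.2 ?_
    rintro _ ⟨a, ha, rfl⟩
    obtain ⟨c, rfl⟩ := Ideal.mem_span_range_iff_exists_fun.1 ha
    have : ExpChar R p := ExpChar.prime Fact.out
    simp only [sum_pow_char_pow, mul_pow]
    exact Ideal.sum_mem _ fun i _ => Ideal.mul_mem_left _ _ (Ideal.subset_span ⟨i, rfl⟩)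
  · refine Ideal.span_mono ?_
    rintro _ ⟨i, rfl⟩
    exact ⟨f i, Ideal.subset_span ⟨i, rfl⟩, rfl⟩

/-- A module-finite extension of domains has an `R`-linear functional to `Frac R` with `1 ↦ 1`, and its
values have a common denominator `b`. -/
lemma exists_functional {S : Type} [CommRing S] [IsDomain R] [IsDomain S] [Algebra R S]
    [Module.Finite R S] (hinj : Function.Injective (algebraMap R S)) :
    ∃ (ψ : S →ₗ[R] FractionRing R) (b : R), b ≠ 0 ∧ ψ 1 = 1 ∧
      ∀ s, ∃ t, b • ψ s = algebraMap R (FractionRing R) t := by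
  have : FaithfulSMul R S := (faithfulSMul_iff_algebraMap_injective R S).2 hinj
  have : FaithfulSMul R (FractionRing S) := (faithfulSMul_iff_algebraMap_injective _ _).2 (by
    rw [IsScalarTower.algebraMap_eq R S]
    exact (IsFractionRing.injective S (FractionRing S)).comp hinj)
  let _ : Algebra (FractionRing R) (FractionRing S) := FractionRing.liftAlgebra R (FractionRing S)
  have : IsScalarTower R (FractionRing R) (FractionRing S) := FractionRing.isScalarTower_liftAlgebra R _
  obtain ⟨l, hl⟩ := LinearMap.exists_leftInverse_of_injective
    (Algebra.linearMap (FractionRing R) (FractionRing S))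
    (LinearMap.ker_eq_bot.2 (algebraMap (FractionRing R) (FractionRing S)).injective)
  let ψ : S →ₗ[R] FractionRing R := (l.restrictScalars R).comp
    (IsScalarTower.toAlgHom R S (FractionRing S)).toLinearMap
  have hψ1 : ψ 1 = 1 := by
    have := LinearMap.congr_fun hl 1
    simpa [ψ] using this
  obtain ⟨n, s, hs⟩ := Module.Finite.exists_fin (R := R) (M := S)
  classical
  obtain ⟨b, hb⟩ := IsLocalization.exist_integer_multiples_of_finset (nonZeroDivisors R)
    (Finset.univ.image fun i => ψ (s i))
  refine ⟨ψ, b, nonZeroDivisors.ne_zero b.2, hψ1, ?_⟩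
  intro z
  have hz : z ∈ Submodule.span R (Set.range s) := hs ▸ Submodule.mem_top
  induction hz using Submodule.span_induction with
  | mem z hz =>
    obtain ⟨i, rfl⟩ := hz
    obtain ⟨t, ht⟩ := hb (ψ (s i)) (Finset.mem_image_of_mem _ (Finset.mem_univ i))
    exact ⟨t, ht.symm⟩
  | zero => exact ⟨0, by simp⟩
  | add u v _ _ hu hv =>
    obtain ⟨a, ha⟩ := hu
    obtain ⟨c, hc⟩ := hv
    exact ⟨a + c, by rw [map_add, smul_add, ha, hc, map_add]⟩
  | smul a u _ hu =>
    obtain ⟨c, hc⟩ := hu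
    exact ⟨a * c, by rw [map_smul, smul_comm, hc, Algebra.smul_def, map_mul]⟩

/-- The functional of `exists_functional` applied to `h ^ q = ∑ sᵢ^q fᵢ^q` shows that its denominator
`b` satisfies `b * h ^ q ∈ I^[q]`. -/
lemma plusClosure_subset_tightClosure [IsDomain R] (p : ℕ) [Fact p.Prime] [CharP R p]
    {ι : Type} [Fintype ι] (f : ι → R) :
    plusClosure R (Ideal.span (Set.range f)) ⊆ tightClosure p (Ideal.span (Set.range f)) := by
  rintro h ⟨S, _, _, φ, hφ, hfin, hh⟩
  let _ := φ.toAlgebra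
  have : Module.Finite R S := hfin
  obtain ⟨ψ, b, hb0, hψ1, hψ⟩ := exists_functional (R := R) (S := S) hφ
  have : CharP S p := charP_of_injective_algebraMap (R := R) (A := S) hφ p
  have : ExpChar S p := ExpChar.prime Fact.out
  refine ⟨b, hb0, 0, fun e _ => ?_⟩
  rw [bracketPow_span]
  rw [Ideal.map_span, ← Set.range_comp] at hh
  obtain ⟨s, hs⟩ := Ideal.mem_span_range_iff_exists_fun.1 hh
  choose t ht using hψ
  refine Ideal.mem_span_range_iff_exists_fun.2 ⟨fun i => t (s i ^ p ^ e), ?_⟩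
  apply IsFractionRing.injective R (FractionRing R)
  have h1 : h ^ p ^ e • (1 : S) = ∑ i, f i ^ p ^ e • s i ^ p ^ e := by
    rw [Algebra.smul_def, mul_one, map_pow]
    change φ h ^ _ = _
    rw [← hs, sum_pow_char_pow]
    refine Finset.sum_congr rfl fun i _ => ?_
    rw [mul_pow, Algebra.smul_def, map_pow, mul_comm]
    rfl
  have h2 := congrArg (fun z => b • ψ z) h1
  simp only [map_smul, map_sum, hψ1, Finset.smul_sum] at h2
  rw [map_sum, map_mul, ← Algebra.smul_def, map_pow]
  rw [Algebra.smul_def (h ^ p ^ e), mul_one, map_pow] at h2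
  rw [h2]
  refine Finset.sum_congr rfl fun i _ => ?_
  rw [smul_comm, ht, map_mul, Algebra.smul_def, mul_comm]

/-- The coefficients of a representation over the integral closure generate a module-finite extension. -/
lemma mem_plusClosure_of_isIntegral {Ω : Type} [Field Ω] [Algebra R Ω]
    (hinj : Function.Injective (algebraMap R Ω)) {ι : Type} [Fintype ι] {f : ι → R} {h : R}
    (hh : algebraMap R (integralClosure R Ω) h ∈
      (Ideal.span (Set.range f)).map (algebraMap R (integralClosure R Ω))) :
    h ∈ plusClosure R (Ideal.span (Set.range f)) := by
  rw [Ideal.map_span, ← Set.range_comp] at hh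
  obtain ⟨s, hs⟩ := Ideal.mem_span_range_iff_exists_fun.1 hh
  let S := Algebra.adjoin R (Set.range fun i => (s i : Ω))
  have hfin : Module.Finite R S := Algebra.finite_adjoin_of_finite_of_isIntegral
    (Set.finite_range _) (by rintro _ ⟨i, rfl⟩; exact (s i).2)
  refine ⟨S, inferInstance, inferInstance, algebraMap R S, ?_, RingHom.finite_algebraMap.2 hfin, ?_⟩
  · intro a b hab
    exact hinj (congrArg (fun z : S => (z : Ω)) hab)
  · rw [Ideal.map_span, ← Set.range_comp]
    refine Ideal.mem_span_range_iff_exists_fun.2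
      ⟨fun i => ⟨s i, Algebra.subset_adjoin ⟨i, rfl⟩⟩, ?_⟩
    apply Subtype.ext
    have := congrArg (fun z : integralClosure R Ω => (z : Ω)) hs
    simpa using this
end

end

/-! ### Tight closure inside plus closure -/

section
open Polynomial

section
open Matrix
variable {K R Ω : Type} [Field K] [CommRing R] [Algebra K R] {A : ℕ → Submodule K R} [GradedAlgebra A]
  [Field Ω] [Algebra K Ω] [Algebra R Ω] [IsScalarTower K R Ω]

lemma isIntegral_aeval_swap {x y : R}
    (hfin_int : (MvPolynomial.aeval ![x, y] : MvPolynomial (Fin 2) K →ₐ[K] R).toRingHom.IsIntegral) :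
    (MvPolynomial.aeval ![y, x] : MvPolynomial (Fin 2) K →ₐ[K] R).toRingHom.IsIntegral := by
  refine isIntegral_of_forall_isIntegralElem _ (algebraMap K _) ?_ hfin_int ?_
  · ext c; simp
  · intro i
    have key : ∀ j : Fin 2, (MvPolynomial.aeval ![y, x] : MvPolynomial (Fin 2) K →ₐ[K] R).toRingHom.IsIntegralElem
        (![y, x] j) := by
      intro j
      rw [← MvPolynomial.aeval_X (R := K) ![y, x] j]
      exact RingHom.isIntegralElem_map _
    fin_cases i
    · exact key 1
    · exact key 0

lemma zpow_mem_twist {X Y : Ω} (hX : X ≠ 0) (n : ℤ) : X ^ n ∈ twist K X Y n := by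
  rw [mem_twist, ← zpow_add₀ hX, add_neg_cancel, zpow_zero]
  exact one_mem _

/-- Forms generating an `R_+`-primary ideal generate the unit ideal on the chart `x ≠ 0`, with
coefficients homogeneous of the opposite degrees: divide a representation of `x ^ N` by `x ^ N`. The
degrees `D i` may be negative, in which case `s i = 0`. -/
lemma exists_local_inverse {x y : R} (hx : x ∈ A 1) (hy : y ∈ A 1)
    (hfin_int : (MvPolynomial.aeval ![x, y] : MvPolynomial (Fin 2) K →ₐ[K] R).toRingHom.IsIntegral)
    (hX : algebraMap R Ω x ≠ 0) {s : Fin 3 → R} {D : Fin 3 → ℤ}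
    (hs : ∀ i, s i = 0 ∨ ∃ n : ℕ, D i = n ∧ s i ∈ A n)
    (hrad : (Ideal.span (Set.range s)).radical = (HomogeneousIdeal.irrelevant A).toIdeal) :
    ∃ g : Fin 3 → Ω, (∀ i, g i ∈ twist K (algebraMap R Ω x) (algebraMap R Ω y) (-D i)) ∧
      g ⬝ᵥ (fun i => algebraMap R Ω (s i)) = 1 := by
  classical
  have hxI : x ∈ (Ideal.span (Set.range s)).radical := by
    rw [hrad]
    refine (HomogeneousIdeal.mem_irrelevant_iff A x).2 ?_
    rw [GradedRing.proj_apply]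
    exact DirectSum.decompose_of_mem_ne A hx one_ne_zero
  obtain ⟨N, hN⟩ := hxI
  have hs' : ∀ i, s i ∈ A (D i).toNat := by
    intro i
    rcases hs i with h | ⟨n, hn, h⟩
    · rw [h]; exact Submodule.zero_mem _
    · rw [hn]; exact h
  have hxN : x ^ N ∈ A N := by simpa using SetLike.pow_mem_graded N hx
  obtain ⟨G, hG1, hG2, hG⟩ := exists_homogeneous_rep hs' hxN hN
  refine ⟨fun i => if s i = 0 then 0 else
    algebraMap R Ω (G i) * algebraMap R Ω x ^ (-(N : ℤ)), ?_, ?_⟩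
  · intro i
    dsimp only
    split_ifs with h
    · exact Submodule.zero_mem _
    · obtain ⟨n, hn, -⟩ := (hs i).resolve_left h
      rcases le_or_gt n N with hle | hlt
      · have h1 := hG1 i (by rw [hn]; simpa using hle)
        have h2 := twist_mul_mem hX (mem_twist_of_mem hx hy hfin_int hX h1)
          (zpow_mem_twist (K := K) (Y := algebraMap R Ω y) hX (-(N : ℤ)))
        convert h2 using 2
        rw [hn, Int.toNat_natCast]
        omega
      · rw [hG2 i (by rw [hn]; simpa using hlt), map_zero, zero_mul]
        exact Submodule.zero_mem _
  · have h1 : ∀ i, (if s i = 0 then 0 else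
        algebraMap R Ω (G i) * algebraMap R Ω x ^ (-(N : ℤ))) * algebraMap R Ω (s i) =
        algebraMap R Ω (G i * s i) * algebraMap R Ω x ^ (-(N : ℤ)) := by
      intro i
      split_ifs with h
      · rw [h]; simp
      · rw [map_mul]; ring
    unfold dotProduct
    rw [Finset.sum_congr rfl fun i _ => h1 i, ← Finset.sum_mul, ← map_sum, ← hG, map_pow,
      ← zpow_natCast, ← zpow_add₀ hX, add_neg_cancel, zpow_zero]

/-- The inclusion of tight closure in plus closure for a homogeneous element `h` with a homogeneous
multiplier `c`: the global sections of `exists_glued` are integral over `R`. -/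
theorem mem_of_homogeneous_tight [IsAlgClosed Ω] (p : ℕ) [Fact p.Prime] [CharP R p] [CharP Ω p]
    (hinj : Function.Injective (algebraMap R Ω))
    {x y : R} (hx : x ∈ A 1) (hy : y ∈ A 1) (hind : AlgebraicIndependent K ![x, y])
    (hfin_int : (MvPolynomial.aeval ![x, y] : MvPolynomial (Fin 2) K →ₐ[K] R).toRingHom.IsIntegral)
    {f : Fin 3 → R} {d : Fin 3 → ℕ} (hf : ∀ i, f i ∈ A (d i))
    (hprim : (Ideal.span (Set.range f)).radical = (HomogeneousIdeal.irrelevant A).toIdeal)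
    {k : ℕ} (hk : 2 * k ≤ d 0 + d 1 + d 2) {r : Fin 3 → R}
    (hrdeg : ∀ i, d i ≤ k → r i ∈ A (k - d i)) (hrneg : ∀ i, k < d i → r i = 0)
    (hrel : ∑ i, r i * f i = 0)
    (hrprim : (Ideal.span (Set.range r)).radical = (HomogeneousIdeal.irrelevant A).toIdeal)
    {m t : ℕ} {h c : R} (hh : h ∈ A m) (hc : c ∈ A t) (hc0 : c ≠ 0) (e₀ : ℕ)
    (htight : ∀ e ≥ e₀, c * h ^ p ^ e ∈ Ideal.span (Set.range fun i => f i ^ p ^ e)) :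
    algebraMap R (integralClosure R Ω) h ∈
      (Ideal.span (Set.range f)).map (algebraMap R (integralClosure R Ω)) := by
  have hind' : AlgebraicIndependent K ![algebraMap R Ω x, algebraMap R Ω y] := by
    have := hind.map' (f := IsScalarTower.toAlgHom K R Ω) hinj
    convert this using 1
    ext i; fin_cases i <;> rfl
  have hX : algebraMap R Ω x ≠ 0 := hind'.ne_zero 0
  have hY : algebraMap R Ω y ≠ 0 := hind'.ne_zero 1
  have hv := transcendental_div hX hind'
  have hfin_int' := isIntegral_aeval_swap hfin_int
  have TX : ∀ {n : ℕ} {a : R}, a ∈ A n →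
      algebraMap R Ω a ∈ twist K (algebraMap R Ω x) (algebraMap R Ω y) n :=
    mem_twist_of_mem hx hy hfin_int hX
  have TY : ∀ {n : ℕ} {a : R}, a ∈ A n →
      algebraMap R Ω a ∈ twist K (algebraMap R Ω y) (algebraMap R Ω x) n :=
    mem_twist_of_mem hy hx hfin_int' hY
  have hf' : ∀ i, f i = 0 ∨ ∃ n : ℕ, ((d i : ℕ) : ℤ) = n ∧ f i ∈ A n := fun i => Or.inr ⟨d i, rfl, hf i⟩
  have hr' : ∀ i, r i = 0 ∨ ∃ n : ℕ, (k : ℤ) - d i = n ∧ r i ∈ A n := by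
    intro i
    rcases le_or_gt (d i) k with hle | hlt
    · exact Or.inr ⟨k - d i, by omega, hrdeg i hle⟩
    · exact Or.inl (hrneg i hlt)
  obtain ⟨g, hg, hgf⟩ := exists_local_inverse (Ω := Ω) hx hy hfin_int hX hf' hprim
  obtain ⟨g', hg', hgf'⟩ := exists_local_inverse (Ω := Ω) hy hx hfin_int' hY hf' hprim
  obtain ⟨u, hu, hur⟩ := exists_local_inverse (Ω := Ω) hx hy hfin_int hX hr' hrprim
  obtain ⟨u', hu', hur'⟩ := exists_local_inverse (Ω := Ω) hy hx hfin_int' hY hr' hrprim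
  have hrtw : ∀ {X₀ Y₀ : Ω}, (∀ {n : ℕ} {a : R}, a ∈ A n → algebraMap R Ω a ∈ twist K X₀ Y₀ n) →
      ∀ i, algebraMap R Ω (r i) ∈ twist K X₀ Y₀ ((k : ℤ) - d i) := by
    intro X₀ Y₀ T i
    rcases hr' i with h0 | ⟨n, hn, hmem⟩
    · rw [h0, map_zero]; exact Submodule.zero_mem _
    · rw [hn]; exact T hmem
  obtain ⟨a, hax, hay, haf⟩ := exists_glued p hX hY hv (fun i => (d i : ℤ)) k m t
    (by exact_mod_cast hk)
    (f := fun i => algebraMap R Ω (f i)) (r := fun i => algebraMap R Ω (r i))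
    (fun i => TX (hf i)) (fun i => TY (hf i)) (hrtw TX) (hrtw TY)
    (by
      have := congrArg (algebraMap R Ω) hrel
      rw [map_sum, map_zero] at this
      rw [← this]
      refine Finset.sum_congr rfl fun i _ => ?_
      rw [map_mul, mul_comm])
    (g := g) (g' := g') (u := u) (u' := u')
    (fun i => by rw [zero_sub]; exact hg i) (fun i => by rw [zero_sub]; exact hg' i) hgf hgf'
    (fun i => by rw [show -(k : ℤ) + d i = -((k : ℤ) - d i) by ring]; exact hu i)
    (fun i => by rw [show -(k : ℤ) + d i = -((k : ℤ) - d i) by ring]; exact hu' i) hur hur'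
    (h := algebraMap R Ω h) (c := algebraMap R Ω c) (TX hh) (TY hh)
    (by rwa [Ne, map_eq_zero_iff _ hinj]) (TX hc) (TY hc) e₀
    (by
      intro e he
      have hdeg : c * h ^ p ^ e ∈ A (t + p ^ e * m) := by
        refine SetLike.mul_mem_graded hc ?_
        simpa using SetLike.pow_mem_graded (p ^ e) hh
      have hfq : ∀ i, f i ^ p ^ e ∈ A (p ^ e * d i) := fun i => by
        simpa using SetLike.pow_mem_graded (p ^ e) (hf i)
      obtain ⟨G, hG1, hG2, hG⟩ := exists_homogeneous_rep hfq hdeg (htight e he)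
      have hGtw : ∀ {X₀ Y₀ : Ω},
          (∀ {n : ℕ} {a : R}, a ∈ A n → algebraMap R Ω a ∈ twist K X₀ Y₀ n) →
          ∀ i, algebraMap R Ω (G i) ∈ twist K X₀ Y₀
            ((t : ℤ) + (p ^ e : ℕ) * m - (p ^ e : ℕ) * d i) := by
        intro X₀ Y₀ T i
        rcases le_or_gt (p ^ e * d i) (t + p ^ e * m) with hle | hlt
        · have := T (hG1 i hle)
          rw [Nat.cast_sub hle] at this
          exact_mod_cast this
        · rw [hG2 i hlt, map_zero]; exact Submodule.zero_mem _
      refine ⟨fun i => algebraMap R Ω (G i), hGtw TX, hGtw TY, ?_⟩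
      rw [← map_pow, ← map_mul, hG, map_sum]
      refine Finset.sum_congr rfl fun i _ => ?_
      rw [map_mul, map_pow]
      rfl)
  have hai : ∀ i, IsIntegral R (a i) := fun i =>
    isIntegral_of_adjoin_pair (twist_inter_isIntegral hX hv (hax i) (hay i))
  rw [Ideal.map_span, ← Set.range_comp]
  refine Ideal.mem_span_range_iff_exists_fun.2 ⟨fun i => ⟨a i, hai i⟩, ?_⟩
  apply Subtype.ext
  have h1 : ((∑ i, (⟨a i, hai i⟩ : integralClosure R Ω) *
      (algebraMap R (integralClosure R Ω) ∘ f) i : integralClosure R Ω) : Ω) =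
      ∑ i, a i * algebraMap R Ω (f i) := by
    simp
  rw [h1]
  exact haf

/-- Reduction to homogeneous elements. The leading component of `c * h ^ q` is `c₁ * h₁ ^ q` for the
leading components `c₁`, `h₁` of `c` and `h`, so `h₁` satisfies the homogeneous hypothesis, and
`h - h₁`, which has fewer components, lies in the tight closure with multiplier `c * c₁`. -/
theorem mem_of_tight [IsDomain R] (p : ℕ) [Fact p.Prime] [CharP R p] {f : Fin 3 → R} {d : Fin 3 → ℕ}
    (hf : ∀ i, f i ∈ A (d i)) (J : Ideal R)
    (hJ : ∀ {m t : ℕ} {h c : R}, h ∈ A m → c ∈ A t → c ≠ 0 → ∀ e₀ : ℕ,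
      (∀ e ≥ e₀, c * h ^ p ^ e ∈ Ideal.span (Set.range fun i => f i ^ p ^ e)) → h ∈ J)
    {h : R} (hh : h ∈ tightClosure p (Ideal.span (Set.range f))) : h ∈ J := by
  induction hn : (gradedPoly A h).support.card generalizing h with
  | zero =>
    rw [Finset.card_eq_zero, support_eq_empty] at hn
    have : h = 0 := gradedPoly_injective (A := A) (by rw [hn, map_zero])
    rw [this]
    exact J.zero_mem
  | succ n ih =>
    obtain ⟨c, hc0, e₀, hc⟩ := hh
    set m := (gradedPoly A h).natDegree
    set t := (gradedPoly A c).natDegree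
    set h₁ := (gradedPoly A h).leadingCoeff
    set c₁ := (gradedPoly A c).leadingCoeff
    have hΘc : gradedPoly A c ≠ 0 := fun h => hc0 (gradedPoly_injective (A := A) (by rw [h, map_zero]))
    have hc₁0 : c₁ ≠ 0 := leadingCoeff_ne_zero.2 hΘc
    have hh₁ : h₁ ∈ A m := coeff_gradedPoly_mem _ _
    have hc₁ : c₁ ∈ A t := coeff_gradedPoly_mem _ _
    have hlead : ∀ e ≥ e₀, c₁ * h₁ ^ p ^ e ∈ Ideal.span (Set.range fun i => f i ^ p ^ e) := by
      intro e he
      have h1 := hc e he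
      rw [bracketPow_span] at h1
      have hhom : (Ideal.span (Set.range fun i => f i ^ p ^ e)).IsHomogeneous A := by
        refine Ideal.homogeneous_span A _ ?_
        rintro _ ⟨i, rfl⟩
        exact ⟨_, SetLike.pow_mem_graded (p ^ e) (hf i)⟩
      have h2 := hhom (gradedPoly A (c * h ^ p ^ e)).natDegree h1
      rw [← coeff_gradedPoly] at h2
      change (gradedPoly A (c * h ^ p ^ e)).leadingCoeff ∈ _ at h2
      rwa [map_mul, map_pow, leadingCoeff_mul, leadingCoeff_pow] at h2
    have hmem : h₁ ∈ J := hJ hh₁ hc₁ hc₁0 e₀ hlead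
    have hrest : h - h₁ ∈ J := by
      apply ih
      · refine ⟨c * c₁, mul_ne_zero hc0 hc₁0, e₀, fun e he => ?_⟩
        have : ExpChar R p := ExpChar.prime Fact.out
        rw [bracketPow_span, sub_pow_char_pow]
        have h1 := hc e he
        rw [bracketPow_span] at h1
        have h2 := Ideal.sub_mem _ (Ideal.mul_mem_left _ c₁ h1) (Ideal.mul_mem_left _ c (hlead e he))
        convert h2 using 1
        ring
      · have : gradedPoly A (h - h₁) = (gradedPoly A h).eraseLead := by
          rw [map_sub, gradedPoly_of_mem hh₁, self_sub_monomial_natDegree_leadingCoeff]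
        rw [this]
        exact card_support_eraseLead' hn
    have := J.add_mem hrest hmem
    rwa [sub_add_cancel] at this
end

end

/-- Let `K` be an algebraically closed field of characteristic `p > 0`
and let `R` be a two-dimensional normal standard-graded `K`-domain. Let `f_1,f_2,f_3` be
homogeneous `R_+`-primary elements of degrees `d_1,d_2,d_3`. If there is a primary
homogeneous relation `r_1 f_1 + r_2 f_2 + r_3 f_3 = 0` of total degree
`k ≤ (d_1+d_2+d_3)/2` (so `deg r_i = k - d_i`, the `r_i` not all zero, and the radical of
`(r_1,r_2,r_3)` equals `R_+`), then `(f_1,f_2,f_3)^* = (f_1,f_2,f_3)^+`. -/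
theorem statement17 (K : Type) [Field K] [IsAlgClosed K]
    (p : ℕ) [Fact p.Prime] [CharP K p]
    (R : Type) [CommRing R] [IsDomain R] [IsIntegrallyClosed R] [Algebra K R]
    (A : ℕ → Submodule K R) [GradedAlgebra A]
    (h0 : A 0 = Submodule.span K {1})
    (hstd : ∃ s : Finset R, (s : Set R) ⊆ (A 1 : Set R) ∧ Algebra.adjoin K (s : Set R) = ⊤)
    (hdim : ringKrullDim R = 2)
    (f : Fin 3 → R) (d : Fin 3 → ℕ) (hf : ∀ i, f i ∈ A (d i))
    (hprim : (Ideal.span (Set.range f)).radical = (HomogeneousIdeal.irrelevant A).toIdeal)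
    (k : ℕ) (hk : 2 * k ≤ d 0 + d 1 + d 2)
    (r : Fin 3 → R) (hr0 : r ≠ 0)
    (hrdeg : ∀ i, d i ≤ k → r i ∈ A (k - d i))
    (hrneg : ∀ i, k < d i → r i = 0)
    (hrel : ∑ i, r i * f i = 0)
    (hrprim : (Ideal.span (Set.range r)).radical = (HomogeneousIdeal.irrelevant A).toIdeal) :
    tightClosure p (Ideal.span (Set.range f)) = plusClosure R (Ideal.span (Set.range f)) := by
  have hinjKR : Function.Injective (algebraMap K R) := (algebraMap K R).injective
  have : CharP R p := charP_of_injective_algebraMap hinjKR p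
  let Ω := AlgebraicClosure (FractionRing R)
  have hinj : Function.Injective (algebraMap R Ω) := by
    rw [IsScalarTower.algebraMap_eq R (FractionRing R) Ω]
    exact (algebraMap (FractionRing R) Ω).injective.comp (IsFractionRing.injective R (FractionRing R))
  have : CharP Ω p := charP_of_injective_algebraMap hinj p
  obtain ⟨x, hx, y, hy, hind, hfin_int⟩ := exists_parameters hstd hdim
  apply Set.Subset.antisymm
  · intro h hh
    refine mem_plusClosure_of_isIntegral hinj ?_
    exact mem_of_tight (A := A) p hf
      (((Ideal.span (Set.range f)).map (algebraMap R (integralClosure R Ω))).comap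
        (algebraMap R (integralClosure R Ω)))
      (fun hh hc hc0 e₀ ht => mem_of_homogeneous_tight p hinj hx hy hind hfin_int hf hprim hk hrdeg
        hrneg hrel hrprim hh hc hc0 e₀ ht) hh
  · exact plusClosure_subset_tightClosure p f
end

section
/- Let K be an algebraically closed field of characteristic p > 0 with p ≠ 3, and let R = K[x,y,z]/(x³+y³+z³). Then xyz belongs to the plus closure of (x²,y²,z²): there exists a module-finite extension of integral domains R ⊆ S with xyz ∈ (x²,y²,z²)S. In particular, xyz belongs to the tight closure (x²,y²,z²)^*. -/
/-!
Write `A⁺` for the integral closure of `R` in an algebraic closure `L` of its fraction field. It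
suffices to write `xyz = u x² + v y² + w z²` with `u, v, w ∈ A⁺`: the ring `R[u, v, w]` is then
a module-finite domain over `R`. The tight closure statement follows by applying an `R`-linear map
`R[u, v, w] → R` that does not kill `1` to the `q`-th power of this equation
(`exists_linear_retraction`, `mem_closures`).

Two facts about `A⁺` are used. It contains every root in `L` of a polynomial `t ^ p - s t - r` over
`A⁺`, and an element `t` of `L` lies in `A⁺` as soon as `x ^ n * t` and `y ^ n * t` do
(`isIntegral_of_parameters`), because `R` is integral over the normal ring `K[x, y]`.

The first fact trivialises cohomology classes. If Frobenius sends the class of `f / (x y)` to a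
multiple of itself, that is, `f ^ p = k f (x y) ^ (p - 1) + a x ^ p + b y ^ p`, then
`f = α x + β y` with `α, β ∈ A⁺`; here `α` and `β` are roots of Artin–Schreier type polynomials
(`artin_schreier_descent`). The cubic equation gives such a relation for `f = z²`
(`frobenius_relations`), so `z² = d x + c y`. By the second fact, `e = (y² + c z) / x` lies in
`A⁺`. The vectors `(x, y, z)` and `(c, -d, e)` are now two syzygies of `(x², y², z²)` whose cross
product is `(x², y², z²)` up to sign, so they trivialise the syzygy bundle over `A⁺`. What remains
is the class of `e z / (x y)`, to which the Frobenius argument applies once more. From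
`e z = α x + β y` one reads off `u, v, w` explicitly (`exists_combination`).
-/

open MvPolynomial

/-! ### The Frobenius relations -/

/-- The even power of a binomial splits into its middle term, the terms divisible by
`u ^ (n + 1)` and those divisible by `v ^ (n + 1)`; the cofactor of `u ^ (n + 1)` is a form of
degree `n - 1`. -/
theorem binom_even {A : Type*} [CommRing A] (u v : A) (n : ℕ) :
    ∃ P Q : A, P ∈ Ideal.span {u, v} ^ (n - 1) ∧
      (u + v) ^ (2 * n) = (Nat.choose (2 * n) n : A) * (u * v) ^ n
        + u ^ (n + 1) * P + v ^ (n + 1) * Q := by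
  refine ⟨∑ i ∈ Finset.range n, u ^ i * v ^ (n - 1 - i) * ((2 * n).choose (n + 1 + i) : A),
    ∑ i ∈ Finset.range n, u ^ i * v ^ (n - 1 - i) * ((2 * n).choose i : A), ?_, ?_⟩
  · refine Ideal.sum_mem _ fun i hi => Ideal.mul_mem_right _ _ ?_
    have hi' : n - 1 = i + (n - 1 - i) := by have := Finset.mem_range.1 hi; omega
    conv => enter [1, 2]; rw [hi']
    rw [pow_add]
    exact Ideal.mul_mem_mul (Ideal.pow_mem_pow (Ideal.subset_span (by simp)) _)
      (Ideal.pow_mem_pow (Ideal.subset_span (by simp)) _)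
  · rw [add_pow, show 2 * n + 1 = (n + 1) + n by ring, Finset.sum_range_add, Finset.sum_range_succ,
      Finset.mul_sum, Finset.mul_sum, show 2 * n - n = n by omega]
    have h1 : ∀ i ∈ Finset.range n, u ^ i * v ^ (2 * n - i) * ((2 * n).choose i : A)
        = v ^ (n + 1) * (u ^ i * v ^ (n - 1 - i) * ((2 * n).choose i : A)) := by
      intro i hi
      have hi' : 2 * n - i = n + 1 + (n - 1 - i) := by have := Finset.mem_range.1 hi; omega
      rw [hi', pow_add v]; ring
    have h2 : ∀ i ∈ Finset.range n,
        u ^ (n + 1 + i) * v ^ (2 * n - (n + 1 + i)) * ((2 * n).choose (n + 1 + i) : A)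
        = u ^ (n + 1) * (u ^ i * v ^ (n - 1 - i) * ((2 * n).choose (n + 1 + i) : A)) := by
      intro i hi
      have hi' : 2 * n - (n + 1 + i) = (n - 1 - i) := by have := Finset.mem_range.1 hi; omega
      rw [hi', pow_add u]; ring
    rw [Finset.sum_congr rfl h1, Finset.sum_congr rfl h2]; ring

/-- Odd powers have no middle term; compare `binom_even`. -/
theorem binom_odd {A : Type*} [CommRing A] (u v : A) (n : ℕ) :
    ∃ P Q : A, P ∈ Ideal.span {u, v} ^ n ∧
      (u + v) ^ (2 * n + 1) = u ^ (n + 1) * P + v ^ (n + 1) * Q := by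
  refine ⟨∑ i ∈ Finset.range (n + 1), u ^ i * v ^ (n - i) * ((2 * n + 1).choose (n + 1 + i) : A),
    ∑ i ∈ Finset.range (n + 1), u ^ i * v ^ (n - i) * ((2 * n + 1).choose i : A), ?_, ?_⟩
  · refine Ideal.sum_mem _ fun i hi => Ideal.mul_mem_right _ _ ?_
    have hi' : n = i + (n - i) := by have := Finset.mem_range.1 hi; omega
    conv => enter [1, 2]; rw [hi']
    rw [pow_add]
    exact Ideal.mul_mem_mul (Ideal.pow_mem_pow (Ideal.subset_span (by simp)) _)
      (Ideal.pow_mem_pow (Ideal.subset_span (by simp)) _)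
  · rw [add_pow, show 2 * n + 1 + 1 = (n + 1) + (n + 1) by ring, Finset.sum_range_add,
      Finset.mul_sum, Finset.mul_sum]
    have h1 : ∀ i ∈ Finset.range (n + 1), u ^ i * v ^ (2 * n + 1 - i) * ((2 * n + 1).choose i : A)
        = v ^ (n + 1) * (u ^ i * v ^ (n - i) * ((2 * n + 1).choose i : A)) := by
      intro i hi
      have hi' : 2 * n + 1 - i = n + 1 + (n - i) := by have := Finset.mem_range.1 hi; omega
      rw [hi', pow_add v]; ring
    have h2 : ∀ i ∈ Finset.range (n + 1),
        u ^ (n + 1 + i) * v ^ (2 * n + 1 - (n + 1 + i)) * ((2 * n + 1).choose (n + 1 + i) : A)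
        = u ^ (n + 1) * (u ^ i * v ^ (n - i) * ((2 * n + 1).choose (n + 1 + i) : A)) := by
      intro i hi
      have hi' : 2 * n + 1 - (n + 1 + i) = (n - i) := by have := Finset.mem_range.1 hi; omega
      rw [hi', pow_add u]; ring
    rw [Finset.sum_congr rfl h1, Finset.sum_congr rfl h2]; ring

theorem span_pair_pow_le {A : Type*} [CommRing A] (u v : A) (k : ℕ) :
    Ideal.span {u, v} ^ k ≤ Ideal.span {a | ∃ i j, i + j = k ∧ a = u ^ i * v ^ j} := by
  induction k with
  | zero =>
    rw [pow_zero, Ideal.one_eq_top]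
    rw [top_le_iff, Ideal.eq_top_iff_one]
    exact Ideal.subset_span ⟨0, 0, rfl, by simp⟩
  | succ k ih =>
    rw [pow_succ]
    refine (Ideal.mul_mono_left ih).trans ?_
    rw [Ideal.span_mul_span', Ideal.span_le]
    rintro _ ⟨_, ⟨i, j, hij, rfl⟩, b, hb, rfl⟩
    rcases hb with rfl | hb
    · exact Ideal.subset_span ⟨i + 1, j, by omega, by simp only []; ring⟩
    · rw [Set.mem_singleton_iff] at hb
      subst hb
      exact Ideal.subset_span ⟨i, j + 1, by omega, by simp only []; ring⟩

theorem mem_of_span_pow_odd {A : Type*} [CommRing A] (u v a : A) (n : ℕ)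
    (ha : a ∈ Ideal.span {u, v} ^ (2 * n + 1)) :
    ∃ b c, a = b * u ^ (n + 1) + c * v ^ (n + 1) := by
  suffices h : a ∈ Ideal.span {u ^ (n + 1), v ^ (n + 1)} by
    obtain ⟨b, c, h⟩ := Ideal.mem_span_pair.1 h
    exact ⟨b, c, h.symm⟩
  refine (span_pair_pow_le u v _).trans (Ideal.span_le.2 ?_) ha
  rintro _ ⟨i, j, hij, rfl⟩
  rcases Nat.lt_or_ge n i with h | h
  · exact Ideal.mul_mem_right _ _ (Ideal.mem_of_dvd _ (pow_dvd_pow u h) (Ideal.subset_span (by simp)))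
  · exact Ideal.mul_mem_left _ _ (Ideal.mem_of_dvd _ (pow_dvd_pow v (by omega : n + 1 ≤ j))
      (Ideal.subset_span (by simp)))

theorem mem_of_span_pow_even {A : Type*} [CommRing A] (u v a : A) (n : ℕ)
    (ha : a ∈ Ideal.span {u, v} ^ (2 * n)) :
    ∃ b c d, a = b * (u * v) ^ n + c * u ^ (n + 1) + d * v ^ (n + 1) := by
  suffices h : a ∈ Ideal.span {(u * v) ^ n, u ^ (n + 1), v ^ (n + 1)} by
    obtain ⟨b, c, d, h⟩ := Submodule.mem_span_triple.1 h
    exact ⟨b, c, d, h.symm⟩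
  refine (span_pair_pow_le u v _).trans (Ideal.span_le.2 ?_) ha
  rintro _ ⟨i, j, hij, rfl⟩
  rcases lt_trichotomy n i with h | rfl | h
  · exact Ideal.mul_mem_right _ _ (Ideal.mem_of_dvd _ (pow_dvd_pow u h) (Ideal.subset_span (by simp)))
  · obtain rfl : j = n := by omega
    exact Ideal.subset_span (by simp [mul_pow])
  · exact Ideal.mul_mem_left _ _ (Ideal.mem_of_dvd _ (pow_dvd_pow v (by omega : n + 1 ≤ j))
      (Ideal.subset_span (by simp)))

/-- Consequences of the cubic equation for `p`-th powers, in any commutative ring. The first says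
that modulo `(x ^ p, y ^ p)` the power `z ^ (2 * p)` is a multiple of `z ^ 2 * (x * y) ^ (p - 1)`;
the scalar `l` is the Hasse invariant, a binomial coefficient if `p ≡ 1` mod `3` and `0` if
`p ≡ 2` mod `3`. The second is the same relation with `y` and `z` exchanged, together with control
of the coefficient `c`, and the third reduces `l * z ^ (2 * p - 1)`. -/
theorem frobenius_relations {A : Type*} [CommRing A] (p : ℕ) (hp : p.Prime) (hp3 : p ≠ 3)
    (x y z : A) (h : x ^ 3 + y ^ 3 + z ^ 3 = 0) :
    ∃ l : A, (∃ a b, z ^ (2 * p) = l * z ^ 2 * (x * y) ^ (p - 1) + a * x ^ p + b * y ^ p) ∧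
      (∃ c d, y ^ (2 * p) = l * y ^ 2 * (x * z) ^ (p - 1) + c * x ^ p + d * z ^ p ∧
        ∃ m a b, c * z ^ p = m * z ^ 2 * (x * y) ^ (p - 1) + a * x ^ p + b * y ^ p) ∧
      ∃ k a b, l * z ^ (2 * p - 1) = k * z * (x * y) ^ (p - 1) + a * x ^ p + b * y ^ p := by
  have hz : z ^ 3 = -(x ^ 3 + y ^ 3) := by linear_combination h
  have hy : y ^ 3 = -(x ^ 3 + z ^ 3) := by linear_combination h
  have hzJ : z ^ 3 ∈ Ideal.span {x ^ 3, y ^ 3} := by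
    rw [hz, neg_mem_iff]
    exact add_mem (Ideal.subset_span (by simp)) (Ideal.subset_span (by simp))
  have hJ : Ideal.span {x ^ 3, z ^ 3} ≤ Ideal.span {x ^ 3, y ^ 3} := by
    rw [Ideal.span_le]
    rintro _ (rfl | rfl)
    · exact Ideal.subset_span (by simp)
    · exact hzJ
  have hmod : p % 3 = 1 ∨ p % 3 = 2 := by
    have : ¬ 3 ∣ p := fun hd => hp3 ((Nat.prime_dvd_prime_iff_eq Nat.prime_three hp).1 hd).symm
    omega
  rcases hmod with hm | hm
  · obtain ⟨n, rfl⟩ : ∃ n, p = 3 * (n + 1) + 1 := by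
      have := hp.two_le
      exact ⟨p / 3 - 1, by omega⟩
    obtain ⟨P, Q, -, hPQ⟩ := binom_even (x ^ 3) (y ^ 3) (n + 1)
    obtain ⟨P', Q', hP', hPQ'⟩ := binom_even (x ^ 3) (z ^ 3) (n + 1)
    have hz2 : z ^ (6 * (n + 1)) = (x ^ 3 + y ^ 3) ^ (2 * (n + 1)) := by
      rw [show 6 * (n + 1) = 3 * (2 * (n + 1)) by ring, pow_mul, hz, Even.neg_pow (by simp)]
    have hy2 : y ^ (6 * (n + 1)) = (x ^ 3 + z ^ 3) ^ (2 * (n + 1)) := by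
      rw [show 6 * (n + 1) = 3 * (2 * (n + 1)) by ring, pow_mul, hy, Even.neg_pow (by simp)]
    rw [hPQ] at hz2
    rw [hPQ'] at hy2
    simp only [Nat.add_sub_cancel]
    rw [show 2 * (3 * (n + 1) + 1) - 1 = 6 * (n + 1) + 1 by omega]
    set l : A := ((2 * (n + 1)).choose (n + 1) : A)
    refine ⟨l, ⟨z ^ 2 * x ^ 2 * P, z ^ 2 * y ^ 2 * Q, ?_⟩,
      ⟨y ^ 2 * x ^ 2 * P', y ^ 2 * z ^ 2 * Q', ?_, ?_⟩,
      l ^ 2, l * z * x ^ 2 * P, l * z * y ^ 2 * Q, ?_⟩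
    · rw [show z ^ (2 * (3 * (n + 1) + 1)) = z ^ 2 * z ^ (6 * (n + 1)) by ring, hz2]; ring
    · rw [show y ^ (2 * (3 * (n + 1) + 1)) = y ^ 2 * y ^ (6 * (n + 1)) by ring, hy2]; ring
    · have hmem : (z ^ 3) ^ (n + 1) * P' ∈ Ideal.span {x ^ 3, y ^ 3} ^ (2 * n + 1) := by
        rw [show 2 * n + 1 = (n + 1) + n by ring, pow_add]
        exact Ideal.mul_mem_mul (Ideal.pow_mem_pow hzJ _) (Ideal.pow_right_mono hJ n hP')
      obtain ⟨b, c, hbc⟩ := mem_of_span_pow_odd _ _ _ _ hmem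
      refine ⟨0, b * y ^ 2 * x * z, c * x ^ 2 * y * z, ?_⟩
      linear_combination (y ^ 2 * x ^ 2 * z) * hbc
    · rw [pow_succ z, hz2]; ring
  · obtain ⟨n, rfl⟩ : ∃ n, p = 3 * n + 2 := ⟨p / 3, by omega⟩
    obtain ⟨P, Q, -, hPQ⟩ := binom_odd (x ^ 3) (y ^ 3) n
    obtain ⟨P', Q', hP', hPQ'⟩ := binom_odd (x ^ 3) (z ^ 3) n
    have hz2 : z ^ (6 * n + 3) = - (x ^ 3 + y ^ 3) ^ (2 * n + 1) := by
      rw [show 6 * n + 3 = 3 * (2 * n + 1) by ring, pow_mul, hz, Odd.neg_pow (by simp)]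
    have hy2 : y ^ (6 * n + 3) = - (x ^ 3 + z ^ 3) ^ (2 * n + 1) := by
      rw [show 6 * n + 3 = 3 * (2 * n + 1) by ring, pow_mul, hy, Odd.neg_pow (by simp)]
    rw [hPQ] at hz2
    rw [hPQ'] at hy2
    rw [show 3 * n + 2 - 1 = 3 * n + 1 by omega]
    refine ⟨0, ⟨-(z * x * P), -(z * y * Q), ?_⟩,
      ⟨-(y * x * P'), -(y * z * Q'), ?_, ?_⟩, 0, 0, 0, by ring⟩
    · rw [show z ^ (2 * (3 * n + 2)) = z * z ^ (6 * n + 3) by ring, hz2]; ring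
    · rw [show y ^ (2 * (3 * n + 2)) = y * y ^ (6 * n + 3) by ring, hy2]; ring
    · have hmem : (z ^ 3) ^ n * P' ∈ Ideal.span {x ^ 3, y ^ 3} ^ (2 * n) := by
        rw [show 2 * n = n + n by ring, pow_add]
        exact Ideal.mul_mem_mul (Ideal.pow_mem_pow hzJ _) (Ideal.pow_right_mono hJ n hP')
      obtain ⟨b, c, d, hbc⟩ := mem_of_span_pow_even _ _ _ _ hmem
      refine ⟨-b, -(c * y * x ^ 2 * z ^ 2), -(d * x * y ^ 2 * z ^ 2), ?_⟩
      linear_combination -(y * x * z ^ 2) * hbc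

/-! ### Solving `xyz = u x² + v y² + w z²` in an integrally closed subring -/

theorem exists_root {L : Type*} [Field L] [IsAlgClosed L] (p : ℕ) (hp : p.Prime) (s r : L) :
    ∃ t : L, t ^ p = s * t + r := by
  have h1 : (Polynomial.C s * Polynomial.X + Polynomial.C r).degree < (p : WithBot ℕ) :=
    lt_of_le_of_lt Polynomial.degree_linear_le (by exact_mod_cast hp.one_lt)
  obtain ⟨t, ht⟩ := IsAlgClosed.exists_root
    (Polynomial.X ^ p - (Polynomial.C s * Polynomial.X + Polynomial.C r)) (by
    rw [Polynomial.degree_sub_eq_left_of_degree_lt (by rwa [Polynomial.degree_X_pow]),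
      Polynomial.degree_X_pow]
    exact_mod_cast hp.ne_zero)
  exact ⟨t, by simpa [sub_eq_zero] using ht⟩

/-- If Frobenius sends the class of `f / (x y)` to `k` times itself, then `f` lies in the ideal
`(x, y)` of a subring that is closed under roots of `t ^ p - s t - r`. The coefficient `α` is a root
of `t ^ p - k y ^ (p - 1) t - a`, and `β = (f - α x) / y` automatically satisfies the
corresponding equation. -/
theorem artin_schreier_descent {L : Type*} [Field L] [IsAlgClosed L] (p : ℕ) [Fact p.Prime]
    [CharP L p] (O : Subring L)
    (hO : ∀ s ∈ O, ∀ r ∈ O, ∀ t : L, t ^ p = s * t + r → t ∈ O)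
    {x y f k a b : L} (hx : x ∈ O) (hy : y ∈ O) (hy0 : y ≠ 0) (hk : k ∈ O)
    (ha : a ∈ O) (hb : b ∈ O)
    (hf : f ^ p = k * f * (x * y) ^ (p - 1) + a * x ^ p + b * y ^ p) :
    ∃ α ∈ O, ∃ β ∈ O, f = α * x + β * y ∧
      α ^ p = k * y ^ (p - 1) * α + a ∧ β ^ p = k * x ^ (p - 1) * β + b := by
  have hp : p.Prime := Fact.out
  obtain ⟨α, hα⟩ := exists_root p hp (k * y ^ (p - 1)) a
  obtain ⟨q, rfl⟩ : ∃ q, p = q + 1 := ⟨p - 1, by have := hp.pos; omega⟩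
  simp only [Nat.add_sub_cancel] at *
  have hβ : ((f - α * x) / y) ^ (q + 1) = k * x ^ q * ((f - α * x) / y) + b := by
    rw [div_pow, sub_pow_char, mul_pow α, hα, hf]
    field_simp
    ring
  refine ⟨α, hO _ (mul_mem hk (pow_mem hy _)) _ ha _ hα, _,
    hO _ (mul_mem hk (pow_mem hx _)) _ hb _ hβ, ?_, hα, hβ⟩
  field_simp
  ring

/-- The explicit solution of `x y z = u x² + v y² + w z²`. The hypotheses on the subring `O` hold
for the integral closure of the coordinate ring of the cubic in an algebraically closed field. -/
theorem exists_combination {L : Type*} [Field L] [IsAlgClosed L] (p : ℕ) [Fact p.Prime] [CharP L p]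
    (hp3 : p ≠ 3) (O : Subring L)
    (hO : ∀ s ∈ O, ∀ r ∈ O, ∀ t : L, t ^ p = s * t + r → t ∈ O)
    {x y z : L} (hx : x ∈ O) (hy : y ∈ O) (hz : z ∈ O) (hx0 : x ≠ 0) (hy0 : y ≠ 0) (hz0 : z ≠ 0)
    (h : x ^ 3 + y ^ 3 + z ^ 3 = 0)
    (hxy : ∀ t : L, x * t ∈ O → y * t ∈ O → t ∈ O)
    (hxz : ∀ t : L, x ^ p * t ∈ O → z ^ p * t ∈ O → t ∈ O) :
    ∃ u ∈ O, ∃ v ∈ O, ∃ w ∈ O, x * y * z = u * x ^ 2 + v * y ^ 2 + w * z ^ 2 := by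
  have hp : p.Prime := Fact.out
  obtain ⟨⟨l, hl⟩, ⟨⟨a, ha⟩, ⟨b, hb⟩, h1⟩, ⟨⟨c', hc'⟩, ⟨d', hd'⟩, h2, ⟨m, hm⟩, ⟨a₁, ha₁⟩,
    ⟨b₁, hb₁⟩, h3⟩, ⟨k, hk⟩, ⟨a₂, ha₂⟩, ⟨b₂, hb₂⟩, h4⟩ :=
    frobenius_relations p hp hp3 (⟨x, hx⟩ : O) ⟨y, hy⟩ ⟨z, hz⟩ (Subtype.ext (by simpa using h))
  replace h1 := congrArg Subtype.val h1
  replace h2 := congrArg Subtype.val h2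
  replace h3 := congrArg Subtype.val h3
  replace h4 := congrArg Subtype.val h4
  simp only [Subring.coe_pow, Subring.coe_mul, Subring.coe_add] at h1 h2 h3 h4
  obtain ⟨d, hd, c, hc, hcd, -, hcp⟩ :=
    artin_schreier_descent p O hO (f := z ^ 2) hx hy hy0 hl ha hb (by rw [← h1]; ring)
  -- the third component of the second syzygy
  obtain ⟨e, hex⟩ : ∃ e, e * x = y ^ 2 + c * z := ⟨(y ^ 2 + c * z) / x, by field_simp⟩
  have hey : e * y = -d * z - x ^ 2 := by
    apply mul_right_cancel₀ hx0
    linear_combination y * hex - z * hcd + h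
  have he : e ∈ O := by
    apply hxy
    · rw [mul_comm, hex]; exact add_mem (pow_mem hy _) (mul_mem hc hz)
    · rw [mul_comm, hey]; exact sub_mem (mul_mem (neg_mem hd) hz) (pow_mem hx _)
  obtain ⟨q, rfl⟩ : ∃ q, p = q + 1 := ⟨p - 1, by have := hp.pos; omega⟩
  rw [show 2 * (q + 1) - 1 = 2 * q + 1 by omega] at h4
  simp only [Nat.add_sub_cancel] at *
  -- `E * z ^ p` is the error of the Frobenius relation for `e`; `E` lies in `O` because both
  -- `x ^ p * E` and `z ^ p * E` do.
  obtain ⟨E, hE⟩ : ∃ E, E * z ^ (q + 1) = e ^ (q + 1) - l * e * z ^ q - c' :=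
    ⟨(e ^ (q + 1) - l * e * z ^ q - c') / z ^ (q + 1), by field_simp⟩
  have hEx : E * x ^ (q + 1) = d' + b := by
    have hpow : (e * x) ^ (q + 1) = (y ^ 2) ^ (q + 1) + c ^ (q + 1) * z ^ (q + 1) := by
      rw [hex, add_pow_char, mul_pow]
    have h2' : (y ^ 2) ^ (q + 1) = l * y ^ 2 * (x * z) ^ q + c' * x ^ (q + 1)
      + d' * z ^ (q + 1) := by rw [← h2]; ring
    apply mul_right_cancel₀ (pow_ne_zero (q + 1) hz0)
    rw [h2', hcp] at hpow
    linear_combination x ^ (q + 1) * hE + hpow - l * z ^ q * x ^ q * hex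
  have hEO : E ∈ O := by
    apply hxz
    · rw [mul_comm, hEx]; exact add_mem hd' hb
    · rw [mul_comm, hE]
      exact sub_mem (sub_mem (pow_mem he _) (mul_mem (mul_mem hl he) (pow_mem hz _))) hc'
  -- the Frobenius equation for `e * z`
  obtain ⟨α, hα, β, hβ, hαβ, -, -⟩ :=
    artin_schreier_descent (q + 1) O hO (f := e * z) (k := k)
      (a := e * a₂ + a₁ + E * a + (m + E * l) * (d * y ^ q))
      (b := e * b₂ + b₁ + E * b + (m + E * l) * (c * x ^ q)) hx hy hy0 hk
      (add_mem (add_mem (add_mem (mul_mem he ha₂) ha₁) (mul_mem hEO ha))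
        (mul_mem (add_mem hm (mul_mem hEO hl)) (mul_mem hd (pow_mem hy _))))
      (add_mem (add_mem (add_mem (mul_mem he hb₂) hb₁) (mul_mem hEO hb))
        (mul_mem (add_mem hm (mul_mem hEO hl)) (mul_mem hc (pow_mem hx _)))) (by
      simp only [Nat.add_sub_cancel]
      linear_combination (-z ^ (q + 1)) * hE + e * h4 + h3 + E * h1
        + (m + E * l) * (x * y) ^ q * hcd)
  have key : ∀ s t r : L, r ∈ O → s ∈ O → r * y = s * x → t * y = s → t ∈ O := by
    intro s t r hr hs hrs hts
    apply hxy
    · have : x * t = r := by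
        apply mul_right_cancel₀ hy0
        linear_combination x * hts - hrs
      rwa [this]
    · rwa [mul_comm, hts]
  refine ⟨(α * x - d * c) / y, key (α * x - d * c) _ (y * z - β * x + c ^ 2) ?_ ?_ ?_ ?_,
    (x * z + α * y + d ^ 2) / y, key (x * z + α * y + d ^ 2) _ (-c * d - β * y) ?_ ?_ ?_ ?_,
    (α * z - d * e) / y, key (α * z - d * e) _ (c * e - β * z) ?_ ?_ ?_ ?_, ?_⟩
  · exact add_mem (sub_mem (mul_mem hy hz) (mul_mem hβ hx)) (pow_mem hc _)
  · exact sub_mem (mul_mem hα hx) (mul_mem hd hc)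
  · linear_combination (-z) * hex - c * hcd + x * hαβ
  · field_simp
  · exact sub_mem (mul_mem (neg_mem hc) hd) (mul_mem hβ hy)
  · exact add_mem (add_mem (mul_mem hx hz) (mul_mem hα hy)) (pow_mem hd _)
  · linear_combination  (-z) * hey + d * hcd + y * hαβ
  · field_simp
  · exact sub_mem (mul_mem hc he) (mul_mem hβ hz)
  · exact sub_mem (mul_mem hα hz) (mul_mem hd he)
  · linear_combination z * hαβ - e * hcd
  · field_simp
  · field_simp
    linear_combination (-α) * h + d * (e * hcd + d * hex + c * hey)

/-! ### Integrality from two multiples -/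

open Polynomial in
/-- If `a, b` behave like a regular sequence in an integrally closed domain `B`, integrality of
`a t` and `b t` implies that of `t`. Both minimal polynomials scale to that of `a b t`; comparing
coefficients shows that the one of `a t` is obtained by scaling from a monic polynomial over `B`,
which then vanishes at `t`. -/
theorem isIntegral_of_two_multiples {B L : Type*} [CommRing B] [IsDomain B] [IsIntegrallyClosed B]
    [Field L] [Algebra B L] [Module.IsTorsionFree B L]
    {a b : B} (ha : a ≠ 0) (hb : b ≠ 0) (hab : ∀ (k : ℕ) (c : B), a ^ k ∣ c * b ^ k → a ^ k ∣ c)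
    {t : L} (h1 : IsIntegral B (a • t)) (h2 : IsIntegral B (b • t)) : IsIntegral B t := by
  set m1 := minpoly B (a • t) with hm1
  set m2 := minpoly B (b • t) with hm2
  have heq : m1.scaleRoots b = m2.scaleRoots a := by
    rw [hm1, hm2, ← IsIntegrallyClosed.minpoly_smul hb h1, ← IsIntegrallyClosed.minpoly_smul ha h2,
      smul_comm]
  have hdeg : m1.natDegree = m2.natDegree := by
    rw [← natDegree_scaleRoots m1 b, heq, natDegree_scaleRoots]
  have hdvd : ∀ i, ∃ c, m1.coeff i = c * a ^ (m1.natDegree - i) := by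
    intro i
    have := congrArg (fun q => q.coeff i) heq
    simp only [coeff_scaleRoots] at this
    obtain ⟨c, hc⟩ := hab (m1.natDegree - i) (m1.coeff i) ⟨m2.coeff i, by
      rw [this, ← hdeg]; ring⟩
    exact ⟨c, by rw [hc]; ring⟩
  choose q hq using hdvd
  have hmon : m1.Monic := minpoly.monic h1
  have hqd : q m1.natDegree = 1 := by
    have := hq m1.natDegree
    simpa [hmon.coeff_natDegree] using this.symm
  set g : B[X] := ∑ i ∈ Finset.range (m1.natDegree + 1), Polynomial.C (q i) * Polynomial.X ^ i with hg
  have hgc : ∀ i, g.coeff i = if i < m1.natDegree + 1 then q i else 0 := by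
    intro i
    simp [hg, finsetSum_coeff, Polynomial.coeff_C_mul, Polynomial.coeff_X_pow]
  have hgle : g.natDegree ≤ m1.natDegree := by
    rw [natDegree_le_iff_coeff_eq_zero]
    intro i hi
    rw [hgc, if_neg (by omega)]
  have hgd : g.coeff m1.natDegree = 1 := by rw [hgc, if_pos (by omega), hqd]
  have hgm : g.Monic := monic_of_natDegree_le_of_coeff_eq_one _ hgle hgd
  have hgn : g.natDegree = m1.natDegree :=
    le_antisymm hgle (le_natDegree_of_ne_zero (by rw [hgd]; exact one_ne_zero))
  have hgs : g.scaleRoots a = m1 := by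
    ext i
    rw [coeff_scaleRoots, hgc, hgn, hq i]
    split_ifs with hi
    · rfl
    · rw [← hq i, zero_mul, coeff_eq_zero_of_natDegree_lt (by omega)]
  refine ⟨g, hgm, ?_⟩
  have h0 : aeval (a • t) m1 = 0 := minpoly.aeval _ _
  rw [← hgs, Algebra.smul_def, Polynomial.aeval_def, scaleRoots_eval₂_mul] at h0
  refine (mul_eq_zero.1 h0).resolve_left (pow_ne_zero _ ?_)
  exact (map_ne_zero_iff _ (FaithfulSMul.algebraMap_injective B L)).2 ha

/-! ### The Fermat cubic is prime -/

/-- Eisenstein's criterion in the variable `X 0`, at the prime generated by `X 1 + X 2`. This prime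
is encoded as the kernel of the evaluation at `(T, -T)`, and a derivative shows that
`X 1 ^ 3 + X 2 ^ 3` does not lie in its square. -/
theorem prime_fermat (K : Type) [Field K] (h3 : (3 : K) ≠ 0) :
    Prime (X 0 ^ 3 + X 1 ^ 3 + X 2 ^ 3 : MvPolynomial (Fin 3) K) := by
  rw [← MulEquiv.prime_iff (finSuccEquiv K 2).toMulEquiv]
  have hmap : (finSuccEquiv K 2).toMulEquiv (X 0 ^ 3 + X 1 ^ 3 + X 2 ^ 3)
      = Polynomial.X ^ 3 + Polynomial.C (X 0 ^ 3 + X 1 ^ 3) := by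
    have h1 : finSuccEquiv K 2 (X 1) = Polynomial.C (X 0) := finSuccEquiv_X_succ (j := 0)
    have h2 : finSuccEquiv K 2 (X 2) = Polynomial.C (X 1) := finSuccEquiv_X_succ (j := 1)
    simp [h1, h2, finSuccEquiv_X_zero, add_assoc]
  rw [hmap, ← irreducible_iff_prime]
  have hdeg := Polynomial.degree_X_pow_add_C (n := 3) (by norm_num)
    (X 0 ^ 3 + X 1 ^ 3 : MvPolynomial (Fin 2) K)
  have hmon := Polynomial.monic_X_pow_add_C
    (X 0 ^ 3 + X 1 ^ 3 : MvPolynomial (Fin 2) K) (n := 3) (by norm_num)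
  let ev : MvPolynomial (Fin 2) K →ₐ[K] Polynomial K := aeval ![Polynomial.X, -Polynomial.X]
  have hP : (RingHom.ker ev).IsPrime := RingHom.ker_isPrime _
  refine Polynomial.irreducible_of_eisenstein_criterion hP ?_ ?_ ?_ ?_ hmon.isPrimitive
  · rw [hmon.leadingCoeff]
    exact fun h => hP.ne_top ((Ideal.eq_top_iff_one _).2 h)
  · intro n hn
    rw [hdeg] at hn
    have hn' : n < 3 := by exact_mod_cast hn
    rw [RingHom.mem_ker, Polynomial.coeff_add, Polynomial.coeff_X_pow, Polynomial.coeff_C,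
      if_neg hn'.ne, zero_add]
    split_ifs
    · simp [ev, Odd.neg_pow (by decide : Odd 3)]
    · simp
  · rw [hdeg]; norm_num
  · have hder : ∀ f ∈ RingHom.ker ev ^ 2, ev (pderiv 0 f) = 0 := by
      intro f hf
      rw [pow_two] at hf
      refine Submodule.mul_induction_on hf ?_ ?_
      · intro a ha b hb
        rw [RingHom.mem_ker] at ha hb
        simp [ha, hb]
      · intro a b ha hb
        simp [ha, hb]
    intro h
    rw [Polynomial.coeff_add, Polynomial.coeff_X_pow, Polynomial.coeff_C_zero,
      if_neg (by norm_num), zero_add] at h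
    have := hder _ h
    simp [ev, Derivation.leibniz_pow, pderiv_X] at this
    exact h3 (by simpa using congrArg (Polynomial.eval 0) this)

/-! ### The cubic ring over two parameters -/

/-- The parameters `x ^ n, y ^ n` of the cubic ring behave like a regular sequence on its integral
closure in `L`, since the ring is integral over the polynomial ring `K[x, y]`. -/
theorem isIntegral_of_parameters {K R L : Type*} [Field K] [CommRing R] [Algebra K R] [Field L]
    [Algebra R L] (hRL : Function.Injective (algebraMap R L)) (x y z : R)
    (hgen : Algebra.adjoin K {x, y, z} = ⊤) (h : x ^ 3 + y ^ 3 + z ^ 3 = 0)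
    (hinj : Function.Injective (aeval ![x, y] : MvPolynomial (Fin 2) K →ₐ[K] R)) (n : ℕ) {t : L}
    (hx : IsIntegral R (algebraMap R L x ^ n * t)) (hy : IsIntegral R (algebraMap R L y ^ n * t)) :
    IsIntegral R t := by
  let φ : MvPolynomial (Fin 2) K →ₐ[K] R := aeval ![x, y]
  let : Algebra (MvPolynomial (Fin 2) K) R := φ.toRingHom.toAlgebra
  let : Algebra (MvPolynomial (Fin 2) K) L := ((algebraMap R L).comp φ.toRingHom).toAlgebra
  have : IsScalarTower (MvPolynomial (Fin 2) K) R L := IsScalarTower.of_algebraMap_eq fun _ => rfl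
  have : IsScalarTower K (MvPolynomial (Fin 2) K) R :=
    IsScalarTower.of_algebraMap_eq fun a => (φ.commutes a).symm
  have h0 : algebraMap (MvPolynomial (Fin 2) K) R (X 0) = x := by
    change φ (X 0) = x
    simp [φ]
  have h1 : algebraMap (MvPolynomial (Fin 2) K) R (X 1) = y := by
    change φ (X 1) = y
    simp [φ]
  have hLinj : Function.Injective (algebraMap (MvPolynomial (Fin 2) K) L) := hRL.comp hinj
  have : Module.IsTorsionFree (MvPolynomial (Fin 2) K) L := by
    rw [Module.isTorsionFree_iff_algebraMap_injective]
    exact hLinj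
  have hintegral : Algebra.IsIntegral (MvPolynomial (Fin 2) K) R := by
    have hz : IsIntegral (MvPolynomial (Fin 2) K) z := by
      refine IsIntegral.of_pow (n := 3) (by norm_num) ?_
      rw [show z ^ 3 = algebraMap (MvPolynomial (Fin 2) K) R (-(X 0 ^ 3 + X 1 ^ 3)) by
        rw [map_neg, map_add, map_pow, map_pow, h0, h1]; linear_combination h]
      exact isIntegral_algebraMap
    have hle : Algebra.adjoin K {x, y, z} ≤
        (integralClosure (MvPolynomial (Fin 2) K) R).restrictScalars K := by
      rw [Algebra.adjoin_le_iff]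
      rintro _ (rfl | rfl | rfl)
      · exact h0 ▸ isIntegral_algebraMap
      · exact h1 ▸ isIntegral_algebraMap
      · exact hz
    exact ⟨fun r => hle (hgen ▸ Algebra.mem_top)⟩
  have hX : ∀ t : L, (X 0 ^ n : MvPolynomial (Fin 2) K) • t = algebraMap R L x ^ n * t := by
    intro t
    rw [Algebra.smul_def, IsScalarTower.algebraMap_apply _ R L, map_pow, h0, map_pow]
  have hY : ∀ t : L, (X 1 ^ n : MvPolynomial (Fin 2) K) • t = algebraMap R L y ^ n * t := by
    intro t
    rw [Algebra.smul_def, IsScalarTower.algebraMap_apply _ R L, map_pow, h1, map_pow]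
  rw [← hX] at hx
  rw [← hY] at hy
  refine IsIntegral.tower_top (R := MvPolynomial (Fin 2) K) (isIntegral_of_two_multiples
    (a := X 0 ^ n) (b := X 1 ^ n) (pow_ne_zero _ (X_ne_zero _)) (pow_ne_zero _ (X_ne_zero _)) ?_
    (isIntegral_trans _ hx) (isIntegral_trans _ hy))
  intro k c hc
  rw [← pow_mul] at hc ⊢
  refine X_prime.pow_dvd_of_dvd_mul_right _ (fun hd => ?_) hc
  have := X_prime.dvd_of_dvd_pow (X_prime.dvd_of_dvd_pow hd)
  rw [X_dvd_X] at this
  exact absurd this (by decide)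

/-! ### From the equation to the two closures -/

/-- A nonzero multiple of a `FractionRing R`-linear retraction `L → FractionRing R` maps a
module-finite subalgebra `S` into `R`; the multiplier `c` is a common denominator for the images of
module generators of `S`. -/
theorem exists_linear_retraction {R L : Type*} [CommRing R] [IsDomain R] [Field L] [Algebra R L]
    [Algebra (FractionRing R) L] [IsScalarTower R (FractionRing R) L] (S : Subalgebra R L)
    (hS : (Subalgebra.toSubmodule S).FG) :
    ∃ c : R, c ≠ 0 ∧ ∃ ψ : L →ₗ[R] FractionRing R, ψ 1 = algebraMap R _ c ∧
      ∀ s ∈ S, ∃ r : R, ψ s = algebraMap R _ r := by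
  obtain ⟨ψ, hψ⟩ := LinearMap.exists_leftInverse_of_injective
    (Algebra.linearMap (FractionRing R) L) (LinearMap.ker_eq_bot.2
      (FaithfulSMul.algebraMap_injective (FractionRing R) L))
  have hψ1 : ψ 1 = 1 := by simpa using congrArg (fun f => f 1) hψ
  obtain ⟨T, hT⟩ := hS
  classical
  obtain ⟨⟨c, hc⟩, hcT⟩ := IsLocalization.exist_integer_multiples_of_finset (nonZeroDivisors R)
    (T.image ψ)
  refine ⟨c, nonZeroDivisors.ne_zero hc, c • (ψ.restrictScalars R), ?_, ?_⟩
  · simp [hψ1, Algebra.smul_def]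
  · intro s hs
    replace hs : s ∈ Submodule.span R (T : Set L) := by rw [hT]; exact hs
    induction hs using Submodule.span_induction with
    | mem s hs =>
      obtain ⟨r, hr⟩ := hcT (ψ s) (Finset.mem_image_of_mem _ hs)
      exact ⟨r, hr.symm⟩
    | zero => exact ⟨0, by simp⟩
    | add a b _ _ ha hb =>
      obtain ⟨r, hr⟩ := ha
      obtain ⟨r', hr'⟩ := hb
      exact ⟨r + r', by rw [map_add, hr, hr', map_add]⟩
    | smul a b _ hb =>
      obtain ⟨r, hr⟩ := hb
      exact ⟨a * r, by rw [map_smul, hr, Algebra.smul_def, map_mul]⟩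

/-- Two of the variables remain algebraically independent in the cubic ring: a polynomial in them
that vanishes there vanishes at every point of `K²`, as such a point lifts to the cubic. -/
theorem aeval_pair_injective {K : Type*} [Field K] [IsAlgClosed K] (i j k : Fin 3)
    (hij : i ≠ j) (hik : i ≠ k) (hjk : j ≠ k)
    (F : MvPolynomial (Fin 3) K) (hF : F = X i ^ 3 + X j ^ 3 + X k ^ 3) :
    Function.Injective (aeval ![Ideal.Quotient.mk (Ideal.span {F}) (X i),
      Ideal.Quotient.mk (Ideal.span {F}) (X j)] :
      MvPolynomial (Fin 2) K →ₐ[K] MvPolynomial (Fin 3) K ⧸ Ideal.span {F}) := by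
  rw [injective_iff_map_eq_zero]
  intro f hf
  have hf' : rename ![i, j] f ∈ Ideal.span {F} := by
    rw [← Ideal.Quotient.eq_zero_iff_mem, ← hf, ← Ideal.Quotient.mkₐ_eq_mk K, ← AlgHom.comp_apply]
    congr 1
    ext m
    fin_cases m <;> simp
  obtain ⟨g, hg⟩ := Ideal.mem_span_singleton.1 hf'
  refine MvPolynomial.funext fun v => ?_
  obtain ⟨c, hc⟩ := IsAlgClosed.exists_pow_nat_eq (-(v 0 ^ 3 + v 1 ^ 3)) (n := 3) (by norm_num)
  let w : Fin 3 → K := Function.update (Function.update (Function.update 0 k c) j (v 1)) i (v 0)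
  have hw : w ∘ ![i, j] = v := by
    funext m
    fin_cases m <;> simp [w, hij.symm]
  have h0 := congrArg (eval w) hg
  rw [eval_rename, hw, map_mul, hF] at h0
  have hc' : v 0 ^ 3 + v 1 ^ 3 + c ^ 3 = 0 := by rw [hc]; ring
  rw [h0, map_zero]
  simp [w, hij.symm, hik.symm, hjk.symm, hc']

/-- The claim for an abstract domain with the properties of the cubic ring that the proof uses. -/
theorem mem_closures {K R : Type} [Field K] [CommRing R] [IsDomain R] [Algebra K R]
    (p : ℕ) [Fact p.Prime] [CharP R p] (hp3 : p ≠ 3) (x y z : R)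
    (hx0 : x ≠ 0) (hy0 : y ≠ 0) (hz0 : z ≠ 0)
    (hgen : Algebra.adjoin K {x, y, z} = ⊤) (hcub : x ^ 3 + y ^ 3 + z ^ 3 = 0)
    (hxy : Function.Injective (aeval ![x, y] : MvPolynomial (Fin 2) K →ₐ[K] R))
    (hxz : Function.Injective (aeval ![x, z] : MvPolynomial (Fin 2) K →ₐ[K] R))
    (I : Ideal R) (hI : I = Ideal.span {x ^ 2, y ^ 2, z ^ 2}) :
    x * y * z ∈ plusClosure R I ∧ x * y * z ∈ tightClosure p I := by
  have hp : p.Prime := Fact.out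
  let L := AlgebraicClosure (FractionRing R)
  have hRL : Function.Injective (algebraMap R L) := by
    rw [IsScalarTower.algebraMap_eq R (FractionRing R) L]
    exact (algebraMap (FractionRing R) L).injective.comp (IsFractionRing.injective R _)
  have : CharP L p := charP_of_injective_algebraMap hRL p
  have hx2 : x ^ 2 ∈ I := hI ▸ Ideal.subset_span (by simp)
  have hy2 : y ^ 2 ∈ I := hI ▸ Ideal.subset_span (by simp)
  have hz2 : z ^ 2 ∈ I := hI ▸ Ideal.subset_span (by simp)
  have hO : ∀ s ∈ (integralClosure R L).toSubring, ∀ r ∈ (integralClosure R L).toSubring,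
      ∀ t : L, t ^ p = s * t + r → t ∈ (integralClosure R L).toSubring := by
    intro s hs r hr t ht
    have hdeg : (Polynomial.C (⟨s, hs⟩ : integralClosure R L) * Polynomial.X
        + Polynomial.C (⟨r, hr⟩ : integralClosure R L)).degree < (p : WithBot ℕ) :=
      lt_of_le_of_lt Polynomial.degree_linear_le (by exact_mod_cast hp.one_lt)
    have htO : IsIntegral (integralClosure R L) t := by
      refine ⟨_, Polynomial.monic_X_pow_sub hdeg, ?_⟩
      simp [ht]
    exact isIntegral_trans (A := integralClosure R L) t htO
  have hmem : ∀ r : R, algebraMap R L r ∈ (integralClosure R L).toSubring :=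
    fun r => isIntegral_algebraMap
  obtain ⟨u, hu, v, hv, w, hw, huvw⟩ := exists_combination p hp3 (integralClosure R L).toSubring hO
    (hmem x) (hmem y) (hmem z) ((map_ne_zero_iff _ hRL).2 hx0) ((map_ne_zero_iff _ hRL).2 hy0)
    ((map_ne_zero_iff _ hRL).2 hz0)
    (by simp only [← map_pow, ← map_add, hcub, map_zero])
    (fun t h1 h2 => isIntegral_of_parameters hRL x y z hgen hcub hxy 1
      (by rw [pow_one]; exact h1) (by rw [pow_one]; exact h2))
    (fun t h1 h2 => isIntegral_of_parameters hRL x z y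
      (by rw [← hgen, Set.pair_comm]) (by linear_combination hcub) hxz p h1 h2)
  let S : Subalgebra R L := Algebra.adjoin R {u, v, w}
  have huS : u ∈ S := Algebra.subset_adjoin (by simp)
  have hvS : v ∈ S := Algebra.subset_adjoin (by simp)
  have hwS : w ∈ S := Algebra.subset_adjoin (by simp)
  have hfg : (Subalgebra.toSubmodule S).FG := by
    refine fg_adjoin_of_finite (Set.toFinite _) ?_
    rintro _ (rfl | rfl | rfl)
    exacts [hu, hv, hw]
  constructor
  · refine ⟨S, inferInstance, inferInstance, algebraMap R S,
      fun a b hab => hRL (congrArg Subtype.val hab), ?_, ?_⟩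
    · rw [RingHom.finite_algebraMap]
      exact Module.Finite.iff_fg.2 hfg
    · have heq : algebraMap R S (x * y * z) = (⟨u, huS⟩ : S) * algebraMap R S (x ^ 2)
          + (⟨v, hvS⟩ : S) * algebraMap R S (y ^ 2) + (⟨w, hwS⟩ : S) * algebraMap R S (z ^ 2) := by
        apply Subtype.ext
        change algebraMap R L (x * y * z) = u * algebraMap R L (x ^ 2)
          + v * algebraMap R L (y ^ 2) + w * algebraMap R L (z ^ 2)
        simpa only [map_mul, map_pow] using huvw
      rw [heq]
      exact add_mem (add_mem (Ideal.mul_mem_left _ _ (Ideal.mem_map_of_mem _ hx2))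
        (Ideal.mul_mem_left _ _ (Ideal.mem_map_of_mem _ hy2)))
        (Ideal.mul_mem_left _ _ (Ideal.mem_map_of_mem _ hz2))
  · obtain ⟨c, hc0, ψ, hψ1, hψ⟩ := exists_linear_retraction S hfg
    refine ⟨c, hc0, 0, fun e _ => ?_⟩
    obtain ⟨a₁, ha₁⟩ := hψ _ (pow_mem huS (p ^ e))
    obtain ⟨a₂, ha₂⟩ := hψ _ (pow_mem hvS (p ^ e))
    obtain ⟨a₃, ha₃⟩ := hψ _ (pow_mem hwS (p ^ e))
    have hpow : (x * y * z) ^ p ^ e • (1 : L) = (x ^ 2) ^ p ^ e • u ^ p ^ e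
        + (y ^ 2) ^ p ^ e • v ^ p ^ e + (z ^ 2) ^ p ^ e • w ^ p ^ e := by
      have h := congrArg (· ^ p ^ e) huvw
      simp only [add_pow_char_pow, mul_pow] at h
      simp only [Algebra.smul_def, map_pow, map_mul, mul_pow]
      linear_combination h
    have heq : c * (x * y * z) ^ p ^ e = a₁ * (x ^ 2) ^ p ^ e + a₂ * (y ^ 2) ^ p ^ e
        + a₃ * (z ^ 2) ^ p ^ e := by
      apply IsFractionRing.injective R (FractionRing R)
      have h := congrArg ψ hpow
      simp only [map_add, map_smul, hψ1, ha₁, ha₂, ha₃] at h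
      simp only [Algebra.smul_def, map_add, map_mul, map_pow] at h ⊢
      linear_combination h
    have hb : ∀ a ∈ I, a ^ p ^ e ∈ bracketPow I (p ^ e) :=
      fun a ha => Ideal.subset_span ⟨a, ha, rfl⟩
    rw [heq]
    exact add_mem (add_mem (Ideal.mul_mem_left _ _ (hb _ hx2))
      (Ideal.mul_mem_left _ _ (hb _ hy2))) (Ideal.mul_mem_left _ _ (hb _ hz2))

/-- Let `K` be an algebraically closed field of characteristic `p > 0`,
`p ≠ 3`, and let `R = K[x,y,z]/(x³+y³+z³)`. Then `xyz` belongs to the plus closure of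
`(x²,y²,z²)`, and in particular to the tight closure `(x²,y²,z²)^*`. -/
theorem statement18 (K : Type) [Field K] [IsAlgClosed K]
    (p : ℕ) [Fact p.Prime] [CharP K p] (hp3 : p ≠ 3)
    (F : MvPolynomial (Fin 3) K) (hF : F = X 0 ^ 3 + X 1 ^ 3 + X 2 ^ 3)
    (I : Ideal (MvPolynomial (Fin 3) K ⧸ Ideal.span {F}))
    (hI : I = Ideal.span {Ideal.Quotient.mk (Ideal.span {F}) (X 0 ^ 2),
      Ideal.Quotient.mk (Ideal.span {F}) (X 1 ^ 2),
      Ideal.Quotient.mk (Ideal.span {F}) (X 2 ^ 2)}) :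
    Ideal.Quotient.mk (Ideal.span {F}) (X 0 * X 1 * X 2) ∈
      plusClosure (MvPolynomial (Fin 3) K ⧸ Ideal.span {F}) I ∧
    Ideal.Quotient.mk (Ideal.span {F}) (X 0 * X 1 * X 2) ∈ tightClosure p I := by
  have h3 : (3 : K) ≠ 0 := by
    intro h
    have h' : ((3 : ℕ) : K) = 0 := by exact_mod_cast h
    rw [CharP.cast_eq_zero_iff K p] at h'
    exact hp3 ((Nat.prime_dvd_prime_iff_eq Fact.out Nat.prime_three).1 h')
  have hprime : Prime F := hF ▸ prime_fermat K h3
  have hId : (Ideal.span {F}).IsPrime := (Ideal.span_singleton_prime hprime.ne_zero).2 hprime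
  have hxy := aeval_pair_injective 0 1 2 (by decide) (by decide) (by decide) F hF
  have hxz := aeval_pair_injective 0 2 1 (by decide) (by decide) (by decide) F (by rw [hF]; ring)
  have hgen : Algebra.adjoin K {Ideal.Quotient.mk (Ideal.span {F}) (X 0),
      Ideal.Quotient.mk (Ideal.span {F}) (X 1), Ideal.Quotient.mk (Ideal.span {F}) (X 2)} = ⊤ := by
    have h1 := congrArg (Subalgebra.map (Ideal.Quotient.mkₐ K (Ideal.span {F})))
      (adjoin_range_X (R := K) (σ := Fin 3))
    rw [AlgHom.map_adjoin, Algebra.map_top,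
      (AlgHom.range_eq_top _).2 (Ideal.Quotient.mkₐ_surjective K _)] at h1
    rw [← h1]
    congr 1
    ext r
    simp [Fin.exists_fin_succ, eq_comm]
  have hcub : Ideal.Quotient.mk (Ideal.span {F}) (X 0) ^ 3
      + Ideal.Quotient.mk (Ideal.span {F}) (X 1) ^ 3
      + Ideal.Quotient.mk (Ideal.span {F}) (X 2) ^ 3 = 0 := by
    rw [← map_pow, ← map_pow, ← map_pow, ← map_add, ← map_add, ← hF,
      Ideal.Quotient.eq_zero_iff_mem]
    exact Ideal.mem_span_singleton_self F
  have hx0 : Ideal.Quotient.mk (Ideal.span {F}) (X 0) ≠ 0 := by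
    intro h
    exact X_ne_zero (R := K) (0 : Fin 2) (hxy (by simpa using h))
  have hy0 : Ideal.Quotient.mk (Ideal.span {F}) (X 1) ≠ 0 := by
    intro h
    exact X_ne_zero (R := K) (1 : Fin 2) (hxy (by simpa using h))
  have hz0 : Ideal.Quotient.mk (Ideal.span {F}) (X 2) ≠ 0 := by
    intro h
    exact X_ne_zero (R := K) (1 : Fin 2) (hxz (by simpa using h))
  simp only [map_pow, map_mul] at hI ⊢
  have hch : CharP (MvPolynomial (Fin 3) K ⧸ Ideal.span {F}) p :=
    charP_of_injective_algebraMap (algebraMap K _).injective p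
  have hdom : IsDomain (MvPolynomial (Fin 3) K ⧸ Ideal.span {F}) := Ideal.Quotient.isDomain _
  exact mem_closures p hp3 _ _ _ hx0 hy0 hz0 hgen hcub hxy hxz I hI
end

section
/- Let R be a Noetherian integrally closed integral domain containing the rational numbers ℚ, and let R ⊆ S be a module-finite extension of integral domains. Then for every ideal I ⊆ R one has IS ∩ R = I; in particular, if f ∈ R satisfies f ∈ IS, then f ∈ I. (Hence the plus closure is trivial in characteristic zero for normal domains: I^+ = I.) -/
/-- An `R`-linear map `t : S → R` sends the extension `IS` of an ideal `I` of `R` into `I`. -/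
lemma linearMap_mem_of_mem_map {R S : Type*} [CommRing R] [CommRing S] [Algebra R S]
    (t : S →ₗ[R] R) (I : Ideal R) {x : S} (hx : x ∈ I.map (algebraMap R S)) : t x ∈ I := by
  have hx' : x ∈ I • (⊤ : Submodule R S) := by
    rw [Ideal.smul_top_eq_map]
    exact hx
  refine Submodule.smul_induction_on hx' (fun r hr s _ => ?_) (fun a b ha hb => ?_)
  · rw [map_smul, smul_eq_mul]
    exact I.mul_mem_right _ hr
  · rw [map_add]
    exact I.add_mem ha hb

/-- The trace of the extension of fraction fields restricts to an `R`-linear map `S → R`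
sending `1` to the degree of the extension, a positive integer. -/
lemma exists_linearMap_one_eq_natCast {R S : Type*} [CommRing R] [IsDomain R]
    [IsIntegrallyClosed R] [CommRing S] [IsDomain S] [Algebra R S]
    [Module.Finite R S] (hinj : Function.Injective (algebraMap R S)) :
    ∃ (t : S →ₗ[R] R) (n : ℕ), n ≠ 0 ∧ t 1 = n := by
  have : FaithfulSMul R S := (faithfulSMul_iff_algebraMap_injective R S).mpr hinj
  let K := FractionRing R
  let L := FractionRing S
  let : Algebra K L := FractionRing.liftAlgebra R L
  have : IsScalarTower R K L := FractionRing.isScalarTower_liftAlgebra R L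
  have : FiniteDimensional K L := inferInstance
  -- The trace `S → K`, whose values are integral over `R`.
  let T : S →ₗ[R] K := ((Algebra.trace K L).restrictScalars R).comp
    (IsScalarTower.toAlgHom R S L).toLinearMap
  have hT : ∀ s, T s ∈ LinearMap.range (Algebra.linearMap R K) := fun s =>
    IsIntegrallyClosed.isIntegral_iff.mp
      (Algebra.isIntegral_trace ((Algebra.IsIntegral.isIntegral (R := R) s).algebraMap))
  have hK : Function.Injective (Algebra.linearMap R K) := IsFractionRing.injective R K
  let e := LinearEquiv.ofInjective (Algebra.linearMap R K) hK
  refine ⟨e.symm.toLinearMap.comp (T.codRestrict _ hT), Module.finrank K L,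
    Module.finrank_pos.ne', hK ?_⟩
  have h : Algebra.linearMap R K (e.symm (T.codRestrict _ hT 1)) = T 1 :=
    congrArg Subtype.val (e.apply_symm_apply (T.codRestrict _ hT 1))
  refine h.trans ?_
  have h1 : T 1 = Algebra.trace K L 1 := by simp [T]
  rw [h1, ← map_one (algebraMap K L), Algebra.trace_algebraMap]
  simp

lemma mem_of_map_mem_map {R S : Type*} [CommRing R] [IsDomain R] [IsIntegrallyClosed R]
    [Algebra ℚ R] [CommRing S] [IsDomain S] (φ : R →+* S) (hinj : Function.Injective φ)
    (hfin : φ.Finite) (I : Ideal R) (f : R) (hf : φ f ∈ I.map φ) : f ∈ I := by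
  let : Algebra R S := φ.toAlgebra
  have : Module.Finite R S := hfin
  obtain ⟨t, n, hn, ht⟩ := exists_linearMap_one_eq_natCast (R := R) (S := S) hinj
  have hmem : t (algebraMap R S f) ∈ I := linearMap_mem_of_mem_map t I hf
  rw [Algebra.algebraMap_eq_smul_one, map_smul, ht, smul_eq_mul] at hmem
  have hunit : IsUnit (n : R) := by
    have := (IsUnit.mk0 (n : ℚ) (Nat.cast_ne_zero.mpr hn)).map (algebraMap ℚ R)
    simpa using this
  exact (Ideal.mul_unit_mem_iff_mem I hunit).mp hmem

/-- Let `R` be a Noetherian integrally closed domain containing `ℚ`, and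
let `R ⊆ S` be a module-finite extension of integral domains. Then for every ideal
`I ⊆ R` one has `IS ∩ R = I`; in particular `f ∈ IS` implies `f ∈ I`, and hence the plus
closure is trivial: `I^+ = I`. -/
theorem statement19 (R : Type) [CommRing R] [IsDomain R] [IsNoetherianRing R]
    [IsIntegrallyClosed R] [Algebra ℚ R]
    (S : Type) [CommRing S] [IsDomain S]
    (φ : R →+* S) (hinj : Function.Injective φ) (hfin : φ.Finite)
    (I : Ideal R) :
    (I.map φ).comap φ = I ∧ (∀ f : R, φ f ∈ I.map φ → f ∈ I) ∧
      plusClosure R I = (I : Set R) := by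
  have key : ∀ f : R, φ f ∈ I.map φ → f ∈ I := mem_of_map_mem_map φ hinj hfin I
  refine ⟨le_antisymm key Ideal.le_comap_map, key, Set.Subset.antisymm ?_ ?_⟩
  · rintro f ⟨S', _, _, ψ, hψ, hψfin, hf⟩
    exact mem_of_map_mem_map ψ hψ hψfin I f hf
  · intro f hf
    exact ⟨S, _, inferInstance, φ, hinj, hfin, Ideal.mem_map_of_mem φ hf⟩
end
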